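/- Let G be a (possibly infinite) graph and let T ⊆ V(G) be such that d(t) ≤ 1 for all but countably many t ∈ T, and such that there is no X ⊆ V(G)∖T for which d_G(X) is an odd natural number. Assume that for each t ∈ T there is a system 𝒫_t of pairwise edge-disjoint T-paths covering δ(t). Then there exists a system 𝒫 of pairwise edge-disjoint T-paths covering ⋃_{t∈T} δ(t). -/

import Mathlib

/-!
Common definitions: multigraphs (parallel edges allowed, no loops), walks,
paths, cuts, waves and related notions used in the statements below.
-/

universe u v

/-- A multigraph with vertex type `V` and edge type `E`: every edge is assigned
an unordered pair of *distinct* end-vertices (parallel edges allowed, no loops). -/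
structure Multigraph (V : Type u) (E : Type v) : Type (max u v) where
  inc : E → Sym2 V
  not_isDiag : ∀ e, ¬ (inc e).IsDiag

namespace Multigraph

variable {V : Type u} {E : Type v}

/-- Walks in a multigraph, recorded together with the edges they traverse. -/
inductive Walk (G : Multigraph V E) : V → V → Type (max u v)
  | nil (v : V) : Walk G v v
  | cons {u v w : V} (e : E) (he : G.inc e = s(u, v)) (p : Walk G v w) : Walk G u w

namespace Walk

variable {G : Multigraph V E}

/-- The list of vertices visited by a walk. -/
def support : ∀ {u w : V}, G.Walk u w → List V
  | _, _, .nil v => [v]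
  | u, _, .cons _ _ p => u :: p.support

/-- The list of edges traversed by a walk. -/
def edges : ∀ {u w : V}, G.Walk u w → List E
  | _, _, .nil _ => []
  | _, _, .cons e _ p => e :: p.edges

end Walk

/-- `δ_G(v)`: the set of edges incident with the vertex `v`. -/
def inci (G : Multigraph V E) (v : V) : Set E := {e | v ∈ G.inc e}

/-- `δ_G(X)`: the set of edges with exactly one end-vertex in `X`. -/
def cut (G : Multigraph V E) (X : Set V) : Set E :=
  {e | ∃ x y, G.inc e = s(x, y) ∧ x ∈ X ∧ y ∉ X}

/-- Connectedness of a multigraph. -/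
def Connected (G : Multigraph V E) : Prop := ∀ u v : V, Nonempty (G.Walk u v)

/-- A `T`-path: a path connecting two distinct vertices of `T`
with no internal vertex in `T`. -/
structure TPath (G : Multigraph V E) (T : Set V) : Type (max u v) where
  first : V
  last : V
  walk : G.Walk first last
  first_mem : first ∈ T
  last_mem : last ∈ T
  ne : first ≠ last
  support_nodup : walk.support.Nodup
  internal : ∀ x ∈ walk.support, x ∈ T → x = first ∨ x = last

/-- A system of pairwise edge-disjoint `T`-paths. -/
def TPathDisjoint (G : Multigraph V E) {T : Set V} (P : Set (G.TPath T)) : Prop :=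
  ∀ p ∈ P, ∀ q ∈ P, p ≠ q → ∀ e, e ∈ p.walk.edges → e ∉ q.walk.edges

/-- An `st`-path: a path from `s` to `t` (no internal vertex is `s` or `t`,
which is automatic as the vertices of a path are distinct). -/
structure STPath (G : Multigraph V E) (s t : V) : Type (max u v) where
  walk : G.Walk s t
  support_nodup : walk.support.Nodup

/-- A system of pairwise edge-disjoint `st`-paths. -/
def STPathDisjoint (G : Multigraph V E) {s t : V} (P : Set (G.STPath s t)) : Prop :=
  ∀ p ∈ P, ∀ q ∈ P, p ≠ q → ∀ e, e ∈ p.walk.edges → e ∉ q.walk.edges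

/-- A nontrivial path starting at `s`. -/
structure SPath (G : Multigraph V E) (s : V) : Type (max u v) where
  last : V
  walk : G.Walk s last
  support_nodup : walk.support.Nodup
  edges_ne_nil : walk.edges ≠ []

/-- A system of pairwise edge-disjoint paths starting at `s`. -/
def SPathDisjoint (G : Multigraph V E) {s : V} (W : Set (G.SPath s)) : Prop :=
  ∀ p ∈ W, ∀ q ∈ W, p ≠ q → ∀ e, e ∈ p.walk.edges → e ∉ q.walk.edges

/-- The set of last edges of a system of paths starting at `s`. -/
def lastEdges (G : Multigraph V E) {s : V} (W : Set (G.SPath s)) : Set E :=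
  {e | ∃ p ∈ W, p.walk.edges.getLast? = some e}

/-- `C` is a cut separating `A` from `B`. -/
def SepCut (G : Multigraph V E) (A B : Set V) (C : Set E) : Prop :=
  ∃ X : Set V, A ⊆ X ∧ (∀ b ∈ B, b ∉ X) ∧ C = G.cut X

/-- `C` is a `⊆`-minimal cut separating `A` from `B`. -/
def IsMinSepCut (G : Multigraph V E) (A B : Set V) (C : Set E) : Prop :=
  G.SepCut A B C ∧ ∀ D : Set E, G.SepCut A B D → D ⊆ C → D = C

/-- An `s`-`B`-wave: a system of pairwise edge-disjoint paths starting at `s`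
whose set of last edges is a `⊆`-minimal cut separating `s` from `B`. -/
def IsWave (G : Multigraph V E) (s : V) (B : Set V) (W : Set (G.SPath s)) : Prop :=
  G.SPathDisjoint W ∧ G.IsMinSepCut {s} B (G.lastEdges W)

/-- An Erdős–Menger `st`-cut: an `st`-cut which is orthogonal to some system of
pairwise edge-disjoint `st`-paths, i.e. it consists of exactly one edge chosen
from each path of the system. -/
def IsEMCut (G : Multigraph V E) (s t : V) (C : Set E) : Prop :=
  (∃ X : Set V, s ∈ X ∧ t ∉ X ∧ C = G.cut X) ∧
  ∃ P : Set (G.STPath s t), G.STPathDisjoint P ∧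
    (∀ p ∈ P, ∃! e, e ∈ C ∧ e ∈ p.walk.edges) ∧
    (∀ e ∈ C, ∃ p ∈ P, e ∈ p.walk.edges)

/-- The order `≼` on `st`-cuts: the `s`-side of `C` is contained in the
`s`-side of `D` (in a connected graph the `s`-side is unique). -/
def CutLE (G : Multigraph V E) (s t : V) (C D : Set E) : Prop :=
  ∃ X Y : Set V, s ∈ X ∧ t ∉ X ∧ C = G.cut X ∧ s ∈ Y ∧ t ∉ Y ∧ D = G.cut Y ∧ X ⊆ Y

/-- A cut of the form `C_W` for some `st`-wave `W`. -/
def IsWaveCut (G : Multigraph V E) (s t : V) (C : Set E) : Prop :=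
  ∃ W : Set (G.SPath s), G.IsWave s {t} W ∧ G.lastEdges W = C

/-- Deletion of a set of edges. -/
def deleteEdges (G : Multigraph V E) (F : Set E) : Multigraph V {e : E // e ∉ F} where
  inc e := G.inc e.1
  not_isDiag e := G.not_isDiag e.1

open Classical in
/-- Contraction of the vertex set `X` to the vertex `s` (edges inside `X` are
deleted, edges leaving `X` are redirected to `s`). -/
noncomputable def contract (G : Multigraph V E) (X : Set V) (s : V) :
    Multigraph V {e : E // ¬ (Sym2.map (fun v => if v ∈ X then s else v) (G.inc e)).IsDiag} where
  inc e := Sym2.map (fun v => if v ∈ X then s else v) (G.inc e.1)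
  not_isDiag e := e.2

/-- Reachability inside a set `S` of vertices. -/
def ReachableIn (G : Multigraph V E) (S : Set V) (x y : V) : Prop :=
  ∃ p : G.Walk x y, ∀ z ∈ p.support, z ∈ S

/-- `Y` is (the vertex set of) a connected component of the subgraph of `G`
induced by `S`. -/
def IsComponentOf (G : Multigraph V E) (Y S : Set V) : Prop :=
  Y.Nonempty ∧ Y ⊆ S ∧ ∀ x ∈ Y, ∀ y ∈ S, (G.ReachableIn S x y ↔ y ∈ Y)

/-- A cycle in a multigraph (a closed walk with distinct edges whose
vertices are distinct except that the first one equals the last one). -/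
structure Cycle (G : Multigraph V E) : Type (max u v) where
  base : V
  walk : G.Walk base base
  edges_ne_nil : walk.edges ≠ []
  edges_nodup : walk.edges.Nodup
  support_tail_nodup : walk.support.tail.Nodup

/-- A graph is Eulerian if its edge set can be partitioned into
edge sets of cycles. -/
def IsEulerian (G : Multigraph V E) : Prop :=
  ∃ C : Set G.Cycle,
    (∀ c ∈ C, ∀ d ∈ C, c ≠ d → ∀ e, e ∈ c.walk.edges → e ∉ d.walk.edges) ∧
    ∀ e : E, ∃ c ∈ C, e ∈ c.walk.edges

/-- A `T`-partition: a family `{A t : t ∈ T}` of pairwise disjoint vertex sets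
with `A t ∩ T = {t}`. -/
def IsTPartition (T : Set V) (A : V → Set V) : Prop :=
  (∀ t ∈ T, A t ∩ T = {t}) ∧
  ∀ t₁ ∈ T, ∀ t₂ ∈ T, t₁ ≠ t₂ → Disjoint (A t₁) (A t₂)

end Multigraph

namespace LC

variable {V : Type u} {E : Type v}

/-- `W i x l y`: the list `l` of (edge, head) steps is a loopless walk from `x` to `y`. -/
def W (i : E → Sym2 V) : V → List (E × V) → V → Prop
  | x, [], y => x = y
  | x, (e, z) :: l, y => i e = s(x, z) ∧ x ≠ z ∧ W i z l y

/-- edges of a step list -/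
def eds (l : List (E × V)) : List E := l.map Prod.fst

/-- heads of a step list -/
def vts (l : List (E × V)) : List V := l.map Prod.snd

/-- darts of a step list -/
def dts : V → List (E × V) → List (V × E × V)
  | _, [] => []
  | x, (e, z) :: l => (x, e, z) :: dts z l

/-- the cut of a vertex set -/
def cut (i : E → Sym2 V) (X : Set V) : Set E :=
  {e | ∃ x y, i e = s(x, y) ∧ x ∈ X ∧ y ∉ X}

@[simp] theorem eds_nil : eds ([] : List (E × V)) = [] := rfl
@[simp] theorem eds_cons (a : E × V) (l : List (E × V)) : eds (a :: l) = a.1 :: eds l := rfl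
@[simp] theorem eds_append (l m : List (E × V)) : eds (l ++ m) = eds l ++ eds m := by
  simp [eds]
@[simp] theorem vts_nil : vts ([] : List (E × V)) = [] := rfl
@[simp] theorem vts_cons (a : E × V) (l : List (E × V)) : vts (a :: l) = a.2 :: vts l := rfl
@[simp] theorem vts_append (l m : List (E × V)) : vts (l ++ m) = vts l ++ vts m := by
  simp [vts]
@[simp] theorem W_nil (i : E → Sym2 V) (x y : V) : W i x [] y ↔ x = y := Iff.rfl
@[simp] theorem W_cons (i : E → Sym2 V) (x y : V) (a : E × V) (l : List (E × V)) :
    W i x (a :: l) y ↔ i a.1 = s(x, a.2) ∧ x ≠ a.2 ∧ W i a.2 l y := Iff.rfl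
@[simp] theorem dts_nil (x : V) : dts x ([] : List (E × V)) = [] := rfl
@[simp] theorem dts_cons (x : V) (a : E × V) (l : List (E × V)) :
    dts x (a :: l) = (x, a.1, a.2) :: dts a.2 l := rfl

theorem W_append {i : E → Sym2 V} {x y : V} {l m : List (E × V)} :
    W i x (l ++ m) y ↔ ∃ z, W i x l z ∧ W i z m y := by
  induction l generalizing x with
  | nil => simp
  | cons a l ih => simp [ih, and_assoc]

theorem W_unique {i : E → Sym2 V} {x y y' : V} {l : List (E × V)}
    (h : W i x l y) (h' : W i x l y') : y = y' := by
  induction l generalizing x with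
  | nil => simp_all
  | cons a l ih => exact ih h.2.2 h'.2.2

theorem dts_append {i : E → Sym2 V} {x y : V} {l m : List (E × V)} (h : W i x l y) :
    dts x (l ++ m) = dts x l ++ dts y m := by
  induction l generalizing x with
  | nil => simp_all
  | cons a l ih => simp [ih h.2.2]

theorem mem_dts {i : E → Sym2 V} {x b : V} {l : List (E × V)} (h : W i x l b)
    {c d : V} {g : E} :
    (c, g, d) ∈ dts x l ↔ ∃ l1 l2, l = l1 ++ (g, d) :: l2 ∧ W i x l1 c ∧ W i d l2 b := by
  constructor
  · intro hm
    induction l generalizing x with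
    | nil => simp at hm
    | cons a l ih =>
      rw [dts_cons, List.mem_cons] at hm
      rcases hm with hm | hm
      · simp only [Prod.mk.injEq] at hm
        obtain ⟨rfl, rfl, rfl⟩ := hm
        exact ⟨[], l, rfl, rfl, h.2.2⟩
      · obtain ⟨l1, l2, rfl, h1, h2⟩ := ih h.2.2 hm
        exact ⟨a :: l1, l2, rfl, ⟨h.1, h.2.1, h1⟩, h2⟩
  · rintro ⟨l1, l2, rfl, h1, h2⟩
    rw [dts_append h1]
    simp

theorem dts_inc {i : E → Sym2 V} {x b : V} {l : List (E × V)} (h : W i x l b)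
    {c d : V} {g : E} (hm : (c, g, d) ∈ dts x l) : i g = s(c, d) ∧ c ≠ d := by
  obtain ⟨l1, l2, rfl, h1, h2⟩ := (mem_dts h).1 hm
  obtain ⟨z, h3, h4⟩ := W_append.1 h
  obtain rfl := W_unique h1 h3
  exact ⟨h4.1, h4.2.1⟩

theorem mem_eds_iff {x : V} {l : List (E × V)} {g : E} :
    g ∈ eds l ↔ ∃ c d, (c, g, d) ∈ dts x l := by
  induction l generalizing x with
  | nil => simp
  | cons a l ih =>
    simp only [eds_cons, List.mem_cons, dts_cons, Prod.mk.injEq]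
    rw [ih (x := a.2)]
    constructor
    · rintro (rfl | ⟨c, d, h⟩)
      · exact ⟨x, a.2, Or.inl ⟨rfl, rfl, rfl⟩⟩
      · exact ⟨c, d, Or.inr h⟩
    · rintro ⟨c, d, ⟨rfl, rfl, rfl⟩ | h⟩
      · exact Or.inl rfl
      · exact Or.inr ⟨c, d, h⟩

theorem mem_eds_of_dts {x : V} {l : List (E × V)} {g : E} {c d : V}
    (h : (c, g, d) ∈ dts x l) : g ∈ eds l := mem_eds_iff.2 ⟨c, d, h⟩

theorem mem_vts_of_dts {x : V} {l : List (E × V)} {g : E} {c d : V}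
    (h : (c, g, d) ∈ dts x l) : d ∈ vts l := by
  induction l generalizing x with
  | nil => simp at h
  | cons a l ih =>
    simp only [dts_cons, List.mem_cons, Prod.mk.injEq] at h
    rcases h with ⟨rfl, rfl, rfl⟩ | h
    · simp
    · simp [ih h]

theorem src_mem_of_dts {x : V} {l : List (E × V)} {g : E} {c d : V}
    (h : (c, g, d) ∈ dts x l) : c = x ∨ c ∈ vts l := by
  induction l generalizing x with
  | nil => simp at h
  | cons a l ih =>
    simp only [dts_cons, List.mem_cons, Prod.mk.injEq] at h
    rcases h with ⟨rfl, rfl, rfl⟩ | h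
    · simp
    · rcases ih h with h | h <;> simp [h]

/-- the walk depends only on the incidences of its edges -/
theorem W_congr {i j : E → Sym2 V} {x y : V} {l : List (E × V)}
    (hij : ∀ g ∈ eds l, i g = j g) (h : W i x l y) : W j x l y := by
  induction l generalizing x with
  | nil => exact h
  | cons a l ih =>
    refine ⟨?_, h.2.1, ih (fun g hg => hij g (by simp [hg])) h.2.2⟩
    rw [← hij a.1 (by simp)]; exact h.1

/-- reverse of a walk starting at `x` -/
def rev : V → List (E × V) → List (E × V)
  | _, [] => []
  | x, (e, z) :: l => rev z l ++ [(e, x)]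

@[simp] theorem rev_nil (x : V) : rev x ([] : List (E × V)) = [] := rfl
@[simp] theorem rev_cons (x : V) (a : E × V) (l : List (E × V)) :
    rev x (a :: l) = rev a.2 l ++ [(a.1, x)] := rfl

theorem eds_rev (x : V) (l : List (E × V)) : eds (rev x l) = (eds l).reverse := by
  induction l generalizing x with
  | nil => rfl
  | cons a l ih => simp [ih]

theorem W_rev {i : E → Sym2 V} {x y : V} {l : List (E × V)} (h : W i x l y) :
    W i y (rev x l) x := by
  induction l generalizing x with
  | nil => exact h.symm
  | cons a l ih =>
    rw [rev_cons, W_append]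
    refine ⟨a.2, ih h.2.2, ?_, h.2.1.symm, rfl⟩
    rw [h.1, Sym2.eq_swap]

theorem mem_dts_rev {i : E → Sym2 V} {x y : V} {l : List (E × V)} (h : W i x l y)
    {c d : V} {g : E} : (c, g, d) ∈ dts y (rev x l) ↔ (d, g, c) ∈ dts x l := by
  induction l generalizing x with
  | nil => simp
  | cons a l ih =>
    rw [rev_cons, dts_append (W_rev h.2.2), List.mem_append, ih h.2.2]
    simp only [dts_cons, dts_nil, List.mem_singleton, List.mem_cons, Prod.mk.injEq]
    tauto

theorem end_mem {i : E → Sym2 V} {x y : V} {l : List (E × V)} (h : W i x l y) :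
    y = x ∨ y ∈ vts l := by
  induction l generalizing x with
  | nil => left; exact h.symm
  | cons a l ih => rcases ih h.2.2 with h | h <;> simp [h]

theorem vts_dts {x : V} {l : List (E × V)} {d : V} (h : d ∈ vts l) :
    ∃ c g, (c, g, d) ∈ dts x l := by
  induction l generalizing x with
  | nil => simp at h
  | cons a l ih =>
    rw [vts_cons, List.mem_cons] at h
    rcases h with rfl | h
    · exact ⟨x, a.1, by simp⟩
    · obtain ⟨c, g, hh⟩ := ih (x := a.2) h
      exact ⟨c, g, by simp [hh]⟩

/-- first entry in a set -/
theorem first_entry {x : V} (l : List (E × V)) (X : Set V) (hl : ∃ z ∈ vts l, z ∈ X) :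
    ∃ l1 g z l2, l = l1 ++ (g, z) :: l2 ∧ (∀ y ∈ vts l1, y ∉ X) ∧ z ∈ X := by
  induction l with
  | nil => simp at hl
  | cons a l ih =>
    by_cases ha : a.2 ∈ X
    · exact ⟨[], a.1, a.2, l, rfl, by simp, ha⟩
    · have : ∃ z ∈ vts l, z ∈ X := by
        obtain ⟨z, hz, hzX⟩ := hl
        rw [vts_cons, List.mem_cons] at hz
        rcases hz with rfl | hz
        · exact absurd hzX ha
        · exact ⟨z, hz, hzX⟩
      obtain ⟨l1, g, z, l2, rfl, h1, h2⟩ := ih this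
      refine ⟨a :: l1, g, z, l2, rfl, ?_, h2⟩
      intro y hy
      rw [vts_cons, List.mem_cons] at hy
      rcases hy with rfl | hy
      · exact ha
      · exact h1 y hy

/-- a walk with no inward dart splits once -/
theorem split_once {i : E → Sym2 V} {x b : V} {l : List (E × V)} {X : Set V} (h : W i x l b)
    (hx : x ∈ X) (hb : b ∉ X) (hin : ∀ c g d, (c, g, d) ∈ dts x l → c ∉ X → d ∉ X) :
    ∃ l1 g z l2 c, l = l1 ++ (g, z) :: l2 ∧ W i x l1 c ∧ c ∈ X ∧ W i z l2 b ∧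
      i g = s(c, z) ∧ (∀ y ∈ vts l1, y ∈ X) ∧ z ∉ X ∧ ∀ y ∈ vts l2, y ∉ X := by
  induction l generalizing x with
  | nil => exact absurd (h ▸ hx) hb
  | cons a l ih =>
    by_cases ha : a.2 ∈ X
    · obtain ⟨l1, g, z, l2, c, rfl, h1, h2, h3, h4, h5, h6, h7⟩ := ih h.2.2 ha
        (fun c g d hm => hin c g d (by simp [hm]))
      refine ⟨a :: l1, g, z, l2, c, rfl, ⟨h.1, h.2.1, h1⟩, h2, h3, h4, ?_, h6, h7⟩
      intro y hy
      rw [vts_cons, List.mem_cons] at hy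
      rcases hy with rfl | hy
      · exact ha
      · exact h5 y hy
    · refine ⟨[], a.1, a.2, l, x, rfl, rfl, hx, h.2.2, h.1, by simp, ha, ?_⟩
      have key : ∀ (m : List (E × V)) (z : V), z ∉ X →
          (∀ c g d, (c, g, d) ∈ dts z m → c ∉ X → d ∉ X) → ∀ y ∈ vts m, y ∉ X := by
        intro m
        induction m with
        | nil => simp
        | cons b m ihm =>
          intro z hz hh y hy
          have hb2 : b.2 ∉ X := hh z b.1 b.2 (by simp) hz
          rw [vts_cons, List.mem_cons] at hy
          rcases hy with rfl | hy
          · exact hb2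
          · exact ihm b.2 hb2 (fun c g d hm => hh c g d (by simp [hm])) y hy
      exact key l a.2 ha (fun c g d hm => hin c g d (by simp [hm]))

/-- no inward dart and ends inside : stays inside -/
theorem stay_in {i : E → Sym2 V} {x b : V} {l : List (E × V)} {X : Set V} (h : W i x l b)
    (hb : b ∈ X) (hin : ∀ c g d, (c, g, d) ∈ dts x l → c ∉ X → d ∉ X) :
    x ∈ X ∧ ∀ y ∈ vts l, y ∈ X := by
  induction l generalizing x with
  | nil => exact ⟨(h : x = b) ▸ hb, by simp⟩
  | cons a l ih =>
    obtain ⟨h1, h2⟩ := ih h.2.2 (fun c g d hm => hin c g d (by simp [hm]))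
    refine ⟨?_, ?_⟩
    · by_contra hx
      exact hin x a.1 a.2 (by simp) hx h1
    · intro y hy
      rw [vts_cons, List.mem_cons] at hy
      rcases hy with rfl | hy
      · exact h1
      · exact h2 y hy

theorem mem_cut_of {i : E → Sym2 V} {X : Set V} {g : E} {x y : V} (h : i g = s(x, y))
    (hx : x ∈ X) (hy : y ∉ X) : g ∈ cut i X := ⟨x, y, h, hx, hy⟩

theorem mem_cut_iff {i : E → Sym2 V} {X : Set V} {g : E} {x y : V} (h : i g = s(x, y)) :
    g ∈ cut i X ↔ (x ∈ X ∧ y ∉ X) ∨ (y ∈ X ∧ x ∉ X) := by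
  constructor
  · rintro ⟨a, b, hab, ha, hb⟩
    rw [h, Sym2.eq_iff] at hab
    rcases hab with ⟨rfl, rfl⟩ | ⟨rfl, rfl⟩
    · exact Or.inl ⟨ha, hb⟩
    · exact Or.inr ⟨ha, hb⟩
  · rintro (⟨hx, hy⟩ | ⟨hy, hx⟩)
    · exact ⟨x, y, h, hx, hy⟩
    · exact ⟨y, x, by rw [h, Sym2.eq_swap], hy, hx⟩

theorem mem_cut_single {i : E → Sym2 V} {s : V} {g : E} :
    g ∈ cut i {s} ↔ ∃ y, i g = s(s, y) ∧ y ≠ s := by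
  constructor
  · rintro ⟨a, b, hab, rfl, hb⟩
    exact ⟨b, hab, hb⟩
  · rintro ⟨y, h, hy⟩
    exact ⟨s, y, h, rfl, hy⟩

/-- a dart avoiding `s` on both sides is not in `cut {s}` and conversely -/
theorem not_mem_cut_single {i : E → Sym2 V} {s : V} {g : E} {x y : V} (h : i g = s(x, y))
    (hx : x ≠ s) (hy : y ≠ s) : g ∉ cut i {s} := by
  rw [mem_cut_iff h]
  simp [hx, hy]

/-- crossing edge of a walk -/
theorem exists_cross {i : E → Sym2 V} {x b : V} {l : List (E × V)} {X : Set V} (h : W i x l b)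
    (hx : x ∈ X) (hb : b ∉ X) : ∃ c g d, (c, g, d) ∈ dts x l ∧ c ∈ X ∧ d ∉ X := by
  induction l generalizing x with
  | nil => exact absurd (h ▸ hx) hb
  | cons a l ih =>
    by_cases ha : a.2 ∈ X
    · obtain ⟨c, g, d, hm, h1, h2⟩ := ih h.2.2 ha
      exact ⟨c, g, d, by simp [hm], h1, h2⟩
    · exact ⟨x, a.1, a.2, by simp, hx, ha⟩

/-- shortest initial part ending in `B` -/
theorem trunc_first {i : E → Sym2 V} {x b : V} {l : List (E × V)} {B : Set V} (h : W i x l b)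
    (hb : b ∈ B) : ∃ l1 l2 b', l = l1 ++ l2 ∧ b' ∈ B ∧ W i x l1 b' ∧
      ∀ c g d, (c, g, d) ∈ dts x l1 → c ∉ B := by
  induction l generalizing x with
  | nil => exact ⟨[], [], b, rfl, hb, h, by simp⟩
  | cons a l ih =>
    by_cases hx : x ∈ B
    · exact ⟨[], a :: l, x, rfl, hx, rfl, by simp⟩
    · obtain ⟨l1, l2, b', rfl, hb', hW, hd⟩ := ih h.2.2
      refine ⟨a :: l1, l2, b', rfl, hb', ⟨h.1, h.2.1, hW⟩, ?_⟩
      intro c g d hm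
      simp only [dts_cons, List.mem_cons, Prod.mk.injEq] at hm
      rcases hm with ⟨rfl, -, -⟩ | hm
      · exact hx
      · exact hd c g d hm

end LC

namespace LC

variable {V : Type u} {E : Type v}

/-- extraction of a path -/
theorem exists_path {i : E → Sym2 V} {x y : V} {l : List (E × V)} (h : W i x l y) :
    ∃ l', W i x l' y ∧ (∀ d ∈ dts x l', d ∈ dts x l) ∧ (x :: vts l').Nodup := by
  induction l generalizing x with
  | nil => exact ⟨[], h, by simp, by simp⟩
  | cons a l ih =>
    obtain ⟨l', h1, h2, h3⟩ := ih h.2.2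
    by_cases hx : x ∈ a.2 :: vts l'
    · rw [List.mem_cons] at hx
      rcases hx with hx | hx
      · exact absurd hx h.2.1
      · obtain ⟨c, g, hd⟩ := vts_dts (x := a.2) hx
        obtain ⟨l1, l2, rfl, h4, h5⟩ := (mem_dts h1).1 hd
        refine ⟨l2, h5, ?_, ?_⟩
        · intro d hd
          rw [dts_cons, List.mem_cons]; right
          apply h2
          rw [dts_append h4]; simp [hd]
        · simp only [vts_append, vts_cons] at h3
          rw [← List.cons_append] at h3
          exact (List.nodup_append.1 h3).2.1
    · refine ⟨a :: l', ⟨h.1, h.2.1, h1⟩, ?_, ?_⟩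
      · intro d hd
        rw [dts_cons, List.mem_cons] at hd ⊢
        exact hd.imp id (h2 d)
      · rw [vts_cons, List.nodup_cons]; exact ⟨hx, h3⟩

theorem eds_nodup {i : E → Sym2 V} {x y : V} {l : List (E × V)} (h : W i x l y)
    (hn : (x :: vts l).Nodup) : (eds l).Nodup := by
  induction l generalizing x with
  | nil => simp
  | cons a l ih =>
    rw [vts_cons, List.nodup_cons] at hn
    rw [eds_cons, List.nodup_cons]
    refine ⟨?_, ih h.2.2 hn.2⟩
    intro hm
    obtain ⟨c, d, hd⟩ := (mem_eds_iff (x := a.2)).1 hm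
    have h1 := (dts_inc h.2.2 hd).1
    rw [h.1, Sym2.eq_iff] at h1
    apply hn.1
    rw [List.mem_cons]
    rcases h1 with ⟨rfl, h1⟩ | ⟨rfl, h1⟩
    · exact src_mem_of_dts hd
    · right; exact mem_vts_of_dts hd

theorem exists_nodup {i : E → Sym2 V} {x y : V} {l : List (E × V)} (h : W i x l y) :
    ∃ l', W i x l' y ∧ (∀ d ∈ dts x l', d ∈ dts x l) ∧ (eds l').Nodup := by
  obtain ⟨l', h1, h2, h3⟩ := exists_path h
  exact ⟨l', h1, h2, eds_nodup h1 h3⟩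

/-- edge determines dart when edges are distinct -/
theorem dts_unique {x : V} {l : List (E × V)} (hn : (eds l).Nodup) {g : E} {c d c' d' : V}
    (h : (c, g, d) ∈ dts x l) (h' : (c', g, d') ∈ dts x l) : c = c' ∧ d = d' := by
  induction l generalizing x with
  | nil => simp at h
  | cons a l ih =>
    rw [eds_cons, List.nodup_cons] at hn
    simp only [dts_cons, List.mem_cons, Prod.mk.injEq] at h h'
    rcases h with ⟨rfl, rfl, rfl⟩ | h
    · rcases h' with ⟨rfl, -, rfl⟩ | h'
      · exact ⟨rfl, rfl⟩
      · exact absurd (mem_eds_of_dts h') hn.1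
    · rcases h' with ⟨rfl, rfl, rfl⟩ | h'
      · exact absurd (mem_eds_of_dts h) hn.1
      · exact ih hn.2 h h'

/-- basic conditions for a family of trails leaving `s` -/
structure Pre (i : E → Sym2 V) (s : V) (p : E → List (E × V)) : Prop where
  head : ∀ a ∈ cut i {s}, ∃ z l, p a = (a, z) :: l
  nodup : ∀ a ∈ cut i {s}, (eds (p a)).Nodup
  disj : ∀ a ∈ cut i {s}, ∀ a' ∈ cut i {s}, ∀ g, g ∈ eds (p a) → g ∈ eds (p a') → a = a'

structure Sys (i : E → Sym2 V) (s : V) (B : Set V) (p : E → List (E × V)) : Prop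
    extends Pre i s p where
  walk : ∀ a ∈ cut i {s}, ∃ b ∈ B, W i s (p a) b

structure Conf (i : E → Sym2 V) (s : V) (B : Set V) (p : E → List (E × V)) (a0 : E) (v : V) :
    Prop extends Pre i s p where
  mem : a0 ∈ cut i {s}
  stuck : W i s (p a0) v
  walk : ∀ a ∈ cut i {s}, a ≠ a0 → ∃ b ∈ B, W i s (p a) b

def Used (i : E → Sym2 V) (s : V) (p : E → List (E × V)) : Set (V × E × V) :=
  {d | ∃ a ∈ cut i {s}, d ∈ dts s (p a)}

theorem Pre.self_mem {i : E → Sym2 V} {s : V} {p : E → List (E × V)} (h : Pre i s p) {a : E}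
    (ha : a ∈ cut i {s}) : a ∈ eds (p a) := by
  obtain ⟨z, l, h1⟩ := h.head a ha
  simp [h1]

theorem Pre.eq_of_cut {i : E → Sym2 V} {s : V} {p : E → List (E × V)} (h : Pre i s p) {a g : E}
    (ha : a ∈ cut i {s}) (hg : g ∈ cut i {s}) (hm : g ∈ eds (p a)) : a = g :=
  h.disj a ha g hg g hm (h.self_mem hg)

/-- an edge of `cut {s}` is only used as first dart -/
theorem Pre.src_eq {i : E → Sym2 V} {s : V} {p : E → List (E × V)} (h : Pre i s p) {a g : E}
    {c d : V} (ha : a ∈ cut i {s}) (hg : g ∈ cut i {s}) (hm : (c, g, d) ∈ dts s (p a)) :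
    c = s := by
  obtain rfl := h.eq_of_cut ha hg (mem_eds_of_dts hm)
  obtain ⟨z, l, h1⟩ := h.head a ha
  have h2 : (s, a, z) ∈ dts s (p a) := by simp [h1]
  exact (dts_unique (h.nodup a ha) hm h2).1

theorem Pre.used_unique {i : E → Sym2 V} {s : V} {p : E → List (E × V)} (h : Pre i s p) {g : E}
    {c d c' d' : V} (h1 : (c, g, d) ∈ Used i s p) (h2 : (c', g, d') ∈ Used i s p) :
    c = c' ∧ d = d' := by
  obtain ⟨a, ha, h1⟩ := h1
  obtain ⟨a', ha', h2⟩ := h2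
  obtain rfl := h.disj a ha a' ha' g (mem_eds_of_dts h1) (mem_eds_of_dts h2)
  exact dts_unique (h.nodup a ha) h1 h2

theorem Conf.exW {i : E → Sym2 V} {s : V} {B : Set V} {p : E → List (E × V)} {a0 : E} {v : V}
    (h : Conf i s B p a0 v) {a : E} (ha : a ∈ cut i {s}) : ∃ b, W i s (p a) b := by
  by_cases h0 : a = a0
  · subst h0; exact ⟨v, h.stuck⟩
  · obtain ⟨b, -, hb⟩ := h.walk a ha h0; exact ⟨b, hb⟩

theorem Conf.toSys {i : E → Sym2 V} {s : V} {B : Set V} {p : E → List (E × V)} {a0 : E} {v : V}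
    (h : Conf i s B p a0 v) (hv : v ∈ B) : Sys i s B p := by
  refine ⟨h.toPre, fun a ha => ?_⟩
  by_cases h0 : a = a0
  · subst h0; exact ⟨v, hv, h.stuck⟩
  · exact h.walk a ha h0

open Classical in
theorem move {i : E → Sym2 V} {s : V} {B : Set V} {p : E → List (E × V)} {a0 : E} {x y : V} {g : E}
    (h : Conf i s B p a0 x) (hg : g ∉ cut i {s}) (hi : i g = s(x, y)) (hxy : x ≠ y)
    (hu : (x, g, y) ∉ Used i s p) :
    ∃ p' a0', Conf i s B p' a0' y ∧ Used i s p' ⊆ insert (x, g, y) (Used i s p) := by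
  by_cases hused : ∃ a ∈ cut i {s}, g ∈ eds (p a)
  · obtain ⟨a', ha', hga⟩ := hused
    obtain ⟨c, d, hd⟩ := (mem_eds_iff (x := s)).1 hga
    obtain ⟨b, hb⟩ := h.exW ha'
    have hcd := (dts_inc hb hd).1
    rw [hi, Sym2.eq_iff] at hcd
    rcases hcd with ⟨rfl, rfl⟩ | ⟨rfl, rfl⟩
    · exact absurd ⟨a', ha', hd⟩ hu
    obtain ⟨l1, l2, hl, h1, h2⟩ := (mem_dts hb).1 hd
    obtain ⟨z, l, hhead⟩ := h.head a' ha'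
    have hne : a' ≠ g := fun h => hg (h ▸ ha')
    obtain ⟨l1', hl1⟩ : ∃ l1', l1 = (a', z) :: l1' := by
      rw [hhead] at hl
      cases l1 with
      | nil => simp at hl; exact absurd hl.1.1 hne
      | cons q l1' => simp at hl; exact ⟨l1', by rw [hl.1]⟩
    have hnod := h.nodup a' ha'
    rw [hl, eds_append, eds_cons] at hnod
    by_cases haa : a' = a0
    · subst haa
      refine ⟨Function.update p a' l1, a', ⟨⟨?_, ?_, ?_⟩, h.mem, ?_, ?_⟩, ?_⟩
      · intro a ha
        by_cases h0 : a = a'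
        · subst h0; exact ⟨z, l1', by simp [hl1]⟩
        · simp only [Function.update_of_ne h0]; exact h.head a ha
      · intro a ha
        by_cases h0 : a = a'
        · subst h0; simp only [Function.update_self]; exact (List.nodup_append.1 hnod).1
        · simp only [Function.update_of_ne h0]; exact h.nodup a ha
      · have key : ∀ a g, g ∈ eds (Function.update p a' l1 a) → g ∈ eds (p a) := by
          intro a g hg
          by_cases h0 : a = a'
          · subst h0; simp only [Function.update_self] at hg; rw [hl]; simp [hg]
          · simpa only [Function.update_of_ne h0] using hg
        intro a ha b hb g h3 h4
        exact h.disj a ha b hb g (key _ _ h3) (key _ _ h4)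
      · simpa using h1
      · intro a ha h0; simp only [Function.update_of_ne h0]; exact h.walk a ha h0
      · rintro d ⟨a, ha, hd⟩
        right
        refine ⟨a, ha, ?_⟩
        by_cases h0 : a = a'
        · subst h0; simp only [Function.update_self] at hd; rw [hl, dts_append h1]; simp [hd]
        · simpa only [Function.update_of_ne h0] using hd
    · obtain ⟨b', hb'B, hb'⟩ := h.walk a' ha' haa
      obtain rfl := W_unique hb hb'
      let p' := Function.update (Function.update p a0 (p a0 ++ l2)) a' l1
      have e1 : p' a' = l1 := by simp [p']
      have e2 : p' a0 = p a0 ++ l2 := by simp [p', Function.update_of_ne (Ne.symm haa)]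
      have e3 : ∀ a, a ≠ a' → a ≠ a0 → p' a = p a := by
        intro a h1 h2; simp [p', Function.update_of_ne h1, Function.update_of_ne h2]
      obtain ⟨z0, k, hk⟩ := h.head a0 h.mem
      have sub1 : ∀ f ∈ eds l1, f ∈ eds (p a') := by intro f hf; rw [hl]; simp [hf]
      have sub2 : ∀ f ∈ eds l2, f ∈ eds (p a') := by intro f hf; rw [hl]; simp [hf]
      have nd1 := (List.nodup_append.1 hnod).1
      have nd2 := (List.nodup_cons.1 (List.nodup_append.1 hnod).2.1).2
      have dj : ∀ f, f ∈ eds l1 → f ∈ eds l2 → False := by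
        intro f h3 h4
        exact (List.nodup_append.1 hnod).2.2 f h3 f (by simp [h4]) rfl
      have dj0 : ∀ f, f ∈ eds (p a0) → f ∈ eds l2 → False := by
        intro f h3 h4
        exact haa (h.disj a0 h.mem a' ha' f h3 (sub2 f h4)).symm
      refine ⟨p', a', ⟨⟨?_, ?_, ?_⟩, ha', ?_, ?_⟩, ?_⟩
      · intro a ha
        by_cases h0 : a = a'
        · subst h0; exact ⟨z, l1', by rw [e1, hl1]⟩
        by_cases h0' : a = a0
        · subst h0'; exact ⟨z0, k ++ l2, by rw [e2, hk]; rfl⟩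
        · rw [e3 a h0 h0']; exact h.head a ha
      · intro a ha
        by_cases h0 : a = a'
        · subst h0; rw [e1]; exact nd1
        by_cases h0' : a = a0
        · subst h0'; rw [e2, eds_append, List.nodup_append]
          exact ⟨h.nodup a ha, nd2, fun f h3 f' h4 heq => dj0 f h3 (heq ▸ h4)⟩
        · rw [e3 a h0 h0']; exact h.nodup a ha
      · have key : ∀ a f, f ∈ eds (p' a) → (a = a' ∧ f ∈ eds l1) ∨ (a = a0 ∧ f ∈ eds l2) ∨
            (a ≠ a' ∧ f ∈ eds (p a)) := by
          intro a f hf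
          by_cases h0 : a = a'
          · subst h0; rw [e1] at hf; exact Or.inl ⟨rfl, hf⟩
          by_cases h0' : a = a0
          · subst h0'; rw [e2, eds_append, List.mem_append] at hf
            rcases hf with hf | hf
            · exact Or.inr (Or.inr ⟨h0, hf⟩)
            · exact Or.inr (Or.inl ⟨rfl, hf⟩)
          · rw [e3 a h0 h0'] at hf; exact Or.inr (Or.inr ⟨h0, hf⟩)
        intro a ha c hc f h3 h4
        rcases key _ _ h3 with ⟨rfl, k3⟩ | ⟨rfl, k3⟩ | ⟨n3, k3⟩ <;>
        rcases key _ _ h4 with ⟨rfl, k4⟩ | ⟨rfl, k4⟩ | ⟨n4, k4⟩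
        · rfl
        · exact (dj f k3 k4).elim
        · exact (n4 (h.disj _ hc _ ha f k4 (sub1 f k3))).elim
        · exact (dj f k4 k3).elim
        · rfl
        · exact (n4 (h.disj _ hc _ ha' f k4 (sub2 f k3))).elim
        · exact (n3 (h.disj _ ha _ hc f k3 (sub1 f k4))).elim
        · exact (n3 (h.disj _ ha _ ha' f k3 (sub2 f k4))).elim
        · exact h.disj _ ha _ hc f k3 k4
      · rw [e1]; exact h1
      · intro a ha h0
        by_cases h0' : a = a0
        · subst h0'; rw [e2]; exact ⟨b, hb'B, W_append.2 ⟨_, h.stuck, h2⟩⟩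
        · rw [e3 a h0 h0']; exact h.walk a ha h0'
      · rintro d ⟨a, ha, hd⟩
        right
        by_cases h0 : a = a'
        · subst h0; rw [e1] at hd
          refine ⟨a, ha, ?_⟩; rw [hl, dts_append h1]; simp [hd]
        by_cases h0' : a = a0
        · subst h0'; rw [e2, dts_append h.stuck, List.mem_append] at hd
          rcases hd with hd | hd
          · exact ⟨a, ha, hd⟩
          · refine ⟨a', ha', ?_⟩; rw [hl, dts_append h1]; simp [hd]
        · rw [e3 a h0 h0'] at hd; exact ⟨a, ha, hd⟩
  · push Not at hused
    let p' := Function.update p a0 (p a0 ++ [(g, y)])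
    have e1 : p' a0 = p a0 ++ [(g, y)] := by simp [p']
    have e2 : ∀ a, a ≠ a0 → p' a = p a := by
      intro a h1; simp [p', Function.update_of_ne h1]
    refine ⟨p', a0, ⟨⟨?_, ?_, ?_⟩, h.mem, ?_, ?_⟩, ?_⟩
    · intro a ha
      by_cases h0 : a = a0
      · subst h0; obtain ⟨z, l, hz⟩ := h.head a ha; exact ⟨z, l ++ [(g, y)], by rw [e1, hz]; rfl⟩
      · rw [e2 a h0]; exact h.head a ha
    · intro a ha
      by_cases h0 : a = a0
      · subst h0; rw [e1, eds_append, List.nodup_append]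
        refine ⟨h.nodup a ha, by simp, ?_⟩
        intro f hf f' hf' heq
        simp at hf'; subst hf'; subst heq
        exact hused a ha hf
      · rw [e2 a h0]; exact h.nodup a ha
    · have key : ∀ a ∈ cut i {s}, ∀ f, f ∈ eds (p' a) → (a = a0 ∧ f = g) ∨ (f ≠ g ∧ f ∈ eds (p a)) := by
        intro a ha f hf
        by_cases h0 : a = a0
        · subst h0; rw [e1, eds_append, List.mem_append] at hf
          rcases hf with hf | hf
          · exact Or.inr ⟨fun h3 => hused a ha (h3 ▸ hf), hf⟩
          · simp at hf; exact Or.inl ⟨rfl, hf⟩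
        · rw [e2 a h0] at hf; exact Or.inr ⟨fun h3 => hused a ha (h3 ▸ hf), hf⟩
      intro a ha b hb f h3 h4
      rcases key a ha f h3 with ⟨rfl, k3⟩ | ⟨n3, k3⟩ <;>
      rcases key b hb f h4 with ⟨rfl, k4⟩ | ⟨n4, k4⟩
      · rfl
      · exact absurd k3 n4
      · exact absurd k4 n3
      · exact h.disj _ ha _ hb f k3 k4
    · rw [e1]; exact W_append.2 ⟨x, h.stuck, hi, hxy, rfl⟩
    · intro a ha h0; rw [e2 a h0]; exact h.walk a ha h0
    · rintro d ⟨a, ha, hd⟩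
      by_cases h0 : a = a0
      · subst h0; rw [e1, dts_append h.stuck, List.mem_append] at hd
        rcases hd with hd | hd
        · exact Or.inr ⟨a, ha, hd⟩
        · simp at hd; exact Or.inl hd
      · rw [e2 a h0] at hd; exact Or.inr ⟨a, ha, hd⟩

theorem moves {i : E → Sym2 V} {s : V} {B : Set V} {y : V} (l : List (E × V)) :
    ∀ (p : E → List (E × V)) (a0 : E) (x : V), Conf i s B p a0 x → W i x l y → (eds l).Nodup →
    (∀ c g d, (c, g, d) ∈ dts x l → g ∉ cut i {s} ∧ (c, g, d) ∉ Used i s p) →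
    ∃ p' a0', Conf i s B p' a0' y := by
  induction l with
  | nil => rintro p a0 x h hW - -; exact ⟨p, a0, (hW : x = y) ▸ h⟩
  | cons a l ih =>
    intro p a0 x h hW hn hd
    obtain ⟨h1, h2⟩ := hd x a.1 a.2 (by simp)
    obtain ⟨p', a0', hc, hsub⟩ := move h h1 hW.1 hW.2.1 h2
    rw [eds_cons, List.nodup_cons] at hn
    refine ih p' a0' a.2 hc hW.2.2 hn.2 ?_
    intro c g d hm
    obtain ⟨h3, h4⟩ := hd c g d (by simp [hm])
    refine ⟨h3, fun h5 => ?_⟩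
    rcases hsub h5 with h6 | h6
    · simp only [Prod.mk.injEq] at h6
      exact hn.1 (h6.2.1 ▸ mem_eds_of_dts hm)
    · exact h4 h6

/-- augmenting lemma -/
theorem aug {i : E → Sym2 V} {s : V} {B : Set V} {p : E → List (E × V)} {a0 : E} {v : V}
    (h : Conf i s B p a0 v) (hs : s ∉ B) :
    (∃ p', Sys i s B p') ∨ ∃ X : Set V, s ∈ X ∧ v ∈ X ∧ (∀ b ∈ B, b ∉ X) ∧
      (∀ g x y, i g = s(x, y) → x ∈ X → y ∉ X → (x, g, y) ∈ Used i s p) ∧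
      (∀ g x y, (x, g, y) ∈ Used i s p → x ∉ X → y ∉ X) := by
  by_cases hsucc : ∃ p', Sys i s B p'
  · exact Or.inl hsucc
  right
  let R : Set V := {y | ∃ l, W i v l y ∧ ∀ c g d, (c, g, d) ∈ dts v l →
    g ∉ cut i {s} ∧ (c, g, d) ∉ Used i s p}
  have hRB : ∀ b ∈ B, b ∉ R := by
    rintro b hb ⟨l, hl, hd⟩
    obtain ⟨l', h1, h2, h3⟩ := exists_nodup hl
    obtain ⟨p', a0', hc⟩ := moves l' p a0 v h h1 h3
      (fun c g d hm => hd c g d (h2 _ hm))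
    exact hsucc ⟨p', hc.toSys hb⟩
  have hstep : ∀ x g y, x ∈ R → i g = s(x, y) → x ≠ y → g ∉ cut i {s} →
      (x, g, y) ∉ Used i s p → y ∈ R := by
    rintro x g y ⟨l, hl, hd⟩ hi hxy hg hu
    refine ⟨l ++ [(g, y)], W_append.2 ⟨x, hl, hi, hxy, rfl⟩, ?_⟩
    intro c g' d hm
    rw [dts_append hl, List.mem_append] at hm
    rcases hm with hm | hm
    · exact hd c g' d hm
    · simp only [dts_cons, dts_nil, List.mem_singleton, Prod.mk.injEq] at hm
      obtain ⟨rfl, rfl, rfl⟩ := hm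
      exact ⟨hg, hu⟩
  refine ⟨insert s R, Or.inl rfl, Or.inr ⟨[], rfl, by simp⟩, ?_, ?_, ?_⟩
  · rintro b hb (rfl | hbR)
    · exact hs hb
    · exact hRB b hb hbR
  · intro g x y hi hx hy
    have hxy : x ≠ y := fun h => hy (h ▸ hx)
    by_cases hg : g ∈ cut i {s}
    · have hxs : x = s := by
        obtain ⟨z, hz, hzs⟩ := mem_cut_single.1 hg
        rw [hi, Sym2.eq_iff] at hz
        rcases hz with ⟨h, -⟩ | ⟨-, h⟩
        · exact h
        · exact absurd (Or.inl h) hy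
      subst hxs
      obtain ⟨z, l, hz⟩ := h.head g hg
      obtain ⟨b, hb⟩ := h.exW hg
      have hd : (x, g, z) ∈ dts x (p g) := by simp [hz]
      have := (dts_inc hb hd).1
      rw [hi, Sym2.congr_right] at this
      subst this
      exact ⟨g, hg, hd⟩
    · by_contra hu
      rcases hx with rfl | hx
      · exact hg (mem_cut_of hi rfl (fun h => hxy h.symm))
      · exact hy (Or.inr (hstep x g y hx hi hxy hg hu))
  · intro g x y hu hx hy
    have hxs : x ≠ s := fun h => hx (Or.inl h)
    obtain ⟨a, ha, hd⟩ := hu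
    obtain ⟨b, hb⟩ := h.exW ha
    obtain ⟨hi, hxy⟩ := dts_inc hb hd
    have hg : g ∉ cut i {s} := fun hg => hxs (h.toPre.src_eq ha hg hd)
    rcases hy with rfl | hy
    · exact hg (mem_cut_of (hi.trans Sym2.eq_swap) rfl hxs)
    · apply hx; right
      refine hstep y g x hy (hi.trans Sym2.eq_swap) hxy.symm hg ?_
      intro hu2
      exact hxy (h.toPre.used_unique ⟨a, ha, hd⟩ hu2).1

end LC

namespace LC

variable {V : Type u} {E : Type v}

def noodd (i : E → Sym2 V) (T : Set V) : Prop :=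
  ∀ X : Set V, (∀ t ∈ T, t ∉ X) → ¬ ((cut i X).Finite ∧ Odd (cut i X).ncard)

open Classical in
theorem parity {i : E → Sym2 V} {x y : V} {l : List (E × V)} (K : Set V) (h : W i x l y)
    (hn : (eds l).Nodup) :
    Even ((eds l).toFinset.filter (· ∈ cut i K)).card ↔ (x ∈ K ↔ y ∈ K) := by
  induction l generalizing x with
  | nil => have h0 : x = y := h; subst h0; simp
  | cons a l ih =>
    rw [eds_cons, List.nodup_cons] at hn
    have ih := ih h.2.2 hn.2
    rw [eds_cons, List.toFinset_cons, Finset.filter_insert]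
    have hnm : a.1 ∉ (eds l).toFinset.filter (· ∈ cut i K) := by simp [hn.1]
    have hc := mem_cut_iff (X := K) h.1
    split_ifs with hm
    · rw [Finset.card_insert_of_notMem hnm, Nat.even_add_one, ih]
      rw [hc] at hm
      tauto
    · rw [ih]
      rw [hc] at hm
      tauto

open Classical in
/-- removing a family of trails that cross evenly -/
theorem even_biUnion {i : E → Sym2 V} (K : Set V) (F : Finset E) (s : V) (σ : E → List (E × V))
    (hn : ∀ a ∈ F, (eds (σ a)).Nodup) (hW : ∀ a ∈ F, ∃ b, W i s (σ a) b ∧ (s ∈ K ↔ b ∈ K))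
    (hd : ∀ a ∈ F, ∀ a' ∈ F, ∀ g, g ∈ eds (σ a) → g ∈ eds (σ a') → a = a') :
    Even (F.biUnion fun a => (eds (σ a)).toFinset.filter (· ∈ cut i K)).card := by
  rw [Finset.card_biUnion]
  · apply Finset.even_sum
    intro a ha
    obtain ⟨b, hb, h2⟩ := hW a ha
    exact (parity K hb (hn a ha)).2 h2
  · intro a ha a' ha' hne
    refine Finset.disjoint_left.2 ?_
    intro g hg hg'
    simp only [Finset.mem_filter, List.mem_toFinset] at hg hg'
    exact hne (hd a ha a' ha' g hg.1 hg'.1)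

structure InX (i : E → Sym2 V) (s : V) (X : Set V) (m : List (E × V)) (l1 : List (E × V))
    (c : E) (x y : V) : Prop where
  eq : m = l1 ++ [(c, y)]
  walk : W i s l1 x
  sub : ∀ z ∈ vts l1, z ∈ X
  inc : i c = s(x, y)
  out : y ∉ X

structure Good (i : E → Sym2 V) (s : V) (X : Set V) (σ : E → List (E × V)) (hole : E) : Prop
    extends Pre i s σ where
  inX : ∀ a ∈ cut i {s}, ∃ l1 c x y, InX i s X (σ a) l1 c x y
  cover : ∀ c ∈ cut i X, c ≠ hole → ∃ a ∈ cut i {s}, c ∈ eds (σ a)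
  hmem : hole ∈ cut i X
  unused : ∀ a ∈ cut i {s}, hole ∉ eds (σ a)

theorem InX.end_in {i : E → Sym2 V} {s : V} {X : Set V} {m l1 : List (E × V)}
    {c : E} {x y : V} (h : InX i s X m l1 c x y) (hs : s ∈ X) : x ∈ X := by
  rcases end_mem h.walk with h1 | h1
  · exact h1 ▸ hs
  · exact h.sub x h1

theorem InX.full {i : E → Sym2 V} {s : V} {X : Set V} {m l1 : List (E × V)}
    {c : E} {x y : V} (h : InX i s X m l1 c x y) (hs : s ∈ X) : W i s m y := by
  rw [h.eq, W_append]
  exact ⟨x, h.walk, h.inc, fun hxy => h.out (hxy ▸ h.end_in hs), rfl⟩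

/-- edges of a walk inside X are not in the cut -/
theorem not_cut_of_in {i : E → Sym2 V} {s x : V} {X : Set V} {l : List (E × V)} (h : W i s l x)
    (hs : s ∈ X) (hl : ∀ z ∈ vts l, z ∈ X) {g : E} (hg : g ∈ eds l) : g ∉ cut i X := by
  obtain ⟨c, d, hd⟩ := (mem_eds_iff (x := s)).1 hg
  rw [mem_cut_iff (dts_inc h hd).1]
  have hd' := hl d (mem_vts_of_dts hd)
  have hc : c ∈ X := by
    rcases src_mem_of_dts hd with h | h
    · exact h ▸ hs
    · exact hl c h
  tauto

theorem not_cut_of_out {i : E → Sym2 V} {s x : V} {X : Set V} {l : List (E × V)} (h : W i s l x)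
    (hs : s ∉ X) (hl : ∀ z ∈ vts l, z ∉ X) {g : E} (hg : g ∈ eds l) : g ∉ cut i X := by
  obtain ⟨c, d, hd⟩ := (mem_eds_iff (x := s)).1 hg
  rw [mem_cut_iff (dts_inc h hd).1]
  have hd' := hl d (mem_vts_of_dts hd)
  have hc : c ∉ X := by
    rcases src_mem_of_dts hd with h | h
    · exact h ▸ hs
    · exact hl c h
  tauto

theorem vts_rev {i : E → Sym2 V} {x y : V} {l : List (E × V)} (h : W i x l y) {z : V}
    (hz : z ∈ vts (rev x l)) : z = x ∨ z ∈ vts l := by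
  obtain ⟨c, g, hd⟩ := vts_dts (x := y) hz
  exact src_mem_of_dts ((mem_dts_rev h).1 hd)

open Classical in
theorem pl_step {i : E → Sym2 V} {T : Set V} {s : V} {X : Set V} (ho : noodd i T)
    (hs : s ∈ X) (hT : ∀ t ∈ T, t ∈ X → t = s) {σ : E → List (E × V)} {hole : E}
    (h : Good i s X σ hole) (M : Finset E) :
    ∃ a m hole', a ∈ cut i {s} ∧ a ∉ M ∧ Good i s X (Function.update σ a m) hole' ∧
      hole ∈ eds m := by
  obtain ⟨x0, y0, hi0, hx0, hy0⟩ := h.hmem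
  let Un : E → Prop := fun g => g ≠ hole ∧ ∀ a ∈ cut i {s}, g ∉ eds (σ a)
  let K : Set V := {z | ∃ l, W i x0 l z ∧ ∀ g ∈ eds l, Un g}
  have hstep : ∀ x g y, x ∈ K → i g = s(x, y) → x ≠ y → Un g → y ∈ K := by
    rintro x g y ⟨l, hl, hU⟩ hi hxy hg
    refine ⟨l ++ [(g, y)], W_append.2 ⟨x, hl, hi, hxy, rfl⟩, ?_⟩
    intro g' hg'
    simp at hg'
    rcases hg' with hg' | rfl
    · exact hU _ hg'
    · exact hg
  have hx0s : x0 ≠ s := by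
    rintro rfl
    have : hole ∈ cut i {x0} := mem_cut_of hi0 rfl (fun h => hy0 (h ▸ hx0))
    exact h.unused hole this (h.self_mem this)
  have hKsub : ∀ z ∈ K, z ∈ X ∧ z ≠ s := by
    rintro z ⟨l, hl, hU⟩
    by_contra hz
    obtain ⟨c, g, d, hd, hc, hd'⟩ := exists_cross (X := {z | z ∈ X ∧ z ≠ s}) hl ⟨hx0, hx0s⟩ hz
    obtain ⟨hi, hne⟩ := dts_inc hl hd
    have hg := hU g (mem_eds_of_dts hd)
    by_cases hds : d = s
    · subst hds
      have : g ∈ cut i {d} := mem_cut_of (hi.trans Sym2.eq_swap) rfl hne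
      exact hg.2 g this (h.self_mem this)
    · have hdX : d ∉ X := fun h => hd' ⟨h, hds⟩
      obtain ⟨a, ha, hga⟩ := h.cover g (mem_cut_of hi hc.1 hdX) hg.1
      exact hg.2 a ha hga
  have hKT : ∀ t ∈ T, t ∉ K := fun t ht hK => (hKsub t hK).2 (hT t ht (hKsub t hK).1)
  have hsK : s ∉ K := fun h => (hKsub s h).2 rfl
  have hcutK : ∀ g ∈ cut i K, g = hole ∨ ∃ a ∈ cut i {s}, g ∈ eds (σ a) := by
    rintro g ⟨x, y, hi, hx, hy⟩
    by_contra hcon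
    push Not at hcon
    exact hy (hstep x g y hx hi (fun h => hy (h ▸ hx)) hcon)
  have hholeK : hole ∈ cut i K :=
    mem_cut_of hi0 ⟨[], rfl, by simp⟩ (fun h => hy0 (hKsub y0 h).1)
  -- existence of a fresh path
  have hfresh : ∃ a ∈ cut i {s}, a ∉ M ∧ ∃ g ∈ eds (σ a), g ∈ cut i K := by
    by_contra hcon
    push Not at hcon
    let F := M.filter (· ∈ cut i {s})
    let D := F.biUnion fun a => (eds (σ a)).toFinset.filter (· ∈ cut i K)
    have hD : Even D.card := by
      refine even_biUnion K F s σ ?_ ?_ ?_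
      · intro a ha; exact h.nodup a (Finset.mem_filter.1 ha).2
      · intro a ha
        obtain ⟨l1, c, x, y, hX⟩ := h.inX a (Finset.mem_filter.1 ha).2
        refine ⟨y, hX.full hs, ?_⟩
        have : y ∉ K := fun h => hX.out (hKsub y h).1
        tauto
      · intro a ha a' ha'
        exact h.disj a (Finset.mem_filter.1 ha).2 a' (Finset.mem_filter.1 ha').2
    have hholeD : hole ∉ D := by
      simp only [D, Finset.mem_biUnion, Finset.mem_filter, List.mem_toFinset]
      rintro ⟨a, ha, h1, -⟩
      exact h.unused a (Finset.mem_filter.1 ha).2 h1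
    have hEq : cut i K = ((insert hole D : Finset E) : Set E) := by
      ext g
      simp only [Finset.coe_insert, Set.mem_insert_iff, Finset.mem_coe]
      constructor
      · intro hg
        rcases hcutK g hg with h1 | ⟨a, ha, hga⟩
        · exact Or.inl h1
        · right
          simp only [D, Finset.mem_biUnion, Finset.mem_filter, List.mem_toFinset]
          refine ⟨a, ?_, hga, hg⟩
          rw [Finset.mem_filter]
          refine ⟨?_, ha⟩
          by_contra haM
          exact hcon a ha haM g hga hg
      · rintro (rfl | hg)
        · exact hholeK
        · simp only [D, Finset.mem_biUnion, Finset.mem_filter, List.mem_toFinset] at hg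
          obtain ⟨a, -, -, hg⟩ := hg
          exact hg
    apply ho K hKT
    rw [hEq]
    refine ⟨Finset.finite_toSet _, ?_⟩
    rw [Set.ncard_coe_finset, Finset.card_insert_of_notMem hholeD]
    exact hD.add_one
  obtain ⟨a, ha, haM, g0, hg0, hg0K⟩ := hfresh
  obtain ⟨l1, c, x, y, hX⟩ := h.inX a ha
  have hfull := hX.full hs
  -- a vertex z of l1 in K
  have hz : ∃ z ∈ vts l1, z ∈ K := by
    have hyK : y ∉ K := fun h => hX.out (hKsub y h).1
    by_contra hcon
    push Not at hcon
    have : ∀ z ∈ vts (σ a), z ∉ K := by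
      intro z hz
      rw [hX.eq] at hz
      simp at hz
      rcases hz with hz | rfl
      · exact hcon z hz
      · exact hyK
    exact not_cut_of_out hfull hsK this hg0 hg0K
  obtain ⟨z, hzl, l, hl, hlU⟩ := hz
  obtain ⟨l', hl', hsubd, hl'n⟩ := exists_nodup hl
  have hl'U : ∀ g ∈ eds l', Un g := by
    intro g hg
    obtain ⟨c, d, hd⟩ := (mem_eds_iff (x := x0)).1 hg
    exact hlU g (mem_eds_of_dts (hsubd _ hd))
  have hl'K : ∀ w ∈ vts l', w ∈ K := by
    intro w hw
    obtain ⟨c, g, hd⟩ := vts_dts (x := x0) hw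
    obtain ⟨k1, k2, hk, h1, h2⟩ := (mem_dts hl').1 hd
    obtain ⟨hi, hne⟩ := dts_inc hl' hd
    refine hstep c g w ⟨k1, h1, ?_⟩ hi hne (hl'U g (mem_eds_of_dts hd))
    intro g' hg'
    exact hl'U g' (by rw [hk]; simp [hg'])
  obtain ⟨c1, g1, hd1⟩ := vts_dts (x := s) hzl
  obtain ⟨k1, k2, hk, hk1, hk2⟩ := (mem_dts hX.walk).1 hd1
  obtain ⟨hi1, hne1⟩ := dts_inc hX.walk hd1
  let m0 := k1 ++ (g1, z) :: rev x0 l'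
  let m := m0 ++ [(hole, y0)]
  have hm0W : W i s m0 x0 := W_append.2 ⟨c1, hk1, hi1, hne1, W_rev hl'⟩
  have hmX : InX i s X m m0 hole x0 y0 := by
    refine ⟨rfl, hm0W, ?_, hi0, hy0⟩
    intro w hw
    simp only [m0, vts_append, vts_cons, List.mem_append, List.mem_cons] at hw
    rcases hw with hw | rfl | hw
    · exact hX.sub w (by rw [hk]; simp [hw])
    · exact hX.sub w hzl
    · rcases vts_rev hl' hw with rfl | hw
      · exact hx0
      · exact (hKsub w (hl'K w hw)).1
  have hcm : c ∈ eds (σ a) := by rw [hX.eq]; simp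
  have hσn := h.nodup a ha
  have hpre : ∀ f ∈ eds (k1 ++ [(g1, z)]), f ∈ eds l1 := by
    intro f hf; rw [hk]; simp at hf ⊢; tauto
  have hl1σ : ∀ f ∈ eds l1, f ∈ eds (σ a) := by intro f hf; rw [hX.eq]; simp [hf]
  have hcl1 : c ∉ eds l1 := by
    rw [hX.eq, eds_append, List.nodup_append] at hσn
    intro hc; exact hσn.2.2 c hc c (by simp) rfl
  have hedm : ∀ f ∈ eds m, f ∈ eds (k1 ++ [(g1, z)]) ∨ f ∈ eds l' ∨ f = hole := by
    intro f hf
    simp [m, m0, eds_rev] at hf ⊢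
    tauto
  have hcases : ∀ f ∈ eds m, f ∈ eds l1 ∨ (∀ a' ∈ cut i {s}, f ∉ eds (σ a')) := by
    intro f hf
    rcases hedm f hf with h1 | h1 | rfl
    · exact Or.inl (hpre f h1)
    · exact Or.inr (hl'U f h1).2
    · exact Or.inr h.unused
  have hcm' : c ∉ eds m := by
    intro hc
    rcases hcases c hc with h1 | h1
    · exact hcl1 h1
    · exact h1 a ha hcm
  have hmn : (eds m).Nodup := by
    have e : eds m = eds (k1 ++ [(g1, z)]) ++ ((eds l').reverse ++ [hole]) := by
      simp [m, m0, eds_rev]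
    rw [e, List.nodup_append, List.nodup_append]
    have hl1n : (eds l1).Nodup := by
      rw [hX.eq, eds_append, List.nodup_append] at hσn; exact hσn.1
    refine ⟨?_, ⟨List.nodup_reverse.2 hl'n, by simp, ?_⟩, ?_⟩
    · have : l1 = (k1 ++ [(g1, z)]) ++ k2 := by rw [hk]; simp
      rw [this, eds_append, List.nodup_append] at hl1n
      exact hl1n.1
    · intro f hf f' hf' heq
      simp at hf hf'; subst hf'; subst heq
      exact (hl'U _ hf).1 rfl
    · intro f hf f' hf' heq
      subst heq
      have h1 := hl1σ f (hpre f hf)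
      simp at hf'
      rcases hf' with h2 | rfl
      · exact (hl'U _ h2).2 a ha h1
      · exact h.unused a ha h1
  obtain ⟨z0, k0, hk0⟩ := h.head a ha
  have hmhead : ∃ z l, m = (a, z) :: l := by
    have e : σ a = (k1 ++ (g1, z) :: (k2 ++ [(c, y)])) := by rw [hX.eq, hk]; simp
    rw [hk0] at e
    cases k1 with
    | nil => simp at e; exact ⟨z, rev x0 l' ++ [(hole, y0)], by simp [m, m0, e]⟩
    | cons q k1 => simp at e; exact ⟨z0, k1 ++ (g1, z) :: (rev x0 l' ++ [(hole, y0)]), by simp [m, m0, e.1]⟩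
  have e1 : Function.update σ a m a = m := by simp
  have e2 : ∀ b, b ≠ a → Function.update σ a m b = σ b := by
    intro b hb; simp [Function.update_of_ne hb]
  have hdis : ∀ b ∈ cut i {s}, b ≠ a → ∀ f ∈ eds m, f ∉ eds (σ b) := by
    intro b hb hne f hf hfb
    rcases hcases f hf with h1 | h1
    · exact hne (h.disj b hb a ha f hfb (hl1σ f h1))
    · exact h1 b hb hfb
  refine ⟨a, m, c, ha, haM, ⟨⟨?_, ?_, ?_⟩, ?_, ?_, ?_, ?_⟩, by simp [m]⟩
  · intro b hb
    by_cases hba : b = a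
    · subst hba; rw [e1]; exact hmhead
    · rw [e2 b hba]; exact h.head b hb
  · intro b hb
    by_cases hba : b = a
    · subst hba; rw [e1]; exact hmn
    · rw [e2 b hba]; exact h.nodup b hb
  · intro b hb b' hb' f hf hf'
    by_cases hba : b = a
    · by_cases hba' : b' = a
      · rw [hba, hba']
      · rw [hba, e1] at hf; rw [e2 b' hba'] at hf'
        exact absurd hf' (hdis b' hb' hba' f hf)
    · by_cases hba' : b' = a
      · rw [hba', e1] at hf'; rw [e2 b hba] at hf
        exact absurd hf (hdis b hb hba f hf')
      · rw [e2 b hba] at hf; rw [e2 b' hba'] at hf'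
        exact h.disj b hb b' hb' f hf hf'
  · intro b hb
    by_cases hba : b = a
    · subst hba; rw [e1]; exact ⟨_, _, _, _, hmX⟩
    · rw [e2 b hba]; exact h.inX b hb
  · intro f hf hfc
    by_cases hfh : f = hole
    · subst hfh; exact ⟨a, ha, by rw [e1]; simp [m]⟩
    · obtain ⟨b, hb, hfb⟩ := h.cover f hf hfh
      by_cases hba : b = a
      · subst hba
        rw [hX.eq] at hfb
        simp at hfb
        rcases hfb with hfb | hfb
        · exact absurd hf (not_cut_of_in hX.walk hs hX.sub hfb)
        · exact absurd hfb hfc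
      · exact ⟨b, hb, by rw [e2 b hba]; exact hfb⟩
  · exact mem_cut_of hX.inc (hX.end_in hs) hX.out
  · intro b hb
    by_cases hba : b = a
    · subst hba; rw [e1]; exact hcm'
    · rw [e2 b hba]; intro hcb; exact hba (h.disj b hb a ha c hcb hcm)

open Classical in
theorem pl {i : E → Sym2 V} {T : Set V} {s : V} {X : Set V} (ho : noodd i T)
    (hs : s ∈ X) (hT : ∀ t ∈ T, t ∈ X → t = s) {σ : E → List (E × V)} {hole : E}
    (h : Good i s X σ hole) :
    ∃ σ', Pre i s σ' ∧ (∀ a ∈ cut i {s}, ∃ l1 c x y, InX i s X (σ' a) l1 c x y) ∧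
      ∀ c ∈ cut i X, ∃ a ∈ cut i {s}, c ∈ eds (σ' a) := by
  let St := {q : (E → List (E × V)) × E × Finset E // Good i s X q.1 q.2.1}
  have hnext : ∀ q : St, ∃ (a : E) (m : List (E × V)) (hole' : E), a ∈ cut i {s} ∧ a ∉ q.1.2.2 ∧
      Good i s X (Function.update q.1.1 a m) hole' ∧ q.1.2.1 ∈ eds m :=
    fun q => pl_step ho hs hT q.2 q.1.2.2
  choose na nm nh h1 h2 h3 h4 using hnext
  let nx : St → St := fun q =>
    ⟨(Function.update q.1.1 (na q) (nm q), nh q, insert (na q) q.1.2.2), h3 q⟩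
  let q : ℕ → St := fun n => nx^[n] ⟨(σ, hole, ∅), h⟩
  have hq : ∀ n, q (n + 1) = nx (q n) := fun n => Function.iterate_succ_apply' _ _ _
  let τ : ℕ → E → List (E × V) := fun n => (q n).1.1
  let ho' : ℕ → E := fun n => (q n).1.2.1
  let A : ℕ → E := fun n => na (q n)
  have hτ : ∀ n, τ (n + 1) = Function.update (τ n) (A n) (nm (q n)) := by
    intro n; simp only [τ, hq]; rfl
  have hM : ∀ n m, n < m → A n ∈ (q m).1.2.2 := by
    intro n m hnm
    induction m with
    | zero => omega
    | succ m ih =>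
      rw [hq]
      show A n ∈ insert (na (q m)) (q m).1.2.2
      rcases Nat.lt_succ_iff_lt_or_eq.1 hnm with h | rfl
      · exact Finset.mem_insert_of_mem (ih h)
      · exact Finset.mem_insert_self _ _
  have hA : ∀ n m, n < m → A n ≠ A m := by
    intro n m hnm heq
    have := hM n m hnm
    rw [heq] at this
    exact h2 (q m) this
  have hG : ∀ n, Good i s X (τ n) (ho' n) := fun n => (q n).2
  have hconst : ∀ a n, (∀ m, n ≤ m → A m ≠ a) → ∀ m, n ≤ m → τ m a = τ n a := by
    intro a n hn m hm
    induction m, hm using Nat.le_induction with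
    | base => rfl
    | succ m hm ih => rw [hτ, Function.update_of_ne (hn m hm).symm, ih]
  have hev : ∀ a, ∃ N, ∀ m, N ≤ m → τ m a = τ N a := by
    intro a
    by_cases ha : ∃ n, A n = a
    · obtain ⟨n, rfl⟩ := ha
      exact ⟨n + 1, hconst _ _ fun m hm => (hA n m hm).symm⟩
    · push Not at ha
      exact ⟨0, hconst _ _ fun m _ => ha m⟩
  choose N hN using hev
  let ω : E → List (E × V) := fun a => τ (N a) a
  have hω : ∀ a m, N a ≤ m → τ m a = ω a := fun a m hm => hN a m hm
  have hωA : ∀ n, ω (A n) = nm (q n) := by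
    intro n
    have := hconst (A n) (n + 1) (fun m hm => (hA n m hm).symm) (max (n + 1) (N (A n)))
      (le_max_left _ _)
    rw [hω _ _ (le_max_right _ _), hτ] at this
    simpa using this
  have hωn : ∀ a, (∀ n, A n ≠ a) → ∀ n, τ n a = ω a := by
    intro a ha n
    have e1 := hconst a 0 (fun m _ => ha m) n (Nat.zero_le _)
    have e2 := hconst a 0 (fun m _ => ha m) (N a) (Nat.zero_le _)
    rw [e1, ← e2]
  refine ⟨ω, ⟨?_, ?_, ?_⟩, ?_, ?_⟩
  · intro a ha; exact (hG (N a)).head a ha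
  · intro a ha; exact (hG (N a)).nodup a ha
  · intro a ha b hb g hg hg'
    have := (hG (max (N a) (N b))).disj a ha b hb g
    rw [hω a _ (le_max_left _ _), hω b _ (le_max_right _ _)] at this
    exact this hg hg'
  · intro a ha; exact (hG (N a)).inX a ha
  · intro c hc
    by_cases hch : ∃ n, ho' n = c
    · obtain ⟨n, rfl⟩ := hch
      exact ⟨A n, h1 (q n), by rw [hωA]; exact h4 (q n)⟩
    · push Not at hch
      obtain ⟨a, ha, hca⟩ := (hG 0).cover c hc (hch 0).symm
      by_cases hm : ∃ n, A n = a
      · obtain ⟨n, rfl⟩ := hm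
        obtain ⟨b, hb, hcb⟩ := (hG (n + 1)).cover c hc (hch (n + 1)).symm
        have hca' : c ∈ eds (τ n (A n)) := by
          have : ∀ m, m ≤ n → τ m (A n) = τ 0 (A n) := by
            intro m hm
            induction m with
            | zero => rfl
            | succ m ih =>
              rw [hτ, Function.update_of_ne (hA m n hm).symm, ih (by omega)]
          rw [this n le_rfl]; exact hca
        by_cases hbA : b = A n
        · subst hbA
          refine ⟨A n, ha, ?_⟩
          rw [hτ, Function.update_self] at hcb
          rw [hωA]; exact hcb
        · rw [hτ, Function.update_of_ne hbA] at hcb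
          exact absurd ((hG n).disj b hb (A n) ha c hcb hca') hbA
      · push Not at hm
        exact ⟨a, ha, by rw [← hωn a hm 0]; exact hca⟩

end LC

namespace LC

variable {V : Type u} {E : Type v}

def Linked (i : E → Sym2 V) (T : Set V) (s : V) : Prop := ∃ p, Sys i s (T \ {s}) p

theorem Pre.congr {i j : E → Sym2 V} {s : V} {p : E → List (E × V)} (h : Pre i s p)
    (hc : cut j {s} = cut i {s}) : Pre j s p := by
  refine ⟨?_, ?_, ?_⟩ <;> rw [hc]
  · exact h.head
  · exact h.nodup
  · exact h.disj

theorem Pre.init_head {i : E → Sym2 V} {s : V} {p : E → List (E × V)} (h : Pre i s p)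
    {b g : E} {d : V} {l1 l2 : List (E × V)} (hb : b ∈ cut i {s}) (hg : g ∉ cut i {s})
    (hp : p b = l1 ++ (g, d) :: l2) : ∃ z l1', l1 = (b, z) :: l1' := by
  obtain ⟨z, l, hz⟩ := h.head b hb
  rw [hz] at hp
  cases l1 with
  | nil => simp at hp; exact absurd (hp.1.1 ▸ hb) hg
  | cons q l1' => simp at hp; exact ⟨z, l1', by rw [hp.1]⟩

open Classical in
theorem Pre.upd {i : E → Sym2 V} {s : V} {p : E → List (E × V)} (h : Pre i s p)
    {b : E} {m : List (E × V)} (hh : ∃ z l, m = (b, z) :: l) (hn : (eds m).Nodup)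
    (hd : ∀ a ∈ cut i {s}, a ≠ b → ∀ g ∈ eds m, g ∉ eds (p a)) :
    Pre i s (Function.update p b m) := by
  have e1 : Function.update p b m b = m := by simp
  have e2 : ∀ c, c ≠ b → Function.update p b m c = p c := by
    intro c hb; simp [Function.update_of_ne hb]
  refine ⟨?_, ?_, ?_⟩
  · intro a ha
    by_cases hab : a = b
    · rw [hab, e1]; exact hh
    · rw [e2 a hab]; exact h.head a ha
  · intro a ha
    by_cases hab : a = b
    · rw [hab, e1]; exact hn
    · rw [e2 a hab]; exact h.nodup a ha
  · intro a ha a' ha' g hg hg'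
    by_cases hab : a = b <;> by_cases hab' : a' = b
    · rw [hab, hab']
    · rw [hab, e1] at hg; rw [e2 a' hab'] at hg'
      exact absurd hg' (hd a' ha' hab' g hg)
    · rw [hab', e1] at hg'; rw [e2 a hab] at hg
      exact absurd hg (hd a ha hab g hg')
    · rw [e2 a hab] at hg; rw [e2 a' hab'] at hg'
      exact h.disj a ha a' ha' g hg hg'

def Tr (i : E → Sym2 V) (s : V) (B : Set V) (p : E → List (E × V)) : Prop :=
  ∀ a ∈ cut i {s}, ∀ c g d, (c, g, d) ∈ dts s (p a) → c ∉ B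

theorem trunc {i : E → Sym2 V} {s : V} {B : Set V} {p : E → List (E × V)} (h : Sys i s B p)
    (hs : s ∉ B) : ∃ p', Sys i s B p' ∧ Tr i s B p' ∧
      ∀ a ∈ cut i {s}, ∀ g ∈ eds (p' a), g ∈ eds (p a) := by
  have key : ∀ a, ∃ m, a ∈ cut i {s} → (∃ r, p a = m ++ r) ∧ (∃ b ∈ B, W i s m b) ∧
      ∀ c g d, (c, g, d) ∈ dts s m → c ∉ B := by
    intro a
    by_cases ha : a ∈ cut i {s}
    · obtain ⟨b, hb, hW⟩ := h.walk a ha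
      obtain ⟨l1, l2, b', h1, h2, h3, h4⟩ := trunc_first hW hb
      exact ⟨l1, fun _ => ⟨⟨l2, h1⟩, ⟨b', h2, h3⟩, h4⟩⟩
    · exact ⟨[], fun h => absurd h ha⟩
  choose p' hp' using key
  have hsub : ∀ a ∈ cut i {s}, ∀ g ∈ eds (p' a), g ∈ eds (p a) := by
    intro a ha g hg
    obtain ⟨⟨r, hr⟩, -, -⟩ := hp' a ha
    rw [hr]; simp [hg]
  refine ⟨p', ⟨⟨?_, ?_, ?_⟩, fun a ha => (hp' a ha).2.1⟩, fun a ha => (hp' a ha).2.2, hsub⟩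
  · intro a ha
    obtain ⟨⟨r, hr⟩, ⟨b, hb, hW⟩, -⟩ := hp' a ha
    obtain ⟨z, l, hz⟩ := h.head a ha
    cases hpa : p' a with
    | nil => rw [hpa] at hW; exact absurd ((hW : s = b) ▸ hb) hs
    | cons q m =>
      rw [hz, hpa] at hr
      simp at hr
      exact ⟨z, m, by rw [hr.1]⟩
  · intro a ha
    obtain ⟨⟨r, hr⟩, -, -⟩ := hp' a ha
    have := h.nodup a ha
    rw [hr, eds_append, List.nodup_append] at this
    exact this.1
  · intro a ha a' ha' g hg hg'
    exact h.disj a ha a' ha' g (hsub a ha g hg) (hsub a' ha' g hg')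

def Once (i : E → Sym2 V) (s : V) (X : Set V) (m : List (E × V)) : Prop :=
  ∃ l1 g x y l2 b, m = l1 ++ (g, y) :: l2 ∧ W i s l1 x ∧ x ∈ X ∧ W i y l2 b ∧ i g = s(x, y) ∧
    (∀ z ∈ vts l1, z ∈ X) ∧ y ∉ X ∧ ∀ z ∈ vts l2, z ∉ X

structure Tight (i : E → Sym2 V) (T : Set V) (s : V) (X : Set V) : Prop where
  mem : s ∈ X
  sep : ∀ t ∈ T, t ∈ X → t = s
  ex : ∃ p, Sys i s (T \ {s}) p ∧ (∀ a ∈ cut i {s}, Once i s X (p a)) ∧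
    ∀ g ∈ cut i X, ∃ a ∈ cut i {s}, g ∈ eds (p a)

/-- no inward darts and full covering give tightness -/
theorem tight_of {i : E → Sym2 V} {T : Set V} {s : V} {X : Set V} {p : E → List (E × V)}
    (h : Sys i s (T \ {s}) p) (hs : s ∈ X) (hX : ∀ b ∈ T \ {s}, b ∉ X)
    (hin : ∀ g x y, (x, g, y) ∈ Used i s p → x ∉ X → y ∉ X)
    (hc : ∀ g ∈ cut i X, ∃ a ∈ cut i {s}, g ∈ eds (p a)) : Tight i T s X := by
  refine ⟨hs, ?_, p, h, ?_, hc⟩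
  · intro t ht htX
    by_contra hne
    exact hX t ⟨ht, hne⟩ htX
  · intro a ha
    obtain ⟨b, hb, hW⟩ := h.walk a ha
    obtain ⟨l1, g, z, l2, c, h1, h2, h3, h4, h5, h6, h7, h8⟩ := split_once hW hs (hX b hb)
      (fun c g d hm => hin g c d ⟨a, ha, hm⟩)
    exact ⟨l1, g, c, z, l2, b, h1, h2, h3, h4, h5, h6, h7, h8⟩

theorem ends_in {i : E → Sym2 V} {s x : V} {X : Set V} {l : List (E × V)} (h : W i s l x)
    (hs : s ∈ X) (hl : ∀ z ∈ vts l, z ∈ X) {g : E} (hg : g ∈ eds l) : ∀ z ∈ i g, z ∈ X := by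
  obtain ⟨c, d, hd⟩ := (mem_eds_iff (x := s)).1 hg
  rw [(dts_inc h hd).1]
  have hd' := hl d (mem_vts_of_dts hd)
  have hc : c ∈ X := by
    rcases src_mem_of_dts hd with h | h
    · exact h ▸ hs
    · exact hl c h
  intro z hz
  rw [Sym2.mem_iff] at hz
  rcases hz with rfl | rfl <;> assumption

theorem cut_ends {i : E → Sym2 V} {X : Set V} {g : E} (hg : g ∈ cut i X) :
    ¬ (∀ z ∈ i g, z ∈ X) ∧ ¬ (∀ z ∈ i g, z ∈ Xᶜ) := by
  obtain ⟨x, y, h, hx, hy⟩ := hg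
  rw [h]
  exact ⟨fun hh => hy (hh y (by simp)), fun hh => hh x (by simp) hx⟩

theorem in_out {i : E → Sym2 V} {X : Set V} {g : E} (h1 : ∀ z ∈ i g, z ∈ X)
    (h2 : ∀ z ∈ i g, z ∈ Xᶜ) : False := by
  induction hg : i g with
  | h x y =>
    rw [hg] at h1 h2
    exact h2 x (by simp) (h1 x (by simp))

open Classical in
noncomputable def con (X : Set V) (s : V) : V → V := fun z => if z ∈ X then s else z

noncomputable def incX (i : E → Sym2 V) (X : Set V) (s : V) : E → Sym2 V :=
  fun g => Sym2.map (con X s) (i g)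

theorem incX_out {i : E → Sym2 V} {X : Set V} {s : V} {g : E} (h : ∀ z ∈ i g, z ∈ Xᶜ) :
    incX i X s g = i g := by
  unfold incX
  induction hg : i g with
  | h a b =>
    rw [hg] at h
    have ha : a ∉ X := h a (by simp)
    have hb : b ∉ X := h b (by simp)
    simp [con, ha, hb]

theorem incX_cut {i : E → Sym2 V} {X : Set V} {s : V} {g : E} {x y : V} (h : i g = s(x, y))
    (hx : x ∈ X) (hy : y ∉ X) : incX i X s g = s(s, y) := by
  simp [incX, h, con, hx, hy]

theorem con_mem {X : Set V} {s z : V} : con X s z ∈ X → con X s z = s := by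
  unfold con; split_ifs with h
  · intro; rfl
  · intro h2; exact absurd h2 h

theorem con_out {X : Set V} {s z : V} (hs : s ∈ X) (h : con X s z ∉ X) : con X s z = z := by
  unfold con at *; split_ifs with h1
  · rw [if_pos h1] at h; exact absurd hs h
  · rfl

theorem cut_incX {i : E → Sym2 V} {X : Set V} {s : V} (hs : s ∈ X) :
    cut (incX i X s) {s} = cut i X := by
  ext g
  constructor
  · intro hg
    obtain ⟨y, hy, hys⟩ := mem_cut_single.1 hg
    induction hgi : i g with
    | h a b =>
      simp only [incX, hgi, Sym2.map_mk, Sym2.eq_iff] at hy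
      rw [mem_cut_iff hgi]
      by_cases ha : a ∈ X <;> by_cases hb : b ∈ X <;> simp [con, ha, hb] at hy ⊢
      · exact hys hy.symm
      · rcases hy with ⟨h, -⟩ | ⟨-, h⟩
        · exact ha (h ▸ hs)
        · exact hb (h ▸ hs)
  · rintro ⟨x, y, hi, hx, hy⟩
    exact mem_cut_single.2 ⟨y, incX_cut hi hx hy, fun h => hy (h ▸ hs)⟩

theorem stage2 {i : E → Sym2 V} {T : Set V} {s : V} {X : Set V} {p : E → List (E × V)} {f : E}
    {v w : V} (ho : noodd i T) (h : Sys i s (T \ {s}) p) (hs : s ∈ X) (hv : v ∈ X) (hw : w ∉ X)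
    (hX : ∀ b ∈ T \ {s}, b ∉ X) (hf : i f = s(v, w))
    (hfu : ∀ a ∈ cut i {s}, f ∉ eds (p a))
    (hin : ∀ g x y, (x, g, y) ∈ Used i s p → x ∉ X → y ∉ X)
    (hc : ∀ g ∈ cut i X, g ≠ f → ∃ a ∈ cut i {s}, g ∈ eds (p a)) :
    ∃ Y, Tight i T s Y ∧ v ∈ Y := by
  have hsB : s ∉ T \ {s} := fun h => h.2 rfl
  have hfX : f ∈ cut i X := mem_cut_of hf hv hw
  have hsep : ∀ t ∈ T, t ∈ X → t = s := by
    intro t ht htX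
    by_contra hne
    exact hX t ⟨ht, hne⟩ htX
  have honce : ∀ a ∈ cut i {s}, ∃ l1 g x y l2 b, p a = l1 ++ (g, y) :: l2 ∧ W i s l1 x ∧ x ∈ X ∧
      W i y l2 b ∧ i g = s(x, y) ∧ (∀ z ∈ vts l1, z ∈ X) ∧ y ∉ X ∧ (∀ z ∈ vts l2, z ∉ X) ∧
      b ∈ T \ {s} := by
    intro a ha
    obtain ⟨b, hb, hW⟩ := h.walk a ha
    obtain ⟨l1, g, z, l2, c, h1, h2, h3, h4, h5, h6, h7, h8⟩ := split_once hW hs (hX b hb)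
      (fun c g d hm => hin g c d ⟨a, ha, hm⟩)
    exact ⟨l1, g, c, z, l2, b, h1, h2, h3, h4, h5, h6, h7, h8, hb⟩
  -- tails
  have hq : ∀ c, ∃ m, (c = f → m = [(f, w)]) ∧ (c ∈ cut i X → c ≠ f → ∃ a ∈ cut i {s},
      ∃ l1 x y l2 b, m = (c, y) :: l2 ∧ p a = l1 ++ (c, y) :: l2 ∧ W i s l1 x ∧ x ∈ X ∧
      W i y l2 b ∧ i c = s(x, y) ∧ (∀ z ∈ vts l1, z ∈ X) ∧ y ∉ X ∧ (∀ z ∈ vts l2, z ∉ X) ∧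
      b ∈ T \ {s}) := by
    intro c
    by_cases hcf : c = f
    · exact ⟨[(f, w)], fun _ => rfl, fun _ h => absurd hcf h⟩
    by_cases hcX : c ∈ cut i X
    · obtain ⟨a, ha, hca⟩ := hc c hcX hcf
      obtain ⟨l1, g, x, y, l2, b, h1, h2, h3, h4, h5, h6, h7, h8, h9⟩ := honce a ha
      have hcg : c = g := by
        rw [h1] at hca
        simp at hca
        rcases hca with hca | hca | hca
        · exact absurd hcX (not_cut_of_in h2 hs h6 hca)
        · exact hca
        · exact absurd hcX (not_cut_of_out h4 h7 h8 hca)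
      subst hcg
      exact ⟨(c, y) :: l2, fun h => absurd h hcf, fun _ _ =>
        ⟨a, ha, l1, x, y, l2, b, rfl, h1, h2, h3, h4, h5, h6, h7, h8, h9⟩⟩
    · exact ⟨[], fun h => absurd h hcf, fun h => absurd h hcX⟩
  choose q hqf hq using hq
  have hqf : q f = [(f, w)] := hqf f rfl
  have hcutX := cut_incX (i := i) (s := s) hs
  have hqp : ∀ c ∈ cut i X, c ≠ f → ∃ a ∈ cut i {s}, ∀ g ∈ eds (q c), g ∈ eds (p a) := by
    intro c hcX hcf
    obtain ⟨a, ha, l1, x, y, l2, b, h0, h1, -⟩ := hq c hcX hcf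
    refine ⟨a, ha, fun g hg => ?_⟩
    rw [h0] at hg; rw [h1]; simp at hg ⊢; tauto
  have hconf : Conf (incX i X s) s (T \ {s}) q f w := by
    refine ⟨⟨?_, ?_, ?_⟩, ?_, ?_, ?_⟩
    · rw [hcutX]
      intro c hcX
      by_cases hcf : c = f
      · exact ⟨w, [], by rw [hcf, hqf]⟩
      · obtain ⟨a, ha, l1, x, y, l2, b, h0, -⟩ := hq c hcX hcf
        exact ⟨y, l2, h0⟩
    · rw [hcutX]
      intro c hcX
      by_cases hcf : c = f
      · rw [hcf, hqf]; simp
      · obtain ⟨a, ha, l1, x, y, l2, b, h0, h1, -⟩ := hq c hcX hcf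
        have := h.nodup a ha
        rw [h1, eds_append, List.nodup_append] at this
        rw [h0]; exact this.2.1
    · rw [hcutX]
      intro c hcX c' hcX' g hg hg'
      by_cases hcf : c = f <;> by_cases hcf' : c' = f
      · rw [hcf, hcf']
      · rw [hcf, hqf] at hg
        simp at hg
        obtain ⟨a, ha, hsub⟩ := hqp c' hcX' hcf'
        exact absurd (hsub g hg') (hg ▸ hfu a ha)
      · rw [hcf', hqf] at hg'
        simp at hg'
        obtain ⟨a, ha, hsub⟩ := hqp c hcX hcf
        exact absurd (hsub g hg) (hg' ▸ hfu a ha)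
      · obtain ⟨a, ha, l1, x, y, l2, b, h0, h1, h2, h3, h4, h5, h6, h7, h8, -⟩ := hq c hcX hcf
        obtain ⟨a', ha', l1', x', y', l2', b', h0', h1', -⟩ := hq c' hcX' hcf'
        have e1 : g ∈ eds (p a) := by rw [h1]; rw [h0] at hg; simp at hg ⊢; tauto
        have e2 : g ∈ eds (p a') := by rw [h1']; rw [h0'] at hg'; simp at hg' ⊢; tauto
        obtain rfl := h.disj a ha a' ha' g e1 e2
        have : c' ∈ eds (p a) := by rw [h1']; simp
        rw [h1] at this
        simp at this
        rcases this with hca | hca | hca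
        · exact absurd hcX' (not_cut_of_in h2 hs h6 hca)
        · exact hca.symm
        · exact absurd hcX' (not_cut_of_out h4 h7 h8 hca)
    · rw [hcutX]; exact hfX
    · rw [hqf]; exact ⟨incX_cut hf hv hw, fun h => hw (h ▸ hs), rfl⟩
    · rw [hcutX]
      intro c hcX hcf
      obtain ⟨a, ha, l1, x, y, l2, b, h0, h1, h2, h3, h4, h5, h6, h7, h8, h9⟩ := hq c hcX hcf
      refine ⟨b, h9, ?_⟩
      rw [h0]
      refine ⟨incX_cut h5 h3 h7, fun h => h7 (h ▸ hs), ?_⟩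
      refine W_congr ?_ h4
      intro g hg
      exact (incX_out (ends_in (X := Xᶜ) h4 h7 h8 hg)).symm
  rcases aug hconf hsB with ⟨τ, hτ⟩ | ⟨Z, hsZ, hwZ, hBZ, hZ1, hZ2⟩
  · -- success
    refine ⟨X, ?_, hv⟩
    -- σ from p
    have hσ : ∀ a, ∃ m, a ∈ cut i {s} → ∃ l1 g x y l2, m = l1 ++ [(g, y)] ∧ 
      p a = l1 ++ (g, y) :: l2 ∧ W i s l1 x ∧ x ∈ X ∧
      i g = s(x, y) ∧ (∀ z ∈ vts l1, z ∈ X) ∧ y ∉ X ∧ (∀ e ∈ eds l2, e ∉ cut i X) := by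
      intro a
      by_cases ha : a ∈ cut i {s}
      · obtain ⟨l1, g, x, y, l2, b, h1, h2, h3, h4, h5, h6, h7, h8, h9⟩ := honce a ha
        exact ⟨l1 ++ [(g, y)], fun _ => ⟨l1, g, x, y, l2, rfl, h1, h2, h3, h5, h6, h7,
          fun e he => not_cut_of_out h4 h7 h8 he⟩⟩
      · exact ⟨[], fun h => absurd h ha⟩
    choose σ hσ using hσ
    have hσp : ∀ a ∈ cut i {s}, ∃ r, p a = σ a ++ r := by
      intro a ha
      obtain ⟨l1, g, x, y, l2, h0, h1, -⟩ := hσ a ha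
      exact ⟨l2, by rw [h0, h1]; simp⟩
    have hσs : ∀ a ∈ cut i {s}, ∀ g ∈ eds (σ a), g ∈ eds (p a) := by
      intro a ha g hg
      obtain ⟨r, hr⟩ := hσp a ha
      rw [hr]; simp [hg]
    have hgood : Good i s X σ f := by
      refine ⟨⟨?_, ?_, ?_⟩, ?_, ?_, hfX, fun a ha hfa => hfu a ha (hσs a ha f hfa)⟩
      · intro a ha
        obtain ⟨l1, g, x, y, l2, h0, h1, -⟩ := hσ a ha
        obtain ⟨z, l, hz⟩ := h.head a ha
        rw [hz] at h1
        cases l1 with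
        | nil => simp at h1; exact ⟨y, [], by rw [h0]; simp [h1.1.1]⟩
        | cons c l1 => simp at h1; exact ⟨z, l1 ++ [(g, y)], by rw [h0]; simp [h1.1]⟩
      · intro a ha
        obtain ⟨r, hr⟩ := hσp a ha
        have := h.nodup a ha
        rw [hr, eds_append, List.nodup_append] at this
        exact this.1
      · intro a ha a' ha' g hg hg'
        exact h.disj a ha a' ha' g (hσs a ha g hg) (hσs a' ha' g hg')
      · intro a ha
        obtain ⟨l1, g, x, y, l2, h0, h1, h2, h3, h5, h6, h7, h8⟩ := hσ a ha
        exact ⟨l1, g, x, y, h0, h2, h6, h5, h7⟩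
      · intro c hcX hcf
        obtain ⟨a, ha, hca⟩ := hc c hcX hcf
        refine ⟨a, ha, ?_⟩
        obtain ⟨l1, g, x, y, l2, h0, h1, h2, h3, h5, h6, h7, h8⟩ := hσ a ha
        rw [h1] at hca; rw [h0]
        simp at hca ⊢
        rcases hca with hca | hca | hca
        · exact Or.inl hca
        · exact Or.inr hca
        · exact absurd hcX (h8 c hca)
    obtain ⟨σ', hpre, hinX, hcov⟩ := pl ho hs hsep hgood
    -- tails of τ
    have htail : ∀ c ∈ cut i X, ∀ x y, i c = s(x, y) → x ∈ X → y ∉ X → ∃ l b, τ c = (c, y) :: l ∧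
        b ∈ T \ {s} ∧ W i y l b ∧ ∀ z ∈ vts l, z ∉ X := by
      intro c hcX x y hi hx hy
      have hcX' : c ∈ cut (incX i X s) {s} := by rw [hcutX]; exact hcX
      obtain ⟨z, l, hz⟩ := hτ.head c hcX'
      obtain ⟨b, hb, hW⟩ := hτ.walk c hcX'
      rw [hz] at hW
      have hzy : y = z := by
        have := hW.1
        simp only [incX_cut hi hx hy, Sym2.congr_right] at this
        exact this
      subst hzy
      have hd : ∀ c' g d, (c', g, d) ∈ dts y l → c' ∉ X ∧ d ∉ X ∧ i g = s(c', d) := by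
        intro c' g d hm
        obtain ⟨hi', hne⟩ := dts_inc hW.2.2 hm
        have hgn : g ∉ cut (incX i X s) {s} := by
          intro hg
          have hg1 : g ∈ eds (τ c) := by rw [hz]; simp [mem_eds_of_dts hm]
          obtain rfl := hτ.eq_of_cut hcX' hg hg1
          have := hτ.nodup c hcX'
          rw [hz, eds_cons, List.nodup_cons] at this
          exact this.1 (mem_eds_of_dts hm)
        have hc's : c' ≠ s := fun h0 =>
          hgn (mem_cut_of (by rw [hi', h0]) rfl (fun h => hne (h0.trans h.symm)))
        have hds : d ≠ s := fun h0 =>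
          hgn (mem_cut_of (hi'.trans Sym2.eq_swap) h0 (fun h => hne (h.trans h0.symm)))
        induction hgi : i g with
        | h a1 a2 =>
          simp only [incX, hgi, Sym2.map_mk, Sym2.eq_iff] at hi'
          rcases hi' with ⟨rfl, rfl⟩ | ⟨rfl, rfl⟩
          · have k1 : con X s a1 ∉ X := fun h => hc's (con_mem h)
            have k2 : con X s a2 ∉ X := fun h => hds (con_mem h)
            have j1 := con_out hs k1
            have j2 := con_out hs k2
            refine ⟨k1, k2, ?_⟩
            rw [j1, j2]
          · have k1 : con X s a1 ∉ X := fun h => hds (con_mem h)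
            have k2 : con X s a2 ∉ X := fun h => hc's (con_mem h)
            have j1 := con_out hs k1
            have j2 := con_out hs k2
            refine ⟨k2, k1, ?_⟩
            rw [j1, j2, Sym2.eq_swap]
      refine ⟨l, b, hz, hb, ?_, ?_⟩
      · refine W_congr ?_ hW.2.2
        intro g hg
        obtain ⟨c', d, hm⟩ := (mem_eds_iff (x := y)).1 hg
        rw [(hd _ _ _ hm).2.2, (dts_inc hW.2.2 hm).1]
      · intro z hz
        obtain ⟨c', g, hm⟩ := vts_dts (x := y) hz
        exact (hd _ _ _ hm).2.1
    -- combine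
    have hcomb : ∀ a, ∃ m, a ∈ cut i {s} → ∃ l1 c x y l b, m = l1 ++ (c, y) :: l ∧
        σ' a = l1 ++ [(c, y)] ∧ τ c = (c, y) :: l ∧ W i s l1 x ∧ x ∈ X ∧ W i y l b ∧ i c = s(x, y) ∧
        (∀ z ∈ vts l1, z ∈ X) ∧ y ∉ X ∧ (∀ z ∈ vts l, z ∉ X) ∧ b ∈ T \ {s} := by
      intro a
      by_cases ha : a ∈ cut i {s}
      · obtain ⟨l1, c, x, y, hI⟩ := hinX a ha
        have hx := hI.end_in hs
        obtain ⟨l, b, h1, h2, h3, h4⟩ := htail c (mem_cut_of hI.inc hx hI.out) x y hI.inc hx hI.out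
        exact ⟨l1 ++ (c, y) :: l, fun _ => ⟨l1, c, x, y, l, b, rfl, hI.eq, h1, hI.walk, hx, h3,
          hI.inc, hI.sub, hI.out, h4, h2⟩⟩
      · exact ⟨[], fun h => absurd h ha⟩
    choose r hr using hcomb
    have hcutne : ∀ {g}, g ∈ cut i X → ¬ (∀ z ∈ i g, z ∈ Xᶜ) := fun h => (cut_ends h).2
    refine ⟨hs, hsep, r, ⟨⟨?_, ?_, ?_⟩, ?_⟩, ?_, ?_⟩
    · intro a ha
      obtain ⟨l1, c, x, y, l, b, h0, h1, -⟩ := hr a ha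
      obtain ⟨z, k, hz⟩ := hpre.head a ha
      have : r a = σ' a ++ l := by rw [h0, h1]; simp
      exact ⟨z, k ++ l, by rw [this, hz]; rfl⟩
    · intro a ha
      obtain ⟨l1, c, x, y, l, b, h0, h1, h2, h3, h4, h5, h6, h7, h8, h9, h10⟩ := hr a ha
      have : r a = σ' a ++ l := by rw [h0, h1]; simp
      rw [this, eds_append, List.nodup_append]
      have hcX : c ∈ cut i X := mem_cut_of h6 h4 h8
      refine ⟨hpre.nodup a ha, ?_, ?_⟩
      · have := hτ.nodup c (by rw [hcutX]; exact hcX)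
        rw [h2, eds_cons, List.nodup_cons] at this
        exact this.2
      · intro g hg g' hg' heq
        subst heq
        have hout := ends_in (X := Xᶜ) h5 h8 h9 hg'
        rw [h1] at hg
        simp at hg
        rcases hg with hg | rfl
        · exact in_out (ends_in h3 hs h7 hg) hout
        · exact hcutne hcX hout
    · intro a ha a' ha' g hg hg'
      obtain ⟨l1, c, x, y, l, b, h0, h1, h2, h3, h4, h5, h6, h7, h8, h9, h10⟩ := hr a ha
      obtain ⟨l1', c', x', y', l', b', h0', h1', h2', h3', h4', h5', h6', h7', h8', h9', h10'⟩ :=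
        hr a' ha'
      have e : r a = σ' a ++ l := by rw [h0, h1]; simp
      have e' : r a' = σ' a' ++ l' := by rw [h0', h1']; simp
      have hcX : c ∈ cut i X := mem_cut_of h6 h4 h8
      have hcX' : c' ∈ cut i X := mem_cut_of h6' h4' h8'
      rw [e, eds_append, List.mem_append] at hg
      rw [e', eds_append, List.mem_append] at hg'
      rcases hg with hg | hg <;> rcases hg' with hg' | hg'
      · exact hpre.disj a ha a' ha' g hg hg'
      · exfalso
        have hout := ends_in (X := Xᶜ) h5' h8' h9' hg'
        rw [h1] at hg
        simp at hg
        rcases hg with hg | rfl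
        · exact in_out (ends_in h3 hs h7 hg) hout
        · exact hcutne hcX hout
      · exfalso
        have hout := ends_in (X := Xᶜ) h5 h8 h9 hg
        rw [h1'] at hg'
        simp at hg'
        rcases hg' with hg' | rfl
        · exact in_out (ends_in h3' hs h7' hg') hout
        · exact hcutne hcX' hout
      · have : c = c' := hτ.disj c (by rw [hcutX]; exact hcX) c' (by rw [hcutX]; exact hcX') g
          (by rw [h2]; simp [hg]) (by rw [h2']; simp [hg'])
        subst this
        exact hpre.disj a ha a' ha' c (by rw [h1]; simp) (by rw [h1']; simp)
    · intro a ha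
      obtain ⟨l1, c, x, y, l, b, h0, h1, h2, h3, h4, h5, h6, h7, h8, h9, h10⟩ := hr a ha
      refine ⟨b, h10, ?_⟩
      rw [h0, W_append]
      exact ⟨x, h3, h6, fun h => h8 (h ▸ h4), h5⟩
    · intro a ha
      obtain ⟨l1, c, x, y, l, b, h0, h1, h2, h3, h4, h5, h6, h7, h8, h9, h10⟩ := hr a ha
      exact ⟨l1, c, x, y, l, b, h0, h3, h4, h5, h6, h7, h8, h9⟩
    · intro c hcX
      obtain ⟨a, ha, hca⟩ := hcov c hcX
      refine ⟨a, ha, ?_⟩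
      obtain ⟨l1, c', x, y, l, b, h0, h1, -⟩ := hr a ha
      rw [h0]; rw [h1] at hca; simp at hca ⊢; tauto
  · -- failure
    refine ⟨X ∪ Z, tight_of h (Or.inl hs) ?_ ?_ ?_, Or.inl hv⟩
    · rintro b hb (hbX | hbZ)
      · exact hX b hb hbX
      · exact hBZ b hb hbZ
    · intro g c d hu hcn hdn
      have hcX : c ∉ X := fun h => hcn (Or.inl h)
      have hcZ : c ∉ Z := fun h => hcn (Or.inr h)
      have hdX : d ∉ X := hin g c d hu hcX
      have hdZ : d ∈ Z := hdn.resolve_left hdX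
      obtain ⟨a, ha, hd⟩ := hu
      obtain ⟨l1, g0, x, y, l2, b, h1, h2, h3, h4, h5, h6, h7, h8, h9⟩ := honce a ha
      have hg0X : g0 ∈ cut i X := mem_cut_of h5 h3 h7
      have hg0a : g0 ∈ eds (p a) := by rw [h1]; simp
      have hg0f : g0 ≠ f := fun h => hfu a ha (h ▸ hg0a)
      obtain ⟨a', ha', l1', x', y', l2', b', h0', h1', h2', h3', h4', h5', h6', h7', h8', h9'⟩ :=
        hq g0 hg0X hg0f
      obtain rfl := h.disj a ha a' ha' g0 hg0a (by rw [h1']; simp)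
      rw [h1', dts_append h2', dts_cons, List.mem_append, List.mem_cons] at hd
      rcases hd with hd | hd | hd
      · rcases src_mem_of_dts hd with h | h
        · exact hcX (h ▸ hs)
        · exact hcX (h6' c h)
      · simp only [Prod.mk.injEq] at hd
        exact hcX (hd.1 ▸ h3')
      · refine hZ2 g c d ⟨g0, by rw [hcutX]; exact hg0X, ?_⟩ hcZ hdZ
        rw [h0', dts_cons]; exact List.mem_cons_of_mem _ hd
    · rintro g ⟨x, y, hi, hx, hy⟩
      have hyX : y ∉ X := fun h => hy (Or.inl h)
      have hyZ : y ∉ Z := fun h => hy (Or.inr h)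
      have hg : ∃ x', x' ∈ Z ∧ incX i X s g = s(x', y) := by
        by_cases hxX : x ∈ X
        · exact ⟨s, hsZ, incX_cut hi hxX hyX⟩
        · refine ⟨x, hx.resolve_left hxX, ?_⟩
          rw [incX_out, hi]
          rw [hi]; intro z hz; rw [Sym2.mem_iff] at hz
          rcases hz with rfl | rfl <;> assumption
      obtain ⟨x', hx', hi'⟩ := hg
      obtain ⟨c, hcX, hd⟩ := hZ1 g x' y hi' hx' hyZ
      rw [hcutX] at hcX
      by_cases hcf : c = f
      · exfalso
        rw [hcf, hqf] at hd
        simp at hd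
        exact hyZ (hd.2.2 ▸ hwZ)
      · obtain ⟨a, ha, hsub⟩ := hqp c hcX hcf
        exact ⟨a, ha, hsub g (mem_eds_of_dts hd)⟩

end LC

namespace LC

variable {V : Type u} {E : Type v}

/-- `j` is obtained from `i` by splitting off `e = tv` and `f = vw` -/
structure IsSplit (i j : E → Sym2 V) (e f : E) (t v w x0 : V) : Prop where
  ie : i e = s(t, v)
  jf0 : i f = s(v, w)
  je : j e = s(t, w)
  jf : j f = s(x0, x0)
  ne : e ≠ f
  wv : w ≠ v
  wt : w ≠ t
  tv : t ≠ v
  rest : ∀ g, g ≠ e → g ≠ f → j g = i g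

theorem mem_cut_loop {i : E → Sym2 V} {X : Set V} {f : E} {x0 : V} (h : i f = s(x0, x0)) :
    f ∉ cut i X := by
  rw [mem_cut_iff h]; tauto

theorem IsSplit.cut_eq {i j : E → Sym2 V} {e f : E} {t v w x0 s : V}
    (h : IsSplit i j e f t v w x0) (ht : t ≠ s) (hv : v ≠ s) (hw : w ≠ s) :
    cut j {s} = cut i {s} ∧ e ∉ cut i {s} ∧ f ∉ cut i {s} := by
  have h1 : e ∉ cut i {s} := not_mem_cut_single h.ie ht hv
  have h2 : f ∉ cut i {s} := not_mem_cut_single h.jf0 hv hw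
  have h3 : e ∉ cut j {s} := not_mem_cut_single h.je ht hw
  have h4 : f ∉ cut j {s} := mem_cut_loop h.jf
  refine ⟨?_, h1, h2⟩
  ext g
  by_cases hge : g = e
  · subst hge; tauto
  by_cases hgf : g = f
  · subst hgf; tauto
  simp only [cut, Set.mem_setOf_eq, h.rest g hge hgf]

theorem no_after {i : E → Sym2 V} {s b t : V} {B : Set V} {m k r : List (E × V)} {e : E}
    (hW : W i s m b) (hm : m = k ++ (e, t) :: r) (ht : t ∈ B)
    (hd : ∀ c g d, (c, g, d) ∈ dts s m → c ∉ B) : r = [] := by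
  cases r with
  | nil => rfl
  | cons q r =>
    exfalso
    subst hm
    obtain ⟨z, h1, h2⟩ := W_append.1 hW
    refine hd t q.1 q.2 ?_ ht
    rw [dts_append h1]; simp

theorem e_last {i : E → Sym2 V} {s t v : V} {B : Set V} {p : E → List (E × V)} {e : E}
    (h : Sys i s B p) (htr : Tr i s B p) (ie : i e = s(t, v)) (ht : t ∈ B) {a : E}
    (ha : a ∈ cut i {s}) (hea : e ∈ eds (p a)) : ∃ m, p a = m ++ [(e, t)] ∧ W i s m v := by
  obtain ⟨c, d, hd⟩ := (mem_eds_iff (x := s)).1 hea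
  obtain ⟨b, hb, hW⟩ := h.walk a ha
  have hi := (dts_inc hW hd).1
  rw [ie, Sym2.eq_iff] at hi
  rcases hi with ⟨rfl, rfl⟩ | ⟨rfl, rfl⟩
  · exact absurd ht (htr a ha _ _ _ hd)
  · obtain ⟨l1, l2, h1, h2, h3⟩ := (mem_dts hW).1 hd
    obtain rfl := no_after hW h1 ht (htr a ha)
    exact ⟨l1, h1, h2⟩

open Classical in
theorem caseB {i j : E → Sym2 V} {T : Set V} {s : V} {e f : E} {t v w x0 : V}
    (hS : IsSplit i j e f t v w x0) (ho : noodd i T) (ht : t ∈ T) (hts : t ≠ s) (hvT : v ∉ T)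
    (hvs : v ≠ s) (hws : w ≠ s) {p : E → List (E × V)} (h0 : Sys i s (T \ {s}) p)
    (hf0 : ∀ a ∈ cut i {s}, f ∉ eds (p a)) :
    Linked j T s ∨ ∃ X, Tight i T s X ∧ v ∈ X := by
  have hsB : s ∉ T \ {s} := fun h => h.2 rfl
  have htB : t ∈ T \ {s} := ⟨ht, hts⟩
  obtain ⟨hcj, he, hf⟩ := hS.cut_eq hts hvs hws
  obtain ⟨p, h, htr, hsub⟩ := trunc h0 hsB
  have hfu : ∀ a ∈ cut i {s}, f ∉ eds (p a) := fun a ha hfa => hf0 a ha (hsub a ha f hfa)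
  clear hf0 h0 hsub
  by_cases heu : ∃ a ∈ cut i {s}, e ∈ eds (p a)
  · obtain ⟨a, ha, hea⟩ := heu
    obtain ⟨m, hm, hmW⟩ := e_last h htr hS.ie htB ha hea
    have hnod := h.nodup a ha
    rw [hm, eds_append, List.nodup_append] at hnod
    have hem : e ∉ eds m := fun h => hnod.2.2 e h e (by simp) rfl
    have hms : ∀ g ∈ eds m, g ∈ eds (p a) := by intro g hg; rw [hm]; simp [hg]
    have hhead : ∃ z l, m = (a, z) :: l := h.init_head ha he hm
    have hpre : Pre i s (Function.update p a m) := h.toPre.upd hhead hnod.1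
      (fun a' ha' hne g hg hg' => hne (h.disj a' ha' a ha g hg' (hms g hg)))
    have e1 : Function.update p a m a = m := by simp
    have e2 : ∀ c, c ≠ a → Function.update p a m c = p c := by
      intro c hb; simp [Function.update_of_ne hb]
    have hes : ∀ c ∈ cut i {s}, e ∉ eds (Function.update p a m c) := by
      intro c hc
      by_cases hca : c = a
      · rw [hca, e1]; exact hem
      · rw [e2 c hca]; exact fun hh => hca (h.disj c hc a ha e hh hea)
    have hsub : ∀ c, ∀ g ∈ eds (Function.update p a m c), g ∈ eds (p c) := by
      intro c g hg
      by_cases hca : c = a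
      · rw [hca, e1] at hg; rw [hca]; exact hms g hg
      · rwa [e2 c hca] at hg
    have hfs : ∀ c ∈ cut i {s}, f ∉ eds (Function.update p a m c) :=
      fun c hc hh => hfu c hc (hsub c f hh)
    have hWj : ∀ c ∈ cut i {s}, ∀ b, W i s (Function.update p a m c) b →
        W j s (Function.update p a m c) b := by
      intro c hc b hW
      refine W_congr ?_ hW
      intro g hg
      exact (hS.rest g (fun h => hes c hc (h ▸ hg)) (fun h => hfs c hc (h ▸ hg))).symm
    have hconf : Conf j s (T \ {s}) (Function.update p a m) a v := by
      refine ⟨hpre.congr hcj, by rw [hcj]; exact ha, ?_, ?_⟩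
      · apply hWj a ha; rw [e1]; exact hmW
      · rw [hcj]
        intro c hc hca
        obtain ⟨b, hb, hW⟩ := h.walk c hc
        refine ⟨b, hb, hWj c hc b ?_⟩
        rw [e2 c hca]; exact hW
    rcases aug hconf hsB with hsucc | ⟨X, hsX, hvX, hBX, h1, h2⟩
    · exact Or.inl hsucc
    right
    have htX : t ∉ X := hBX t htB
    have hUsub : ∀ d, d ∈ Used j s (Function.update p a m) → d ∈ Used i s p := by
      rintro d ⟨c, hc, hd⟩
      rw [hcj] at hc
      refine ⟨c, hc, ?_⟩
      by_cases hca : c = a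
      · rw [hca, e1] at hd; rw [hca, hm, dts_append hmW]; simp [hd]
      · rwa [e2 c hca] at hd
    have hwX : w ∉ X := by
      intro hwX
      obtain ⟨c, hc, hd⟩ := h1 e w t (hS.je.trans Sym2.eq_swap) hwX htX
      rw [hcj] at hc
      exact hes c hc (mem_eds_of_dts hd)
    refine stage2 ho h hsX hvX hwX hBX hS.jf0 hfu ?_ ?_
    · rintro g x y ⟨c, hc, hd⟩ hx
      by_cases hca : c = a
      · rw [hca, hm, dts_append hmW, List.mem_append] at hd
        rcases hd with hd | hd
        · exact h2 g x y ⟨a, by rw [hcj]; exact ha, by rw [e1]; exact hd⟩ hx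
        · simp at hd; exact absurd (hd.1 ▸ hvX) hx
      · exact h2 g x y ⟨c, by rw [hcj]; exact hc, by rw [e2 c hca]; exact hd⟩ hx
    · rintro g ⟨x, y, hi, hx, hy⟩ hgf
      by_cases hge : g = e
      · exact ⟨a, ha, hge ▸ hea⟩
      · obtain ⟨c, hc, hd⟩ := hUsub _ (h1 g x y ((hS.rest g hge hgf).trans hi) hx hy)
        exact ⟨c, hc, mem_eds_of_dts hd⟩
  · push Not at heu
    left
    refine ⟨p, h.toPre.congr hcj, ?_⟩
    rw [hcj]
    intro a ha
    obtain ⟨b, hb, hW⟩ := h.walk a ha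
    refine ⟨b, hb, W_congr ?_ hW⟩
    intro g hg
    exact (hS.rest g (fun h => heu a ha (h ▸ hg)) (fun h => hfu a ha (h ▸ hg))).symm

open Classical in
theorem split {i j : E → Sym2 V} {T : Set V} {s : V} {e f : E} {t v w x0 : V}
    (hS : IsSplit i j e f t v w x0) (ho : noodd i T) (ht : t ∈ T) (hts : t ≠ s) (hvT : v ∉ T)
    (hvs : v ≠ s) (hws : w ≠ s) (hl : Linked i T s) :
    Linked j T s ∨ ∃ X, Tight i T s X ∧ v ∈ X := by
  have hsB : s ∉ T \ {s} := fun h => h.2 rfl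
  have htB : t ∈ T \ {s} := ⟨ht, hts⟩
  obtain ⟨hcj, he, hf⟩ := hS.cut_eq hts hvs hws
  obtain ⟨p0, hp0⟩ := hl
  obtain ⟨p, h, htr, -⟩ := trunc hp0 hsB
  clear hp0 p0
  by_cases hfu : ∃ a ∈ cut i {s}, f ∈ eds (p a)
  swap
  · push Not at hfu
    exact caseB hS ho ht hts hvT hvs hws h hfu
  obtain ⟨b, hb, hfb⟩ := hfu
  obtain ⟨c, d, hd⟩ := (mem_eds_iff (x := s)).1 hfb
  obtain ⟨b', hb', hW⟩ := h.walk b hb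
  have hi := (dts_inc hW hd).1
  obtain ⟨l1, l2, hl, h1, h2⟩ := (mem_dts hW).1 hd
  have hnod := h.nodup b hb
  rw [hl, eds_append, eds_cons, List.nodup_append, List.nodup_cons] at hnod
  obtain ⟨nd1, ⟨hfl2, nd2⟩, hdj⟩ := hnod
  have hfl1 : f ∉ eds l1 := fun h => hdj f h f (by simp) rfl
  have hs1 : ∀ g ∈ eds l1, g ∈ eds (p b) := by intro g hg; rw [hl]; simp [hg]
  have hs2 : ∀ g ∈ eds l2, g ∈ eds (p b) := by intro g hg; rw [hl]; simp [hg]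
  have hhead : ∃ z l, l1 = (b, z) :: l := h.init_head hb hf hl
  rw [hS.jf0, Sym2.eq_iff] at hi
  rcases hi with ⟨rfl, rfl⟩ | ⟨rfl, rfl⟩
  · -- f used as v → w
    let j2 := Function.update i f s(x0, x0)
    have j2f : j2 f = s(x0, x0) := by simp [j2]
    have j2g : ∀ g, g ≠ f → j2 g = i g := by intro g hg; simp [j2, Function.update_of_ne hg]
    have hc2 : cut j2 {s} = cut i {s} := by
      ext g
      by_cases hgf : g = f
      · subst hgf; have := mem_cut_loop (X := {s}) j2f; tauto
      · simp only [cut, Set.mem_setOf_eq, j2g g hgf]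
    let p1 := Function.update p b l1
    have e1 : p1 b = l1 := by simp [p1]
    have e2 : ∀ c, c ≠ b → p1 c = p c := by
      intro c hb; simp [p1, Function.update_of_ne hb]
    have hpre : Pre i s p1 := h.toPre.upd hhead nd1
      (fun a' ha' hne g hg hg' => hne (h.disj a' ha' b hb g hg' (hs1 g hg)))
    have hsub : ∀ c, ∀ g ∈ eds (p1 c), g ∈ eds (p c) := by
      intro c g hg
      by_cases hca : c = b
      · rw [hca, e1] at hg; rw [hca]; exact hs1 g hg
      · rwa [e2 c hca] at hg
    have hfs : ∀ c ∈ cut i {s}, f ∉ eds (p1 c) := by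
      intro c hc hh
      by_cases hca : c = b
      · rw [hca, e1] at hh; exact hfl1 hh
      · rw [e2 c hca] at hh; exact hca (h.disj c hc b hb f hh hfb)
    have hWj : ∀ c ∈ cut i {s}, ∀ b, W i s (p1 c) b → W j2 s (p1 c) b := by
      intro c hc b hW
      refine W_congr ?_ hW
      intro g hg
      exact (j2g g (fun h => hfs c hc (h ▸ hg))).symm
    have hconf : Conf j2 s (T \ {s}) p1 b v := by
      refine ⟨hpre.congr hc2, by rw [hc2]; exact hb, ?_, ?_⟩
      · apply hWj b hb; rw [e1]; exact h1
      · rw [hc2]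
        intro c hc hca
        obtain ⟨b, hb, hW⟩ := h.walk c hc
        refine ⟨b, hb, hWj c hc b ?_⟩
        rw [e2 c hca]; exact hW
    rcases aug hconf hsB with ⟨p', hp'⟩ | ⟨X, hsX, hvX, hBX, k1, k2⟩
    · have hf' : ∀ a ∈ cut i {s}, f ∉ eds (p' a) := by
        intro a ha hfa
        obtain ⟨b, hb, hW⟩ := hp'.walk a (by rw [hc2]; exact ha)
        obtain ⟨c, d, hd⟩ := (mem_eds_iff (x := s)).1 hfa
        obtain ⟨h3, h4⟩ := dts_inc hW hd
        rw [j2f, Sym2.eq_iff] at h3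
        apply h4
        rcases h3 with ⟨rfl, rfl⟩ | ⟨rfl, rfl⟩ <;> rfl
      refine caseB hS ho ht hts hvT hvs hws (p := p') ⟨hp'.toPre.congr hc2.symm, ?_⟩ hf'
      intro a ha
      obtain ⟨b, hb, hW⟩ := hp'.walk a (by rw [hc2]; exact ha)
      refine ⟨b, hb, W_congr ?_ hW⟩
      intro g hg
      exact j2g g (fun h => hf' a ha (h ▸ hg))
    · right
      have hnoexit : ∀ c g d, (c, g, d) ∈ dts w l2 → c ∈ X → d ∈ X := by
        intro c g d hd hc
        by_contra hdX
        have hgl2 := mem_eds_of_dts hd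
        have hgf : g ≠ f := fun h => hfl2 (h ▸ hgl2)
        have hi := (dts_inc h2 hd).1
        obtain ⟨a, ha, hda⟩ := k1 g c d ((j2g g hgf).trans hi) hc hdX
        rw [hc2] at ha
        have hga := mem_eds_of_dts hda
        have := h.disj a ha b hb g (hsub a g hga) (hs2 g hgl2)
        subst this
        rw [e1] at hga
        exact hdj g hga g (by simp [hgl2]) rfl
      have hb'X := hBX b' hb'
      refine ⟨X, tight_of h hsX hBX ?_ ?_, hvX⟩
      · rintro g x y ⟨a, ha, hda⟩ hx
        by_cases hab : a = b
        · rw [hab, hl, dts_append h1, dts_cons, List.mem_append, List.mem_cons] at hda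
          rcases hda with hda | hda | hda
          · exact k2 g x y ⟨b, by rw [hc2]; exact hb, by rw [e1]; exact hda⟩ hx
          · simp only [Prod.mk.injEq] at hda
            exact absurd (hda.1 ▸ hvX) hx
          · intro hy
            obtain ⟨m1, m2, hm, hm1, hm2⟩ := (mem_dts h2).1 hda
            obtain ⟨c, g', d, hcd, hc, hd'⟩ := exists_cross hm2 hy hb'X
            refine hd' (hnoexit c g' d ?_ hc)
            rw [hm, dts_append hm1]; simp [hcd]
        · exact k2 g x y ⟨a, by rw [hc2]; exact ha, by rw [e2 a hab]; exact hda⟩ hx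
      · rintro g ⟨x, y, hi, hx, hy⟩
        by_cases hgf : g = f
        · exact ⟨b, hb, hgf ▸ hfb⟩
        · obtain ⟨a, ha, hd⟩ := k1 g x y ((j2g g hgf).trans hi) hx hy
          rw [hc2] at ha
          exact ⟨a, ha, hsub a g (mem_eds_of_dts hd)⟩
  · -- f used as w → v
    left
    have hel1 : e ∉ eds l1 := by
      intro hel
      obtain ⟨m, hm, hmW⟩ := e_last h htr hS.ie htB hb (hs1 e hel)
      have n1 := h.nodup b hb
      rw [hl] at hm
      have := congrArg (fun l => (eds l).reverse) hm
      simp at this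
      rcases hr : (eds l2).reverse with _ | ⟨q, r⟩
      · rw [hr] at this; simp at this; exact hS.ne this.1.symm
      · rw [hr] at this; simp at this
        have hql2 : q ∈ eds l2 := by rw [← List.mem_reverse, hr]; simp
        rw [this.1] at hql2
        exact hdj e hel e (by simp [hql2]) rfl
    let m := l1 ++ [(e, t)]
    have hmn : (eds m).Nodup := by
      simp only [m, eds_append, List.nodup_append]
      refine ⟨nd1, by simp, ?_⟩
      intro g hg g' hg' heq
      simp at hg'; subst hg'; subst heq; exact hel1 hg
    have hmW : W j s m t := by
      refine W_append.2 ⟨w, W_congr ?_ h1, ?_, hS.wt, rfl⟩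
      · intro g hg
        exact (hS.rest g (fun h => hel1 (h ▸ hg)) (fun h => hfl1 (h ▸ hg))).symm
      · rw [hS.je, Sym2.eq_swap]
    have hmhead : ∃ z l, m = (b, z) :: l := by
      obtain ⟨z, l, hz⟩ := hhead
      exact ⟨z, l ++ [(e, t)], by simp [m, hz]⟩
    have hem : ∀ g ∈ eds m, g = e ∨ g ∈ eds l1 := by
      intro g hg; simp [m] at hg; tauto
    have hbase : ∀ a ∈ cut i {s}, a ≠ b → e ∉ eds (p a) → ∃ b' ∈ T \ {s}, W j s (p a) b' := by
      intro a ha hab hea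
      obtain ⟨b', hb', hW⟩ := h.walk a ha
      refine ⟨b', hb', W_congr ?_ hW⟩
      intro g hg
      exact (hS.rest g (fun h => hea (h ▸ hg))
        (fun hgf => hab (h.disj a ha b hb f (hgf ▸ hg) hfb))).symm
    by_cases heu : ∃ a ∈ cut i {s}, a ≠ b ∧ e ∈ eds (p a)
    · obtain ⟨a, ha, hab, hea⟩ := heu
      obtain ⟨m1, hm1, hm1W⟩ := e_last h htr hS.ie htB ha hea
      have hn := h.nodup a ha
      rw [hm1, eds_append, List.nodup_append] at hn
      have hem1 : e ∉ eds m1 := fun h => hn.2.2 e h e (by simp) rfl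
      have hm1s : ∀ g ∈ eds m1, g ∈ eds (p a) := by intro g hg; rw [hm1]; simp [hg]
      obtain ⟨z, l, hz⟩ := h.init_head ha he hm1
      let n := m1 ++ l2
      have hnn : (eds n).Nodup := by
        simp only [n, eds_append, List.nodup_append]
        refine ⟨hn.1, nd2, ?_⟩
        rintro g hg g' hg' rfl
        exact hab (h.disj a ha b hb g (hm1s g hg) (hs2 g hg'))
      have hel2 : e ∉ eds l2 := fun hh => hab (h.disj a ha b hb e hea (hs2 e hh))
      have hfm1 : f ∉ eds m1 := fun hh => hab (h.disj a ha b hb f (hm1s f hh) hfb)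
      have hnW : W j s n b' := by
        refine W_append.2 ⟨v, W_congr ?_ hm1W, W_congr ?_ h2⟩
        · intro g hg
          exact (hS.rest g (fun h => hem1 (h ▸ hg)) (fun h => hfm1 (h ▸ hg))).symm
        · intro g hg
          exact (hS.rest g (fun h => hel2 (h ▸ hg)) (fun h => hfl2 (h ▸ hg))).symm
      have hba : b ≠ a := fun h => hab h.symm
      -- first update a to m1, then b to m, then a to n
      have P1 : Pre i s (Function.update p a m1) := h.toPre.upd ⟨z, l, hz⟩ hn.1
        (fun a' ha' hne g hg hg' => hne (h.disj a' ha' a ha g hg' (hm1s g hg)))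
      have P2 : Pre i s (Function.update (Function.update p a m1) b m) := by
        refine P1.upd hmhead hmn ?_
        intro a' ha' hne g hg hg'
        by_cases haa : a' = a
        · subst haa
          simp only [Function.update_self] at hg'
          rcases hem g hg with rfl | hg
          · exact hem1 hg'
          · exact hab (h.disj a' ha b hb g (hm1s g hg') (hs1 g hg))
        · rw [Function.update_of_ne haa] at hg'
          rcases hem g hg with rfl | hg
          · exact haa (h.disj a' ha' a ha g hg' hea)
          · exact hne (h.disj a' ha' b hb g hg' (hs1 g hg))
      have P3 : Pre i s (Function.update (Function.update (Function.update p a m1) b m) a n) := by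
        refine P2.upd ⟨z, l ++ l2, by simp [n, hz]⟩ hnn ?_
        intro a' ha' hne g hg hg'
        simp only [n, eds_append, List.mem_append] at hg
        by_cases hab' : a' = b
        · subst hab'
          rw [Function.update_self] at hg'
          rcases hem g hg' with rfl | hg'
          · rcases hg with hg | hg
            · exact hem1 hg
            · exact hel2 hg
          · rcases hg with hg | hg
            · exact hab (h.disj a ha a' hb g (hm1s g hg) (hs1 g hg'))
            · exact hdj g hg' g (by simp [hg]) rfl
        · rw [Function.update_of_ne hab', Function.update_of_ne hne] at hg'
          rcases hg with hg | hg
          · exact hne (h.disj a' ha' a ha g hg' (hm1s g hg))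
          · exact hab' (h.disj a' ha' b hb g hg' (hs2 g hg))
      refine ⟨_, P3.congr hcj, ?_⟩
      rw [hcj]
      intro c hc
      by_cases hca : c = a
      · subst hca; rw [Function.update_self]; exact ⟨b', hb', hnW⟩
      · rw [Function.update_of_ne hca]
        by_cases hcb : c = b
        · subst hcb; rw [Function.update_self]; exact ⟨t, htB, hmW⟩
        · rw [Function.update_of_ne hcb, Function.update_of_ne hca]
          exact hbase c hc hcb (fun hh => hca (h.disj c hc a ha e hh hea))
    · push Not at heu
      have P1 : Pre i s (Function.update p b m) := by
        refine h.toPre.upd hmhead hmn ?_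
        intro a' ha' hne g hg hg'
        rcases hem g hg with rfl | hg
        · exact heu a' ha' hne hg'
        · exact hne (h.disj a' ha' b hb g hg' (hs1 g hg))
      refine ⟨_, P1.congr hcj, ?_⟩
      rw [hcj]
      intro c hc
      by_cases hcb : c = b
      · subst hcb; rw [Function.update_self]; exact ⟨t, htB, hmW⟩
      · rw [Function.update_of_ne hcb]
        exact hbase c hc hcb (heu c hc hcb)

end LC

namespace LC

variable {V : Type u} {E : Type v}

open Classical in
noncomputable def del (x0 : V) (i : E → Sym2 V) (F : Set E) : E → Sym2 V :=
  fun e => if e ∈ F then s(x0, x0) else i e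

theorem del_of {x0 : V} {i : E → Sym2 V} {F : Set E} {g : E} (h : g ∉ F) : del x0 i F g = i g := by
  simp [del, h]

theorem del_in {x0 : V} {i : E → Sym2 V} {F : Set E} {g : E} (h : g ∈ F) :
    del x0 i F g = s(x0, x0) := by
  simp [del, h]

theorem mem_cut_del {x0 : V} {i : E → Sym2 V} {F : Set E} {g : E} {X : Set V} :
    g ∈ cut (del x0 i F) X ↔ g ∈ cut i X ∧ g ∉ F := by
  by_cases h : g ∈ F
  · have := mem_cut_loop (X := X) (del_in (x0 := x0) (i := i) h); tauto
  · have : g ∈ cut (del x0 i F) X ↔ g ∈ cut i X := by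
      unfold cut; simp only [Set.mem_ofPred_eq, del_of h]
    tauto

theorem linked_restrict {x0 : V} {i : E → Sym2 V} {F : Set E} {s : V} {T : Set V}
    {p : E → List (E × V)} (h : Pre i s p)
    (hw : ∀ a ∈ cut i {s}, a ∉ F → (∃ b ∈ T \ {s}, W i s (p a) b) ∧ ∀ g ∈ eds (p a), g ∉ F) :
    Linked (del x0 i F) T s := by
  refine ⟨p, ⟨?_, ?_, ?_⟩, ?_⟩
  · intro a ha; exact h.head a (mem_cut_del.1 ha).1
  · intro a ha; exact h.nodup a (mem_cut_del.1 ha).1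
  · intro a ha a' ha'; exact h.disj a (mem_cut_del.1 ha).1 a' (mem_cut_del.1 ha').1
  · intro a ha
    obtain ⟨h1, h2⟩ := mem_cut_del.1 ha
    obtain ⟨⟨b, hb, hW⟩, hF⟩ := hw a h1 h2
    exact ⟨b, hb, W_congr (fun g hg => (del_of (hF g hg)).symm) hW⟩

/-- A good trail -/
structure Trail (i : E → Sym2 V) (T : Set V) (t : V) (e : E) (P : List (E × V)) (b z : V)
    (l : List (E × V)) : Prop where
  eq : P = (e, z) :: l
  walk : W i t P b
  bmem : b ∈ T
  bne : b ≠ t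
  nodup : (eds P).Nodup
  src : ∀ c g d, (c, g, d) ∈ dts z l → c ∉ T

theorem finish {i : E → Sym2 V} {T : Set V} {t s v x0 : V} {e : E} {X : Set V}
    (ht : t ∈ T) (hs : s ∈ T) (hst : s ≠ t) (hall : ∀ s ∈ T, Linked i T s)
    (ie : i e = s(t, v)) (hvT : v ∉ T) (hX : Tight i T s X) (hv : v ∈ X) :
    ∃ P b z l, Trail i T t e P b z l ∧ ∀ s ∈ T, Linked (del x0 i {g | g ∈ eds P}) T s := by
  obtain ⟨hsX, hsep, p, h, honce, hcov⟩ := hX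
  have htX : t ∉ X := fun hh => hst (hsep t ht hh).symm
  have heX : e ∈ cut i X := mem_cut_of (ie.trans Sym2.eq_swap) hv htX
  obtain ⟨r, hr, her⟩ := hcov e heX
  have hcutu : ∀ a ∈ cut i {s}, ∀ c c', c ∈ eds (p a) → c' ∈ eds (p a) → c ∈ cut i X →
      c' ∈ cut i X → c = c' := by
    intro a ha c c' hc hc' hcX hcX'
    obtain ⟨l1, g, x, y, l2, b, h1, h2, h3, h4, h5, h6, h7, h8⟩ := honce a ha
    have key : ∀ c, c ∈ eds (p a) → c ∈ cut i X → c = g := by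
      intro c hc hcX
      rw [h1] at hc
      simp at hc
      rcases hc with hc | hc | hc
      · exact absurd hcX (not_cut_of_in h2 hsX h6 hc)
      · exact hc
      · exact absurd hcX (not_cut_of_out h4 h7 h8 hc)
    rw [key c hc hcX, key c' hc' hcX']
  obtain ⟨l1, g, x, y, l2, b, h1, h2, h3, h4, h5, h6, h7, h8⟩ := honce r hr
  have hge : e = g := hcutu r hr e g her (by rw [h1]; simp) heX (mem_cut_of h5 h3 h7)
  subst hge
  have hxy : x = v ∧ y = t := by
    rw [ie, Sym2.eq_iff] at h5
    rcases h5 with ⟨rfl, rfl⟩ | ⟨rfl, rfl⟩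
    · exact absurd h3 htX
    · exact ⟨rfl, rfl⟩
  obtain ⟨rfl, rfl⟩ := hxy
  have hn := h.nodup r hr
  rw [h1, eds_append, eds_cons, List.nodup_append] at hn
  have hxs : x ≠ s := fun h => hvT (h ▸ hs)
  have hys : y ≠ s := hst.symm
  let P := (e, x) :: rev s l1
  have hPm : ∀ g, g ∈ eds P ↔ g = e ∨ g ∈ eds l1 := by
    intro g; simp [P, eds_rev]
  have hl1p : ∀ g ∈ eds l1, g ∈ eds (p r) := by intro g hg; rw [h1]; simp [hg]
  have hPp : ∀ g ∈ eds P, g ∈ eds (p r) := by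
    intro g hg
    rcases (hPm g).1 hg with rfl | hg
    · exact her
    · exact hl1p g hg
  have hrP : r ∈ eds P := by
    rw [hPm]
    obtain ⟨z, l, hz⟩ := h.head r hr
    rw [hz] at h1
    cases l1 with
    | nil => simp at h1; exact Or.inl h1.1.1
    | cons q l1 => simp at h1; right; rw [← h1.1]; simp
  refine ⟨P, s, x, rev s l1, ⟨rfl, ⟨ie, fun h => hvT (h ▸ ht), W_rev h2⟩, hs, hst, ?_, ?_⟩, ?_⟩
  · simp only [P, eds_cons, eds_rev, List.nodup_cons, List.mem_reverse, List.nodup_reverse]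
    exact ⟨fun hh => hn.2.2 e hh e (by simp) rfl, hn.1⟩
  · intro c g d hd hcT
    rw [mem_dts_rev h2] at hd
    have hcs : c = s := hsep c hcT (h6 c (mem_vts_of_dts hd))
    subst hcs
    obtain ⟨hi, hne⟩ := dts_inc h2 hd
    have hg : g ∈ cut i {c} := mem_cut_of (hi.trans Sym2.eq_swap) rfl hne
    refine hne (h.toPre.src_eq hr hg (d := c) ?_)
    rw [h1, dts_append h2]; simp [hd]
  · intro s' hs'
    by_cases hss : s' = s
    · subst hss
      refine linked_restrict h.toPre ?_
      intro a ha haP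
      refine ⟨h.walk a ha, fun g hg hgP => haP ?_⟩
      have := h.disj a ha r hr g hg (hPp g hgP)
      subst this
      exact hrP
    · have hs'X : s' ∉ X := fun hh => hss (hsep s' hs' hh)
      obtain ⟨q0, hq0⟩ := hall s' hs'
      obtain ⟨q, hq, htr, -⟩ := trunc hq0 (fun h => h.2 rfl)
      have key : ∀ a, ∃ m, a ∈ cut i {s'} → a ∉ eds P → ∃ k r', m = k ++ r' ∧ 
          (∃ z k', k = (a, z) :: k') ∧ (∃ rest, q a = k ++ rest) ∧
          (∀ g ∈ eds k, ¬ (∀ z ∈ i g, z ∈ X)) ∧ e ∉ eds k ∧ (eds r').Nodup ∧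
          (∀ g ∈ eds r', (∀ z ∈ i g, z ∈ X) ∧ ∃ a' ∈ cut i {s}, a' ≠ r ∧ g ∈ eds (p a') ∧
            ∃ c, c ∈ eds k ∧ c ∈ cut i X ∧ c ∈ eds (p a')) ∧
          ∃ b ∈ T \ {s'}, W i s' m b := by
        intro a
        by_cases ha : a ∈ cut i {s'} ∧ a ∉ eds P
        swap
        · exact ⟨[], fun h1 h2 => absurd ⟨h1, h2⟩ ha⟩
        obtain ⟨ha, haP⟩ := ha
        obtain ⟨b', hb', hW⟩ := hq.walk a ha
        obtain ⟨z0, k0, hk0⟩ := hq.head a ha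
        have heq : e ∉ eds (q a) ∨ ∃ k, q a = k ++ [(e, y)] ∧ W i s' k x := by
          by_cases hea : e ∈ eds (q a)
          · right
            have hys' : y ≠ s' := by
              rintro rfl
              have := hq.eq_of_cut ha (mem_cut_of ie rfl (fun h => hvT (h ▸ ht))) hea
              exact haP (by rw [this, hPm]; exact Or.inl rfl)
            exact e_last hq htr ie ⟨ht, hys'⟩ ha hea
          · exact Or.inl hea
        by_cases hXq : ∃ z ∈ vts (q a), z ∈ X
        · obtain ⟨k1, c, z, k2, hk, hk1, hz⟩ := first_entry (x := x) (q a) X hXq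
          obtain ⟨y', hW1, hW2⟩ := W_append.1 (hk ▸ hW)
          have hy' : y' ∉ X := by
            rcases end_mem hW1 with h | h
            · exact h ▸ hs'X
            · exact hk1 y' h
          have hcX : c ∈ cut i X := mem_cut_of (hW2.1.trans Sym2.eq_swap) hz hy'
          have hkc : c ∈ eds (q a) := by rw [hk]; simp
          have hnk1 : ∀ g ∈ eds k1, ¬ (∀ z ∈ i g, z ∈ X) := by
            intro g hg hh
            exact in_out hh (ends_in (X := Xᶜ) hW1 hs'X hk1 hg)
          have hnk : ∀ g ∈ eds (k1 ++ [(c, z)]), ¬ (∀ z ∈ i g, z ∈ X) := by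
            intro g hg
            simp at hg
            rcases hg with hg | rfl
            · exact hnk1 g hg
            · exact (cut_ends hcX).1
          have hek : e ∉ eds (k1 ++ [(c, z)]) := by
            intro hek
            have hea : e ∈ eds (q a) := by rw [hk]; simp at hek ⊢; tauto
            rcases heq with heq | ⟨kk, hkk, hkkW⟩
            · exact heq hea
            · -- e is the last edge; first entry is then inconsistent
              simp at hek
              rcases hek with hek | hek
              · exact not_cut_of_out hW1 hs'X hk1 hek heX
              · subst hek
                have hd1 : (y', e, z) ∈ dts s' (q a) := by rw [hk, dts_append hW1]; simp
                have hd2 : (x, e, y) ∈ dts s' (q a) := by rw [hkk, dts_append hkkW]; simp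
                have := (dts_unique (hq.nodup a ha) hd1 hd2).2
                exact htX (this ▸ hz)
          obtain ⟨a', ha', hca'⟩ := hcov c hcX
          obtain ⟨l1', g', x', y'', l2', b'', j1, j2, j3, j4, j5, j6, j7, j8⟩ := honce a' ha'
          have hcg : c = g' := hcutu a' ha' c g' hca' (by rw [j1]; simp) hcX
            (mem_cut_of j5 j3 j7)
          subst hcg
          have hzx : z = x' := by
            have hh : i c = s(y', z) := hW2.1
            rw [j5, Sym2.eq_iff] at hh
            rcases hh with ⟨rfl, rfl⟩ | ⟨rfl, rfl⟩
            · exact absurd j3 hy'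
            · rfl
          subst hzx
          have ha'r : a' ≠ r := by
            rintro rfl
            have := hcutu a' ha' c e hca' her hcX heX
            exact hek (by rw [← this]; simp)
          have hn' := h.nodup a' ha'
          rw [j1, eds_append, List.nodup_append] at hn'
          refine ⟨(k1 ++ [(c, z)]) ++ rev s l1', fun _ _ => ⟨k1 ++ [(c, z)], rev s l1', rfl, ?_,
            ⟨k2, by rw [hk]; simp⟩, hnk, hek, ?_, ?_, ?_⟩⟩
          · rw [hk0] at hk
            cases k1 with
            | nil => simp at hk; exact ⟨z, [], by simp [hk.1.1]⟩
            | cons u k1 => simp at hk; exact ⟨z0, k1 ++ [(c, z)], by simp [hk.1]⟩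
          · rw [eds_rev, List.nodup_reverse]; exact hn'.1
          · intro g hg
            rw [eds_rev, List.mem_reverse] at hg
            exact ⟨ends_in j2 hsX j6 hg, a', ha', ha'r, by rw [j1]; simp [hg], c, by simp, hcX, hca'⟩
          · refine ⟨s, ⟨hs, fun h => hss h.symm⟩, ?_⟩
            rw [W_append]
            exact ⟨z, W_append.2 ⟨y', hW1, hW2.1, hW2.2.1, rfl⟩, W_rev j2⟩
        · push Not at hXq
          refine ⟨q a, fun _ _ => ⟨q a, [], by simp, ⟨z0, k0, hk0⟩, ⟨[], by simp⟩, ?_, ?_, by simp,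
            by simp, b', hb', hW⟩⟩
          · intro g hg hh
            exact in_out hh (ends_in (X := Xᶜ) hW hs'X hXq hg)
          · intro hea
            exact not_cut_of_out hW hs'X hXq hea heX
      choose q' hq' using key
      refine ⟨q', ⟨?_, ?_, ?_⟩, ?_⟩
      · intro a ha
        obtain ⟨h1, h2⟩ := mem_cut_del.1 ha
        obtain ⟨k, r', hm, ⟨z, k', hk'⟩, -⟩ := hq' a h1 h2
        exact ⟨z, k' ++ r', by rw [hm, hk']; rfl⟩
      · intro a ha
        obtain ⟨h1, h2⟩ := mem_cut_del.1 ha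
        obtain ⟨k, r', hm, -, ⟨rest, hrest⟩, hk, hek, hrn, hr', -⟩ := hq' a h1 h2
        rw [hm, eds_append, List.nodup_append]
        have := hq.nodup a h1
        rw [hrest, eds_append, List.nodup_append] at this
        refine ⟨this.1, hrn, ?_⟩
        rintro g hg g' hg' rfl
        exact hk g hg (hr' g hg').1
      · intro a1 ha1 a2 ha2 g hg1 hg2
        obtain ⟨c1, d1⟩ := mem_cut_del.1 ha1
        obtain ⟨c2, d2⟩ := mem_cut_del.1 ha2
        obtain ⟨k, r', hm, -, ⟨rest, hrest⟩, hk, hek, hrn, hr', -⟩ := hq' a1 c1 d1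
        obtain ⟨k2, r2, hm2, -, ⟨rest2, hrest2⟩, hk2, hek2, hrn2, hr2, -⟩ := hq' a2 c2 d2
        have sub1 : ∀ g ∈ eds k, g ∈ eds (q a1) := by intro g hg; rw [hrest]; simp [hg]
        have sub2 : ∀ g ∈ eds k2, g ∈ eds (q a2) := by intro g hg; rw [hrest2]; simp [hg]
        rw [hm, eds_append, List.mem_append] at hg1
        rw [hm2, eds_append, List.mem_append] at hg2
        rcases hg1 with hg1 | hg1 <;> rcases hg2 with hg2 | hg2
        · exact hq.disj a1 c1 a2 c2 g (sub1 g hg1) (sub2 g hg2)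
        · exact absurd (hr2 g hg2).1 (hk g hg1)
        · exact absurd (hr' g hg1).1 (hk2 g hg2)
        · obtain ⟨-, a', ha', -, hga', c, hc, hcX, hca'⟩ := hr' g hg1
          obtain ⟨-, a'', ha'', -, hga'', c', hc', hcX', hca''⟩ := hr2 g hg2
          obtain rfl := h.disj a' ha' a'' ha'' g hga' hga''
          obtain rfl := hcutu a' ha' c c' hca' hca'' hcX hcX'
          exact hq.disj a1 c1 a2 c2 c (sub1 c hc) (sub2 c hc')
      · intro a ha
        obtain ⟨h1, h2⟩ := mem_cut_del.1 ha
        obtain ⟨k, r', hm, -, -, hk, hek, hrn, hr', b, hb, hW⟩ := hq' a h1 h2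
        refine ⟨b, hb, W_congr ?_ hW⟩
        intro g hg
        refine (del_of ?_).symm
        intro hgP
        rw [hm, eds_append, List.mem_append] at hg
        rcases (hPm g).1 hgP with rfl | hgP
        · rcases hg with hg | hg
          · exact hek hg
          · exact (cut_ends heX).1 (hr' g hg).1
        · rcases hg with hg | hg
          · exact hk g hg (ends_in ‹W i s l1 x› hsX ‹∀ z ∈ vts l1, z ∈ X› hgP)
          · obtain ⟨-, a', ha', hne, hga', -⟩ := hr' g hg
            exact hne (h.disj a' ha' r hr g hga' (hl1p g hgP))

theorem IsSplit.noodd {i j : E → Sym2 V} {T : Set V} {e f : E} {t v w x0 : V}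
    (hS : IsSplit i j e f t v w x0) (ht : t ∈ T) (ho : noodd i T) : noodd j T := by
  rintro Y hY ⟨hfin, hodd⟩
  apply ho Y hY
  have htY := hY t ht
  have ie := mem_cut_iff (X := Y) hS.ie
  have jf0 := mem_cut_iff (X := Y) hS.jf0
  have je := mem_cut_iff (X := Y) hS.je
  have jf := mem_cut_loop (X := Y) hS.jf
  have hrest : ∀ g, g ≠ e → g ≠ f → (g ∈ cut j Y ↔ g ∈ cut i Y) := by
    intro g h1 h2; unfold cut; simp only [Set.mem_ofPred_eq, hS.rest g h1 h2]
  have hne := hS.ne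
  by_cases hv : v ∈ Y <;> by_cases hw : w ∈ Y <;> simp only [htY, hv, hw] at ie jf0 je <;>
    simp only [iff_true, iff_false, true_iff, not_true_eq_false, not_false_eq_true] at ie jf0 je
  · have : cut i Y = cut j Y := by
      ext g
      by_cases h1 : g = e
      · subst h1; simp [ie, je]
      by_cases h2 : g = f
      · subst h2; simp [jf0, jf]
      rw [hrest g h1 h2]
    rw [this]; exact ⟨hfin, hodd⟩
  · have : cut i Y = insert e (insert f (cut j Y)) := by
      ext g
      simp only [Set.mem_insert_iff]
      by_cases h1 : g = e
      · subst h1; simp [ie, je]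
      by_cases h2 : g = f
      · subst h2; simp [jf0, jf]
      rw [hrest g h1 h2]; simp [h1, h2]
    rw [this]
    refine ⟨(hfin.insert _).insert _, ?_⟩
    rw [Set.ncard_insert_of_notMem _ (hfin.insert _), Set.ncard_insert_of_notMem jf hfin]
    · exact hodd.add_one.add_one
    · simp only [Set.mem_insert_iff]; tauto
  · have h1 : cut i Y = insert f (cut j Y \ {e}) := by
      ext g
      simp only [Set.mem_insert_iff, Set.mem_sdiff, Set.mem_singleton_iff]
      by_cases h1 : g = e
      · subst h1; simp [ie, je, hne]
      by_cases h2 : g = f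
      · subst h2; simp [jf0, jf]
      rw [hrest g h1 h2]; simp [h1, h2]
    rw [h1]
    have je2 : e ∈ cut j Y := by simpa using je
    refine ⟨(hfin.sdiff).insert _, ?_⟩
    rw [Set.ncard_insert_of_notMem _ hfin.sdiff, Set.ncard_sdiff_singleton_add_one je2 hfin]
    · exact hodd
    · simp only [Set.mem_sdiff]; tauto
  · have : cut i Y = cut j Y := by
      ext g
      by_cases h1 : g = e
      · subst h1; simp [ie, je]
      by_cases h2 : g = f
      · subst h2; simp [jf0, jf]
      rw [hrest g h1 h2]
    rw [this]; exact ⟨hfin, hodd⟩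

end LC

namespace LC

variable {V : Type u} {E : Type v}

open Classical in
theorem exists_split {i : E → Sym2 V} {e f : E} {t v w : V} (x0 : V) (ie : i e = s(t, v))
    (jf : i f = s(v, w)) (ne : e ≠ f) (wv : w ≠ v) (wt : w ≠ t) (tv : t ≠ v) :
    ∃ j, IsSplit i j e f t v w x0 := by
  refine ⟨Function.update (Function.update i f s(x0, x0)) e s(t, w), ie, jf, by simp, ?_, ne, wv,
    wt, tv, ?_⟩
  · simp [Function.update_of_ne ne.symm]
  · intro g h1 h2
    simp [Function.update_of_ne h1, Function.update_of_ne h2]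

/-- linkage of `s` avoiding a loop edge and an edge joining two other terminals -/
theorem split_link {i j : E → Sym2 V} {T : Set V} {s : V} {e f : E} {t v w x0 : V}
    (hS : IsSplit i j e f t v w x0) (ht : t ∈ T) (hw : w ∈ T) (hts : t ≠ s) (hvs : v ≠ s)
    (hws : w ≠ s) (hl : Linked j T s) {F : Set E} (hF : ∀ g, g ∈ F ↔ g = e ∨ g = f) :
    Linked (del x0 i F) T s := by
  obtain ⟨p0, hp0⟩ := hl
  obtain ⟨p, hp, htr, -⟩ := trunc hp0 (fun h => h.2 rfl)
  obtain ⟨hc, -, -⟩ := hS.cut_eq hts hvs hws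
  refine linked_restrict (hp.toPre.congr hc.symm) ?_
  intro a ha haF
  rw [← hc] at ha
  obtain ⟨b, hb, hW⟩ := hp.walk a ha
  have key : ∀ g ∈ eds (p a), g ∉ F := by
    intro g hg hgF
    obtain ⟨c, d, hd⟩ := (mem_eds_iff (x := s)).1 hg
    obtain ⟨h1, h2⟩ := dts_inc hW hd
    rcases (hF g).1 hgF with rfl | rfl
    · have hcB := htr a ha _ _ _ hd
      rw [hS.je, Sym2.eq_iff] at h1
      rcases h1 with ⟨rfl, rfl⟩ | ⟨rfl, rfl⟩
      · exact hcB ⟨ht, hts⟩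
      · exact hcB ⟨hw, hws⟩
    · rw [hS.jf, Sym2.eq_iff] at h1
      rcases h1 with ⟨rfl, rfl⟩ | ⟨rfl, rfl⟩ <;> exact h2 rfl
  refine ⟨⟨b, hb, W_congr ?_ hW⟩, key⟩
  intro g hg
  have := key g hg
  rw [hF] at this
  push Not at this
  first
  | exact hS.rest g this.1 this.2
  | exact (hS.rest g this.1 this.2).symm

open Classical in
/-- the case of two-edge paths, at the other end -/
theorem two_end {i : E → Sym2 V} {T : Set V} {e f : E} {t v w x0 : V} (ht : t ∈ T)
    (ie : i e = s(t, v)) (jf : i f = s(v, w)) (ne : e ≠ f) (wv : w ≠ v) (wt : w ≠ t)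
    (hl : Linked i T w) {F : Set E} (hF : ∀ g, g ∈ F ↔ g = e ∨ g = f) :
    Linked (del x0 i F) T w := by
  obtain ⟨p0, hp0⟩ := hl
  obtain ⟨p, hp, htr, -⟩ := trunc hp0 (fun h => h.2 rfl)
  have hf : f ∈ cut i {w} := mem_cut_of (jf.trans Sym2.eq_swap) rfl (by simpa using wv.symm)
  by_cases hu : ∃ a ∈ cut i {w}, a ≠ f ∧ e ∈ eds (p a)
  · obtain ⟨a, ha, haf, hea⟩ := hu
    obtain ⟨m, hm, hmW⟩ := e_last hp htr ie ⟨ht, wt.symm⟩ ha hea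
    obtain ⟨z, k, hk⟩ := hp.head f hf
    obtain ⟨b, hb, hW⟩ := hp.walk f hf
    rw [hk] at hW
    have hzv : z = v := by
      have h1 : i f = s(w, z) := hW.1
      rw [jf, Sym2.eq_iff] at h1
      rcases h1 with ⟨h1, h2⟩ | ⟨h1, h2⟩
      · exact absurd h1.symm wv
      · exact h1.symm
    subst hzv
    have hn1 := hp.nodup a ha
    rw [hm, eds_append, List.nodup_append] at hn1
    have hn2 := hp.nodup f hf
    rw [hk, eds_cons, List.nodup_cons] at hn2
    have hma : ∀ g ∈ eds m, g ∈ eds (p a) := by intro g hg; rw [hm]; simp [hg]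
    have hkf : ∀ g ∈ eds k, g ∈ eds (p f) := by intro g hg; rw [hk]; simp [hg]
    have hhead : ∃ z l, m ++ k = (a, z) :: l := by
      obtain ⟨z', l', hz'⟩ := hp.head a ha
      rw [hz'] at hm
      cases m with
      | nil => exact absurd (hmW : w = z) wv
      | cons q m => simp at hm; exact ⟨z', m ++ k, by rw [hm.1]; simp⟩
    have P1 : Pre i w (Function.update p f [(f, z)]) := by
      refine hp.toPre.upd ⟨z, [], rfl⟩ (by simp) ?_
      intro a' ha' hne g hg hg'
      simp at hg; subst hg
      exact hne (hp.toPre.eq_of_cut ha' hf hg')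
    have P2 : Pre i w (Function.update (Function.update p f [(f, z)]) a (m ++ k)) := by
      refine P1.upd hhead ?_ ?_
      · rw [eds_append, List.nodup_append]
        refine ⟨hn1.1, hn2.2, ?_⟩
        rintro g hg g' hg' rfl
        exact haf (hp.disj a ha f hf g (hma g hg) (hkf g hg'))
      · intro a' ha' hne g hg hg'
        rw [eds_append, List.mem_append] at hg
        by_cases haf' : a' = f
        · subst haf'
          simp at hg'
          subst hg'
          rcases hg with hg | hg
          · exact haf (hp.toPre.eq_of_cut ha hf (hma _ hg))
          · exact hn2.1 hg
        · rw [Function.update_of_ne haf'] at hg'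
          rcases hg with hg | hg
          · exact hne (hp.disj a' ha' a ha g hg' (hma g hg))
          · exact haf' (hp.disj a' ha' f hf g hg' (hkf g hg))
    refine linked_restrict P2 ?_
    intro a' ha' ha'F
    rw [hF] at ha'F
    push Not at ha'F
    by_cases haa : a' = a
    · subst haa
      simp only [Function.update_self]
      refine ⟨⟨b, hb, W_append.2 ⟨z, hmW, hW.2.2⟩⟩, ?_⟩
      intro g hg hgF
      rw [eds_append, List.mem_append] at hg
      rcases (hF g).1 hgF with rfl | rfl
      · rcases hg with hg | hg
        · exact hn1.2.2 g hg g (by simp) rfl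
        · exact haf (hp.disj a' ha f hf g hea (hkf g hg))
      · rcases hg with hg | hg
        · exact haf (hp.toPre.eq_of_cut ha hf (hma _ hg))
        · exact hn2.1 hg
    · rw [Function.update_of_ne haa, Function.update_of_ne ha'F.2]
      refine ⟨hp.walk a' ha', ?_⟩
      intro g hg hgF
      rcases (hF g).1 hgF with rfl | rfl
      · exact haa (hp.disj a' ha' a ha g hg hea)
      · exact ha'F.2 (hp.toPre.eq_of_cut ha' hf hg)
  · push Not at hu
    refine linked_restrict hp.toPre ?_
    intro a ha haF
    rw [hF] at haF
    push Not at haF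
    refine ⟨hp.walk a ha, ?_⟩
    intro g hg hgF
    rcases (hF g).1 hgF with rfl | rfl
    · exact hu a ha haF.2 hg
    · exact haF.2 (hp.toPre.eq_of_cut ha hf hg)

/-- single edge between terminals -/
theorem one_edge {i : E → Sym2 V} {T : Set V} {s t v x0 : V} {e : E} (ht : t ∈ T) (hv : v ∈ T)
    (htv : t ≠ v) (ie : i e = s(t, v)) (hl : Linked i T s) {F : Set E} (hF : ∀ g, g ∈ F ↔ g = e) :
    Linked (del x0 i F) T s := by
  obtain ⟨p0, hp0⟩ := hl
  obtain ⟨p, hp, htr, -⟩ := trunc hp0 (fun h => h.2 rfl)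
  refine linked_restrict hp.toPre ?_
  intro a ha haF
  refine ⟨hp.walk a ha, ?_⟩
  intro g hg hgF
  rw [hF] at haF hgF
  subst hgF
  obtain ⟨b, hb, hW⟩ := hp.walk a ha
  obtain ⟨c, d, hd⟩ := (mem_eds_iff (x := s)).1 hg
  obtain ⟨h1, h2⟩ := dts_inc hW hd
  have hcB := htr a ha _ _ _ hd
  by_cases hgs : g ∈ cut i {s}
  · exact haF (hp.toPre.eq_of_cut ha hgs hg)
  · rw [mem_cut_iff ie] at hgs
    simp only [Set.mem_singleton_iff] at hgs
    rw [ie, Sym2.eq_iff] at h1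
    rcases h1 with ⟨rfl, rfl⟩ | ⟨rfl, rfl⟩
    · refine hcB ⟨ht, ?_⟩
      rintro rfl
      exact hgs (Or.inl ⟨rfl, h2.symm⟩)
    · refine hcB ⟨hv, ?_⟩
      rintro rfl
      exact hgs (Or.inr ⟨rfl, h2.symm⟩)

open Classical in
theorem KL {T : Set V} {t x0 : V} (ht : t ∈ T) (n : ℕ) : ∀ (i : E → Sym2 V)
    (q : E → List (E × V)) (e : E), noodd i T → (∀ s ∈ T, Linked i T s) → Sys i t (T \ {t}) q →
    Tr i t (T \ {t}) q → e ∈ cut i {t} → (q e).length ≤ n →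
    ∃ P b z l, Trail i T t e P b z l ∧ ∀ s ∈ T, Linked (del x0 i {g | g ∈ eds P}) T s := by
  induction n with
  | zero =>
    intro i q e _ _ hq _ he hn
    obtain ⟨z, l, h⟩ := hq.head e he
    rw [h] at hn; simp at hn
  | succ n ih =>
    intro i q e ho hall hq htr he hn
    obtain ⟨v, l, hql⟩ := hq.head e he
    obtain ⟨b, hb, hW⟩ := hq.walk e he
    have hqn := hq.nodup e he
    have hself := hq.toPre.self_mem he
    have htre := htr e he
    have hsrc : ∀ {g c d}, g ∈ cut i {t} → (c, g, d) ∈ dts t (q e) → c = t :=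
      fun hg hm => hq.toPre.src_eq he hg hm
    have hqe : ∀ a ∈ cut i {t}, a ≠ e → ∀ g ∈ eds (q e), g ∉ eds (q a) := by
      intro a ha hae g hg hg'
      exact hae (hq.disj a ha e he g hg' hg)
    rw [hql] at hW hqn htre hsrc hqe hn
    obtain ⟨ie, htv, hW'⟩ := hW
    by_cases hvT : v ∈ T
    · refine ⟨[(e, v)], v, v, [], ⟨rfl, ⟨ie, htv, rfl⟩, hvT, htv.symm, by simp, by simp⟩, ?_⟩
      intro s hs
      exact one_edge ht hvT htv ie (hall s hs) (by simp)
    by_cases hX : ∃ s ∈ T, s ≠ t ∧ ∃ X, Tight i T s X ∧ v ∈ X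
    · obtain ⟨s, hs, hst, X, hX, hv⟩ := hX
      exact finish ht hs hst hall ie hvT hX hv
    push Not at hX
    cases l with
    | nil => exact absurd ((hW' : v = b) ▸ hb.1) hvT
    | cons fw k =>
      obtain ⟨f, w⟩ := fw
      obtain ⟨jf, hvw, hW''⟩ := hW'
      rw [eds_cons, eds_cons, List.nodup_cons, List.nodup_cons] at hqn
      simp only at hqn
      have hef : e ≠ f := by
        intro h; exact hqn.1 (by simp [h])
      have hwt : w ≠ t := by
        rintro rfl
        have h1 : f ∈ cut i {w} := mem_cut_of (jf.trans Sym2.eq_swap) rfl (by simpa using hvw)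
        have := hsrc (c := v) (d := w) h1 (by simp)
        exact htv this.symm
      obtain ⟨j, hS⟩ := exists_split x0 ie jf hef hvw.symm hwt htv
      have hother : ∀ s ∈ T, s ≠ t → s ≠ w → Linked j T s := by
        intro s hs hst hsw
        rcases split hS ho ht hst.symm hvT (fun h => hvT (h ▸ hs)) hsw.symm (hall s hs) with h | h
        · exact h
        · obtain ⟨X, hX1, hX2⟩ := h
          exact absurd hX2 (hX s hs hst X hX1)
      by_cases hwT : w ∈ T
      · have hF : ∀ g, g ∈ {g | g ∈ eds [(e, v), (f, w)]} ↔ g = e ∨ g = f := by simp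
        refine ⟨[(e, v), (f, w)], w, v, [(f, w)], ⟨rfl, ⟨ie, htv, jf, hvw, rfl⟩, hwT, hwt,
          by simp [hef], ?_⟩, ?_⟩
        · intro c g d hd
          simp at hd
          rw [hd.1]; exact hvT
        · intro s hs
          by_cases hst : s = t
          · subst hst
            refine linked_restrict hq.toPre ?_
            intro a ha haF
            refine ⟨hq.walk a ha, ?_⟩
            intro g hg hgF
            rw [hF] at haF
            push Not at haF
            refine hqe a ha haF.1 g ?_ hg
            rcases (hF g).1 hgF with rfl | rfl <;> simp
          · by_cases hsw : s = w
            · subst hsw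
              exact two_end ht ie jf hef hvw.symm hwt (hall s hs) hF
            · exact split_link hS ht hwT (Ne.symm hst) (fun h => hvT (h ▸ hs)) (Ne.symm hsw)
                (hother s hs hst hsw) hF
      · -- recursive case
        have hoj := hS.noodd ht ho
        have hfi : f ∉ cut i {t} := not_mem_cut_single jf htv.symm hwt
        have hej : e ∈ cut j {t} := mem_cut_of hS.je rfl (by simpa using hwt)
        have hcut : cut j {t} = cut i {t} := by
          ext g
          by_cases h1 : g = e
          · subst h1; exact ⟨fun _ => he, fun _ => hej⟩
          by_cases h2 : g = f
          · subst h2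
            exact ⟨fun h => absurd h (mem_cut_loop hS.jf), fun h => absurd h hfi⟩
          unfold cut; simp only [Set.mem_ofPred_eq, hS.rest g h1 h2]
        have hji : ∀ (x y : V) (m : List (E × V)), W i x m y → e ∉ eds m → f ∉ eds m → W j x m y := by
          intro x y m hm h1 h2
          refine W_congr ?_ hm
          intro g hg
          have := hS.rest g (fun h => h1 (h ▸ hg)) (fun h => h2 (h ▸ hg))
          first
          | exact this
          | exact this.symm
        have hPre : Pre i t (Function.update q e ((e, w) :: k)) := by
          refine hq.toPre.upd ⟨w, k, rfl⟩ ?_ ?_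
          · simp only [eds_cons, List.nodup_cons]
            exact ⟨fun h => hqn.1 (by simp [h]), hqn.2.2⟩
          · intro a ha hae g hg
            refine hqe a ha hae g ?_
            simp at hg ⊢; tauto
        have hSys : Sys j t (T \ {t}) (Function.update q e ((e, w) :: k)) := by
          refine ⟨hPre.congr hcut, ?_⟩
          intro a ha
          rw [hcut] at ha
          by_cases hae : a = e
          · subst hae
            simp only [Function.update_self]
            exact ⟨b, hb, hS.je, hwt.symm, hji _ _ _ hW'' (fun h => hqn.1 (by simp [h])) hqn.2.1⟩
          · rw [Function.update_of_ne hae]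
            obtain ⟨b', hb', hWa⟩ := hq.walk a ha
            exact ⟨b', hb', hji _ _ _ hWa (hqe a ha hae e (by simp)) (hqe a ha hae f (by simp))⟩
        have hTr : Tr j t (T \ {t}) (Function.update q e ((e, w) :: k)) := by
          intro a ha c g d hd
          rw [hcut] at ha
          by_cases hae : a = e
          · subst hae
            simp only [Function.update_self] at hd
            simp only [dts_cons, List.mem_cons, Prod.mk.injEq] at hd
            rcases hd with ⟨rfl, -, -⟩ | hd
            · exact fun h => h.2 rfl
            · exact htre c g d (by simp [hd])
          · rw [Function.update_of_ne hae] at hd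
            exact htr a ha c g d hd
        obtain ⟨P', b', z', k', hT', hL'⟩ := ih j _ e hoj (by
          intro s hs
          by_cases hst : s = t
          · subst hst; exact ⟨_, hSys⟩
          · exact hother s hs hst (fun h => hwT (h ▸ hs))) hSys hTr hej (by
              simp only [Function.update_self, List.length_cons] at hn ⊢; omega)
        obtain ⟨hP', hPW, hb'1, hb'2, hPn, hPsrc⟩ := hT'
        subst hP'
        obtain ⟨h1, h2, hPW⟩ := hPW
        have hz' : z' = w := by
          have h1' : j e = s(t, z') := h1
          rw [hS.je, Sym2.eq_iff] at h1'
          rcases h1' with ⟨-, h⟩ | ⟨h, h'⟩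
          · exact h.symm
          · exact absurd h' hwt
        subst hz'
        simp only [eds_cons, List.nodup_cons] at hPn
        have hfk : f ∉ eds k' := by
          intro hf
          obtain ⟨c, d, hd⟩ := (mem_eds_iff (x := z')).1 hf
          obtain ⟨h1, h2⟩ := dts_inc hPW hd
          rw [hS.jf, Sym2.eq_iff] at h1
          rcases h1 with ⟨rfl, rfl⟩ | ⟨rfl, rfl⟩ <;> exact h2 rfl
        have hWi : W i z' k' b' := by
          refine W_congr ?_ hPW
          intro g hg
          have := hS.rest g (fun h => hPn.1 (h ▸ hg)) (fun h => hfk (h ▸ hg))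
          first
          | exact this
          | exact this.symm
        refine ⟨(e, v) :: (f, z') :: k', b', v, (f, z') :: k', ⟨rfl, ⟨ie, htv, jf, hvw, hWi⟩, hb'1,
          hb'2, ?_, ?_⟩, ?_⟩
        · simp only [eds_cons, List.nodup_cons, List.mem_cons, not_or]
          exact ⟨⟨hef, hPn.1⟩, hfk, hPn.2⟩
        · intro c g d hd
          simp only [dts_cons, List.mem_cons, Prod.mk.injEq] at hd
          rcases hd with ⟨rfl, -, -⟩ | hd
          · exact hvT
          · exact hPsrc c g d hd
        · intro s hs
          have hdel : del x0 i {g | g ∈ eds ((e, v) :: (f, z') :: k')} =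
              del x0 j {g | g ∈ eds ((e, z') :: k')} := by
            funext g
            by_cases hge : g = e
            · subst hge; rw [del_in (by simp), del_in (by simp)]
            by_cases hgf : g = f
            · subst hgf
              rw [del_in (by simp), del_of (by simp [hge, hfk]), hS.jf]
            by_cases hgk : g ∈ eds k'
            · rw [del_in (by simp [hgk]), del_in (by simp [hgk])]
            · rw [del_of (by simp [hgk, hge, hgf]), del_of (by simp [hgk, hge])]
              have := hS.rest g hge hgf
              first
              | exact this
              | exact this.symm
          rw [hdel]; exact hL' s hs

end LC

namespace LC

variable {V : Type u} {E : Type v}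

open Classical in
theorem noodd_del {i : E → Sym2 V} {T : Set V} {t b x0 : V} {P : List (E × V)} (ho : noodd i T)
    (ht : t ∈ T) (hb : b ∈ T) (hW : W i t P b) (hn : (eds P).Nodup) :
    noodd (del x0 i {g | g ∈ eds P}) T := by
  rintro X hX ⟨hfin, hodd⟩
  apply ho X hX
  have hpar := (parity X hW hn).2 (by simp [hX t ht, hX b hb])
  have heq : cut i X = cut (del x0 i {g | g ∈ eds P}) X ∪
      ((eds P).toFinset.filter (· ∈ cut i X) : Finset E) := by
    ext g
    rw [Set.mem_union, mem_cut_del]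
    simp
    tauto
  have hdisj : Disjoint (cut (del x0 i {g | g ∈ eds P}) X)
      ((((eds P).toFinset.filter (· ∈ cut i X) : Finset E)) : Set E) := by
    rw [Set.disjoint_left]
    intro g hg hg'
    rw [mem_cut_del] at hg
    simp at hg'
    exact hg.2 hg'.1
  rw [heq]
  refine ⟨hfin.union (Finset.finite_toSet _), ?_⟩
  rw [Set.ncard_union_eq hdisj hfin (Finset.finite_toSet _), Set.ncard_coe_finset]
  exact hodd.add_even hpar

def IsTT (i : E → Sym2 V) (T : Set V) (q : V × List (E × V)) : Prop :=
  q.1 ∈ T ∧ ∃ e b z l, Trail i T q.1 e q.2 b z l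

structure Fam (i : E → Sym2 V) (T : Set V) (Q : Set (V × List (E × V))) : Prop where
  tt : ∀ q ∈ Q, IsTT i T q
  disj : ∀ q ∈ Q, ∀ q' ∈ Q, ∀ g, g ∈ eds q.2 → g ∈ eds q'.2 → q = q'

def Solved (i : E → Sym2 V) (T : Set V) : Prop :=
  ∃ Q, Fam i T Q ∧ ∀ t ∈ T, ∀ e ∈ cut i {t}, ∃ q ∈ Q, e ∈ eds q.2

def edgesOf (Q : Set (V × List (E × V))) : Set E := {g | ∃ q ∈ Q, g ∈ eds q.2}

structure St (x0 : V) (i : E → Sym2 V) (T : Set V) (Q : Set (V × List (E × V))) : Prop where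
  fam : Fam i T Q
  no : noodd (del x0 i (edgesOf Q)) T
  li : ∀ s ∈ T, Linked (del x0 i (edgesOf Q)) T s

theorem W_not_del {x0 : V} {i : E → Sym2 V} {F : Set E} {x y : V} {l : List (E × V)}
    (h : W (del x0 i F) x l y) : (∀ g ∈ eds l, g ∉ F) ∧ W i x l y := by
  have h1 : ∀ g ∈ eds l, g ∉ F := by
    intro g hg hF
    obtain ⟨c, d, hd⟩ := (mem_eds_iff (x := x)).1 hg
    obtain ⟨h1, h2⟩ := dts_inc h hd
    rw [del_in hF, Sym2.eq_iff] at h1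
    rcases h1 with ⟨rfl, rfl⟩ | ⟨rfl, rfl⟩ <;> exact h2 rfl
  refine ⟨h1, W_congr (fun g hg => ?_) h⟩
  first
  | exact del_of (h1 g hg)
  | exact (del_of (h1 g hg)).symm

theorem Trail.of_del {x0 : V} {i : E → Sym2 V} {F : Set E} {T : Set V} {t b z : V} {e : E}
    {P l : List (E × V)} (h : Trail (del x0 i F) T t e P b z l) : Trail i T t e P b z l :=
  ⟨h.eq, (W_not_del h.walk).2, h.bmem, h.bne, h.nodup, h.src⟩

theorem St.step {x0 : V} {i : E → Sym2 V} {T : Set V} {Q : Set (V × List (E × V))}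
    (h : St x0 i T Q) (e : E) : ∃ Q', Q ⊆ Q' ∧ St x0 i T Q' ∧
      ((∃ t ∈ T, e ∈ cut i {t}) → e ∈ edgesOf Q') := by
  by_cases he : (∃ t ∈ T, e ∈ cut i {t}) ∧ e ∉ edgesOf Q
  swap
  · refine ⟨Q, subset_rfl, h, fun h1 => ?_⟩
    by_contra h2
    exact he ⟨h1, h2⟩
  obtain ⟨⟨t, ht, het⟩, heQ⟩ := he
  obtain ⟨q0, hq0⟩ := h.li t ht
  obtain ⟨q, hq, htr, -⟩ := trunc hq0 (fun h => h.2 rfl)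
  obtain ⟨P, b, z, l, hP, hL⟩ := KL (x0 := x0) ht _ _ q e h.no h.li hq htr
    (mem_cut_del.2 ⟨het, heQ⟩) le_rfl
  have heP : e ∈ eds P := by rw [hP.eq]; simp
  have hdel : del x0 i (edgesOf (insert (t, P) Q)) =
      del x0 (del x0 i (edgesOf Q)) {g | g ∈ eds P} := by
    funext g
    by_cases h1 : g ∈ eds P
    · rw [del_in, del_in (F := {g | g ∈ eds P}) h1]
      exact ⟨(t, P), by simp, h1⟩
    · rw [del_of (F := {g | g ∈ eds P}) h1]
      by_cases h2 : g ∈ edgesOf Q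
      · rw [del_in, del_in h2]
        obtain ⟨q, hq, hg⟩ := h2
        exact ⟨q, by simp [hq], hg⟩
      · rw [del_of, del_of h2]
        rintro ⟨q, hq, hg⟩
        rcases hq with rfl | hq
        · exact h1 hg
        · exact h2 ⟨q, hq, hg⟩
  have hPQ : ∀ g ∈ eds P, g ∉ edgesOf Q := (W_not_del hP.walk).1
  refine ⟨insert (t, P) Q, Set.subset_insert _ _, ⟨⟨?_, ?_⟩, ?_, ?_⟩, fun _ => ⟨(t, P), by simp, heP⟩⟩
  · intro q hq
    rcases hq with rfl | hq
    · exact ⟨ht, e, b, z, l, hP.of_del⟩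
    · exact h.fam.tt q hq
  · intro q hq q' hq' g hg hg'
    rcases hq with rfl | hq <;> rcases hq' with rfl | hq'
    · rfl
    · exact absurd ⟨q', hq', hg'⟩ (hPQ g hg)
    · exact absurd ⟨q, hq, hg⟩ (hPQ g hg')
    · exact h.fam.disj q hq q' hq' g hg hg'
  · rw [hdel]
    exact noodd_del h.no ht hP.bmem hP.walk hP.nodup
  · rw [hdel]; exact hL

theorem countable_case {i : E → Sym2 V} {T : Set V} (ho : noodd i T)
    (hl : ∀ s ∈ T, Linked i T s) {C : Set E} (hC : C.Countable)
    (hcut : ∀ t ∈ T, ∀ e ∈ cut i {t}, e ∈ C) : Solved i T := by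
  by_cases hne : C.Nonempty
  swap
  · refine ⟨∅, ⟨by simp, by simp⟩, fun t ht e he => ?_⟩
    exact absurd ⟨e, hcut t ht e he⟩ hne
  by_cases hV : Nonempty V
  swap
  · exact ⟨∅, ⟨by simp, by simp⟩, fun t _ => absurd ⟨t⟩ hV⟩
  obtain ⟨x0⟩ := hV
  obtain ⟨f, rfl⟩ := hC.exists_eq_range hne
  have h0 : St x0 i T ∅ := by
    have : del x0 i (edgesOf (∅ : Set (V × List (E × V)))) = i := by
      funext g; rw [del_of]; simp [edgesOf]
    exact ⟨⟨by simp, by simp⟩, by rw [this]; exact ho, by rw [this]; exact hl⟩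
  choose nxt hsub hSt hcov using fun (Q : {Q // St x0 i T Q}) (e : E) => Q.2.step e
  let S : ℕ → {Q // St x0 i T Q} := fun n =>
    Nat.rec ⟨∅, h0⟩ (fun n Q => ⟨nxt Q (f n), hSt Q (f n)⟩) n
  have hS : ∀ n, (S (n + 1)).1 = nxt (S n) (f n) := fun n => rfl
  have hmono : Monotone (fun n => (S n).1) := by
    apply monotone_nat_of_le_succ
    intro n
    rw [hS]; exact hsub _ _
  refine ⟨⋃ n, (S n).1, ⟨?_, ?_⟩, ?_⟩
  · intro q hq
    obtain ⟨n, hn⟩ := Set.mem_iUnion.1 hq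
    exact (S n).2.fam.tt q hn
  · intro q hq q' hq'
    obtain ⟨n, hn⟩ := Set.mem_iUnion.1 hq
    obtain ⟨m, hm⟩ := Set.mem_iUnion.1 hq'
    exact (S (max n m)).2.fam.disj q (hmono (le_max_left n m) hn) q' (hmono (le_max_right n m) hm)
  · intro t ht e he
    obtain ⟨n, rfl⟩ := hcut t ht e he
    have := hcov (S n) (f n) ⟨t, ht, he⟩
    rw [← hS] at this
    obtain ⟨q, hq, hg⟩ := this
    exact ⟨q, Set.mem_iUnion.2 ⟨n + 1, hq⟩, hg⟩

end LC

namespace LC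

variable {V : Type u} {E : Type v}

def NO (i : E → Sym2 V) (N : Set E) : Prop :=
  ∀ X : Set V, ¬ ((cut i X ∩ N).Finite ∧ Odd (cut i X ∩ N).ncard)

def Cn (i : E → Sym2 V) (S : Set E) : V → V → Prop :=
  Relation.ReflTransGen (fun a b => ∃ e ∈ S, i e = s(a, b))

def VS (i : E → Sym2 V) (S : Set E) : Set V := {x | ∃ e ∈ S, x ∈ i e}

theorem Cn.symm {i : E → Sym2 V} {S : Set E} {x y : V} (h : Cn i S x y) : Cn i S y x := by
  induction h with
  | refl => exact Relation.ReflTransGen.refl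
  | tail _ h ih =>
    obtain ⟨e, he, h⟩ := h
    exact Relation.ReflTransGen.head ⟨e, he, h.trans Sym2.eq_swap⟩ ih

theorem Cn.mono {i : E → Sym2 V} {S S' : Set E} (hS : S ⊆ S') {x y : V} (h : Cn i S x y) :
    Cn i S' x y :=
  Relation.ReflTransGen.mono (fun _ _ ⟨e, he, h⟩ => ⟨e, hS he, h⟩) _ _ h

theorem Cn.trans {i : E → Sym2 V} {S : Set E} {x y z : V} (h : Cn i S x y) (h' : Cn i S y z) :
    Cn i S x z := Relation.ReflTransGen.trans h h'

theorem Cn.single {i : E → Sym2 V} {S : Set E} {x y : V} {e : E} (he : e ∈ S) (h : i e = s(x, y)) :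
    Cn i S x y := Relation.ReflTransGen.single ⟨e, he, h⟩

theorem Cn.stay {i : E → Sym2 V} {S : Set E} {X : Set V} (hX : ∀ e ∈ S, e ∉ cut i X) {x y : V}
    (h : Cn i S x y) (hx : x ∈ X) : y ∈ X := by
  induction h with
  | refl => exact hx
  | tail _ h ih =>
    obtain ⟨e, he, h⟩ := h
    by_contra hy
    exact hX e he (mem_cut_of h ih hy)

theorem Cn.fin {i : E → Sym2 V} {S : Set E} {x y : V} (h : Cn i S x y) :
    ∃ F : Set E, F.Finite ∧ F ⊆ S ∧ Cn i F x y := by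
  induction h with
  | refl => exact ⟨∅, Set.finite_empty, Set.empty_subset _, Relation.ReflTransGen.refl⟩
  | tail _ h ih =>
    obtain ⟨e, he, h⟩ := h
    obtain ⟨F, hF, hFS, hc⟩ := ih
    refine ⟨insert e F, hF.insert _, Set.insert_subset he hFS, ?_⟩
    exact (hc.mono (Set.subset_insert _ _)).trans (Cn.single (Set.mem_insert _ _) h)

/-- a set that is a union of components has no cut -/
theorem not_cut_comp {i : E → Sym2 V} {S : Set E} {A : Set V} {e : E} (he : e ∈ S) :
    e ∉ cut i {z | ∃ x ∈ A, Cn i S x z} := by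
  rintro ⟨a, b, h, ⟨x, hx, hxa⟩, hb⟩
  exact hb ⟨x, hx, hxa.trans (Cn.single he h)⟩

theorem factI {i : E → Sym2 V} {N M : Set E} (hN : NO i N) (hM : M ⊆ N)
    (h : ∀ x ∈ VS i M, ∀ y ∈ VS i M, Cn i (N \ M) x y → ∀ F : Set E, F.Finite → F ⊆ N \ M →
      Cn i ((N \ M) \ F) x y) : NO i (N \ M) := by
  rintro X ⟨hfin, hodd⟩
  have hside : ∀ x ∈ VS i M, ∀ y ∈ VS i M, Cn i (N \ M) x y → x ∈ X → y ∈ X := by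
    intro x hx y hy hxy hxX
    refine (h x hx y hy hxy _ hfin Set.inter_subset_right).stay ?_ hxX
    intro e he hc
    exact he.2 ⟨hc, he.1⟩
  let A : Set V := {z | ∃ x ∈ VS i M ∩ X, Cn i (N \ M) x z}
  let X' : Set V := {z | ¬ (z ∈ X ↔ z ∈ A)}
  have hX'M : ∀ z ∈ VS i M, z ∉ X' := by
    intro z hz hzX
    apply hzX
    constructor
    · intro h1; exact ⟨z, ⟨hz, h1⟩, Relation.ReflTransGen.refl⟩
    · rintro ⟨x, hx, hxz⟩
      exact hside x hx.1 z hz hxz hx.2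
  have hcut : cut i X' ∩ N = cut i X ∩ (N \ M) := by
    ext e
    induction he : i e with
    | h a b =>
      by_cases heN : e ∈ N
      swap
      · simp [heN]
      by_cases heM : e ∈ M
      · have ha := hX'M a ⟨e, heM, by simp [he]⟩
        have hb := hX'M b ⟨e, heM, by simp [he]⟩
        simp only [Set.mem_inter_iff, Set.mem_sdiff, heM]
        rw [mem_cut_iff he]
        tauto
      · have hA : e ∉ cut i A := not_cut_comp (S := N \ M) ⟨heN, heM⟩
        simp only [Set.mem_inter_iff, Set.mem_sdiff, heM, heN]
        rw [mem_cut_iff he] at hA ⊢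
        rw [mem_cut_iff he]
        have h1 : ∀ z, z ∈ X' ↔ ¬ (z ∈ X ↔ z ∈ A) := fun z => Iff.rfl
        rw [h1, h1]
        by_cases c1 : a ∈ X <;> by_cases c2 : b ∈ X <;> by_cases c3 : a ∈ A <;>
          by_cases c4 : b ∈ A <;> simp only [c1, c2, c3, c4] at hA ⊢ <;> simp at hA ⊢
  exact hN X' (by rw [hcut]; exact ⟨hfin, hodd⟩)

theorem factII {i : E → Sym2 V} {N G : Set E} (hG : NO i G) (hN : N ⊆ G)
    (h : ∀ x ∈ VS i N, ∀ y ∈ VS i N, Cn i (G \ N) x y → ∀ F : Set E, F.Finite →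
      Cn i (N \ F) x y) : NO i N := by
  rintro X ⟨hfin, hodd⟩
  have hside : ∀ x ∈ VS i N, ∀ y ∈ VS i N, Cn i (G \ N) x y → x ∈ X → y ∈ X := by
    intro x hx y hy hxy hxX
    refine (h x hx y hy hxy _ hfin).stay ?_ hxX
    intro e he hc
    exact he.2 ⟨hc, he.1⟩
  let X' : Set V := {z | ∃ x ∈ VS i N ∩ X, Cn i (G \ N) x z}
  have hX' : ∀ z ∈ VS i N, (z ∈ X' ↔ z ∈ X) := by
    intro z hz
    constructor
    · rintro ⟨x, hx, hxz⟩
      exact hside x hx.1 z hz hxz hx.2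
    · intro h1; exact ⟨z, ⟨hz, h1⟩, Relation.ReflTransGen.refl⟩
  have hcut : cut i X' ∩ G = cut i X ∩ N := by
    ext e
    induction he : i e with
    | h a b =>
      by_cases heN : e ∈ N
      · have ha := hX' a ⟨e, heN, by simp [he]⟩
        have hb := hX' b ⟨e, heN, by simp [he]⟩
        simp only [Set.mem_inter_iff, heN, hN heN]
        rw [mem_cut_iff he, mem_cut_iff he, ha, hb]
      · simp only [Set.mem_inter_iff, heN, and_false, iff_false]
        rintro ⟨h1, h2⟩
        exact not_cut_comp (S := G \ N) ⟨h2, heN⟩ h1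
  exact hG X' (by rw [hcut]; exact ⟨hfin, hodd⟩)

theorem exA (i : E → Sym2 V) (G : Set E) (x y : V) : ∃ A ⊆ G, A.Countable ∧
    (¬ Cn i (G \ A) x y ∨ ∀ F : Set E, F.Finite → Cn i (A \ F) x y) := by
  by_cases hF : ∃ F : Set E, F.Finite ∧ ¬ Cn i (G \ F) x y
  · obtain ⟨F, hF, hs⟩ := hF
    refine ⟨G ∩ F, Set.inter_subset_left, (hF.inter_of_right G).countable, Or.inl ?_⟩
    rwa [Set.sdiff_self_inter]
  push Not at hF
  choose H hHf hHs hHc using fun F : {F : Set E // F.Finite} => (hF F.1 F.2).fin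
  let U : ℕ → {F : Set E // F.Finite} := fun n =>
    Nat.rec ⟨∅, Set.finite_empty⟩ (fun _ F => ⟨F.1 ∪ H F, F.2.union (hHf F)⟩) n
  have hU : ∀ n, (U (n + 1)).1 = (U n).1 ∪ H (U n) := fun n => rfl
  have hmono : Monotone (fun n => (U n).1) := by
    apply monotone_nat_of_le_succ
    intro n
    rw [hU]; exact Set.subset_union_left
  refine ⟨⋃ n, H (U n), ?_, Set.countable_iUnion fun n => (hHf _).countable, Or.inr ?_⟩
  · exact Set.iUnion_subset fun n => (hHs (U n)).trans Set.sdiff_subset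
  · intro F hFf
    by_cases hd : ∃ n, Disjoint (H (U n)) F
    · obtain ⟨n, hn⟩ := hd
      refine (hHc (U n)).mono ?_
      intro e he
      exact ⟨Set.mem_iUnion.2 ⟨n, he⟩, fun h => Set.disjoint_left.1 hn he h⟩
    · exfalso
      push Not at hd
      have : ∀ n, ∃ e, e ∈ H (U n) ∧ e ∈ F := by
        intro n
        have := hd n
        rwa [Set.not_disjoint_iff] at this
      choose f hf1 hf2 using this
      refine Set.infinite_of_injective_forall_mem (f := f) ?_ hf2 hFf
      have key : ∀ m n, m < n → f m ≠ f n := by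
        intro m n hmn he
        have h1 : f m ∈ (U n).1 := hmono (Nat.succ_le_of_lt hmn) (by
          show f m ∈ (U (m + 1)).1
          rw [hU]; exact Or.inr (hf1 m))
        exact (hHs (U n) (hf1 n)).2 (he ▸ h1)
      intro m n he
      rcases lt_trichotomy m n with h | h | h
      · exact absurd he (key m n h)
      · exact h
      · exact absurd he.symm (key n m h)

open Cardinal in
theorem exists_closed (μ : Cardinal.{v}) (hμ : ℵ₀ ≤ μ) (c : E → E → Set E)
    (hc : ∀ g h, #(c g h) ≤ μ) (K : Set E) (hK : #K ≤ μ) :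
    ∃ K' : Set E, K ⊆ K' ∧ #K' ≤ μ ∧ (∀ g ∈ K', ∀ h ∈ K', c g h ⊆ K') ∧
      ∀ N : Set E, K ⊆ N → (∀ g h, c g h ⊆ N) → K' ⊆ N := by
  let nx : Set E → Set E := fun L => L ∪ ⋃ p : L × L, c p.1.1 p.2.1
  have hnx : ∀ L : Set E, #L ≤ μ → #(nx L) ≤ μ := by
    intro L hL
    refine (mk_union_le _ _).trans (add_le_of_le hμ hL ?_)
    refine (mk_iUnion_le _).trans ?_
    have h1 : #(L × L) ≤ μ := by
      simp only [mk_prod, lift_id]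
      exact mul_le_of_le hμ hL hL
    refine mul_le_of_le hμ h1 ?_
    exact ciSup_le' fun p => hc _ _
  let U : ℕ → Set E := fun n => Nat.rec K (fun _ L => nx L) n
  have hU : ∀ n, U (n + 1) = nx (U n) := fun n => rfl
  have hmono : Monotone U := by
    apply monotone_nat_of_le_succ
    intro n
    rw [hU]; exact Set.subset_union_left
  refine ⟨⋃ n, U n, Set.subset_iUnion U 0, ?_, ?_, ?_⟩
  · have h1 : ∀ n, #↥(U n) ≤ μ := by
      intro n
      induction n with
      | zero => exact hK
      | succ n ih => exact hnx _ ih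
    have := mk_iUnion_le_lift (fun n => U n)
    simp only [lift_uzero] at this
    refine le_trans this ?_
    refine mul_le_of_le hμ (by simpa using hμ) ?_
    exact ciSup_le' fun n => h1 n
  · intro g hg h hh
    obtain ⟨n, hn⟩ := Set.mem_iUnion.1 hg
    obtain ⟨m, hm⟩ := Set.mem_iUnion.1 hh
    intro e he
    refine Set.mem_iUnion.2 ⟨max n m + 1, ?_⟩
    rw [hU]
    exact Or.inr (Set.mem_iUnion.2 ⟨(⟨g, hmono (le_max_left n m) hn⟩,
      ⟨h, hmono (le_max_right n m) hm⟩), he⟩)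
  · intro N hKN hcN
    refine Set.iUnion_subset fun n => ?_
    induction n with
    | zero => exact hKN
    | succ n ih =>
      rw [hU]
      exact Set.union_subset ih (Set.iUnion_subset fun p => hcN _ _)

end LC

namespace LC

variable {V : Type u} {E : Type v}

open Cardinal

theorem exIdx (S : Set E) : ∃ f : E → Ordinal.{v}, Set.InjOn f S ∧ ∀ e ∈ S, f e < (#S).ord := by
  classical
  have h : #S = #((#S).ord.ToType) := by rw [mk_ord_toType]
  obtain ⟨φ⟩ := Cardinal.eq.1 h
  refine ⟨fun e => if h : e ∈ S then (Ordinal.ToType.mk.symm (φ ⟨e, h⟩)).1 else 0, ?_, ?_⟩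
  · intro a ha b hb hab
    simp only [ha, hb, dif_pos] at hab
    have := φ.injective (Ordinal.ToType.mk.symm.injective (Subtype.ext hab))
    exact congrArg Subtype.val this
  · intro e he
    simp only [he, dif_pos]
    exact (Ordinal.ToType.mk.symm (φ ⟨e, he⟩)).2

theorem mk_idx_lt {f : E → Ordinal.{v}} {S : Set E} (hf : Set.InjOn f S) (o : Ordinal.{v}) :
    #{g : E | g ∈ S ∧ f g < o} ≤ o.card := by
  rw [← mk_toType]
  refine mk_le_of_injective
    (f := fun g : {g : E | g ∈ S ∧ f g < o} => Ordinal.ToType.mk ⟨f g.1, g.2.2⟩) ?_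
  intro a b hab
  have := Ordinal.ToType.mk.injective hab
  exact Subtype.ext (hf a.2.1 b.2.1 (congrArg Subtype.val this))

theorem mk_stage {Φ : Ordinal.{v} → Set E} {β : Ordinal.{v}}
    (h : ∀ γ < β, #(Φ γ) ≤ max γ.card ℵ₀) :
    #{e : E | ∃ γ, ∃ _ : γ < β, e ∈ Φ γ} ≤ max β.card ℵ₀ := by
  have h1 : {e : E | ∃ γ, ∃ _ : γ < β, e ∈ Φ γ} =
      ⋃ x : β.ToType, Φ (Ordinal.ToType.mk.symm x).1 := by
    ext e
    simp only [Set.mem_ofPred_eq, Set.mem_iUnion]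
    constructor
    · rintro ⟨γ, hγ, he⟩
      exact ⟨Ordinal.ToType.mk ⟨γ, hγ⟩, by simpa using he⟩
    · rintro ⟨x, hx⟩
      exact ⟨_, (Ordinal.ToType.mk.symm x).2, hx⟩
  rw [h1]
  refine (mk_iUnion_le _).trans ?_
  refine mul_le_of_le (le_max_right _ _) ?_ ?_
  · rw [mk_toType]; exact le_max_left _ _
  · refine ciSup_le' fun x => ?_
    have hx := (Ordinal.ToType.mk.symm x).2
    exact (h _ hx).trans (max_le_max (Ordinal.card_le_card (le_of_lt hx)) le_rfl)

theorem exSep (i : E → Sym2 V) (N : Set E) (x y : V) : ∃ S ⊆ N, ∀ F ⊆ N,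
    ¬ Cn i (N \ F) x y → ¬ Cn i (N \ S) x y ∧ #S ≤ #F := by
  by_cases h : ∃ F ⊆ N, ¬ Cn i (N \ F) x y
  · let A : Set Cardinal.{v} := {c | ∃ S ⊆ N, ¬ Cn i (N \ S) x y ∧ #S = c}
    have hA : A.Nonempty := by
      obtain ⟨F, hF, hF'⟩ := h
      exact ⟨_, F, hF, hF', rfl⟩
    obtain ⟨S, hS, hS', hc⟩ := csInf_mem hA
    refine ⟨S, hS, fun F hF hF' => ⟨hS', ?_⟩⟩
    rw [hc]
    exact csInf_le' ⟨F, hF, hF', rfl⟩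
  · refine ⟨∅, Set.empty_subset _, fun F hF hF' => absurd ⟨F, hF, hF'⟩ h⟩

def Part (i : E → Sym2 V) (N : Set E) : Prop :=
  ∃ P : Set (Set E), (∀ C ∈ P, C.Countable ∧ NO i C ∧ C ⊆ N) ∧
    (∀ C ∈ P, ∀ D ∈ P, ∀ e, e ∈ C → e ∈ D → C = D) ∧ ∀ e ∈ N, ∃ C ∈ P, e ∈ C

/-- one step of the construction -/
theorem exStep (i : E → Sym2 V) (N : Set E) (f : E → Ordinal.{v}) (hf : Set.InjOn f N)
    (S : V → V → Set E) (hS : ∀ x y, S x y ⊆ N) (idx : V → V → E → Ordinal.{v})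
    (hidx : ∀ x y, Set.InjOn (idx x y) (S x y)) (β : Ordinal.{v}) (M : Set E) :
    ∃ K : Set E, M ⊆ N → #M ≤ max β.card ℵ₀ → M ⊆ K ∧ K ⊆ N ∧ #K ≤ max β.card ℵ₀ ∧
      (∀ e ∈ N, f e = β → e ∈ K) ∧
      (∀ x ∈ VS i K, ∀ y ∈ VS i K, ∀ g ∈ S x y, idx x y g < max (Order.succ β) Ordinal.omega0 →
        g ∈ K) ∧
      (∀ x ∈ VS i K, ∀ y ∈ VS i K, ∃ A ⊆ K \ M, ¬ Cn i ((N \ M) \ A) x y ∨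
        ∀ F : Set E, F.Finite → Cn i (A \ F) x y) := by
  by_cases hM : M ⊆ N ∧ #M ≤ max β.card ℵ₀
  swap
  · exact ⟨∅, fun h1 h2 => absurd ⟨h1, h2⟩ hM⟩
  obtain ⟨hM, hMc⟩ := hM
  have hμ : ℵ₀ ≤ max β.card ℵ₀ := le_max_right _ _
  choose A hA hAc hAp using fun x y => exA i (N \ M) x y
  let cc : V → V → Set E := fun x y =>
    {g | g ∈ S x y ∧ idx x y g < max (Order.succ β) Ordinal.omega0} ∪ A x y
  have hcc : ∀ x y, #(cc x y) ≤ max β.card ℵ₀ := by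
    intro x y
    refine (mk_union_le _ _).trans (add_le_of_le hμ ?_ ?_)
    · refine (mk_idx_lt (hidx x y) _).trans ?_
      rcases le_total (Order.succ β) Ordinal.omega0 with h | h
      · rw [max_eq_right h]; simp
      · rw [max_eq_left h]
        simp only [Order.succ_eq_add_one, Ordinal.card_add, Ordinal.card_one]
        exact add_le_of_le hμ (le_max_left _ _) (one_le_aleph0.trans hμ)
    · exact (hAc x y).le_aleph0.trans hμ
  have hccN : ∀ x y, cc x y ⊆ N := by
    intro x y
    refine Set.union_subset (fun g hg => hS x y hg.1) ((hA x y).trans Set.sdiff_subset)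
  have hout : ∀ g : E, ∃ a b : V, i g = s(a, b) := by
    intro g
    induction h : i g with
    | h a b => exact ⟨a, b, rfl⟩
  choose a b hab using hout
  let c : E → E → Set E := fun g h =>
    (cc (a g) (a h) ∪ cc (a g) (b h)) ∪ (cc (b g) (a h) ∪ cc (b g) (b h))
  obtain ⟨K, hK1, hK2, hK3, hK4⟩ := exists_closed (max β.card ℵ₀) hμ c (by
      intro g h
      exact (mk_union_le _ _).trans (add_le_of_le hμ
        ((mk_union_le _ _).trans (add_le_of_le hμ (hcc _ _) (hcc _ _)))
        ((mk_union_le _ _).trans (add_le_of_le hμ (hcc _ _) (hcc _ _)))))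
    (M ∪ {e | e ∈ N ∧ f e = β}) (by
      refine (mk_union_le _ _).trans (add_le_of_le hμ hMc ?_)
      refine le_trans ?_ (one_le_aleph0.trans hμ)
      rw [mk_le_one_iff_set_subsingleton]
      intro e he e' he'
      exact hf he.1 he'.1 (he.2.trans he'.2.symm))
  have hclosed : ∀ x ∈ VS i K, ∀ y ∈ VS i K, cc x y ⊆ K := by
    rintro x ⟨g, hg, hx⟩ y ⟨h, hh, hy⟩ e he
    refine hK3 g hg h hh ?_
    rw [hab, Sym2.mem_iff] at hx hy
    simp only [c, Set.mem_union]
    rcases hx with rfl | rfl <;> rcases hy with rfl | rfl <;> simp [he]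
  refine ⟨K, fun _ _ => ⟨fun e he => hK1 (Or.inl he), ?_, hK2, fun e he h => hK1 (Or.inr ⟨he, h⟩),
    ?_, ?_⟩⟩
  · refine hK4 N (Set.union_subset hM fun e he => he.1) ?_
    intro g h
    exact Set.union_subset (Set.union_subset (hccN _ _) (hccN _ _))
      (Set.union_subset (hccN _ _) (hccN _ _))
  · intro x hx y hy g hg hlt
    exact hclosed x hx y hy (Or.inl ⟨hg, hlt⟩)
  · intro x hx y hy
    refine ⟨A x y, ?_, hAp x y⟩
    intro e he
    exact ⟨hclosed x hx y hy (Or.inr he), (hA x y he).2⟩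

theorem part (i : E → Sym2 V) (κ : Cardinal.{v}) : ∀ N : Set E, #N = κ → NO i N → Part i N := by
  induction κ using WellFoundedLT.induction with
  | ind κ IH =>
  intro N hNκ hNO
  by_cases hκ : κ ≤ ℵ₀
  · refine ⟨{N}, ?_, ?_, ?_⟩
    · rintro C rfl
      exact ⟨by rw [← le_aleph0_iff_set_countable, hNκ]; exact hκ, hNO, subset_rfl⟩
    · rintro C rfl D rfl e - -; rfl
    · intro e he; exact ⟨N, rfl, he⟩
  push Not at hκ
  obtain ⟨f, hf, hflt⟩ := exIdx N
  rw [hNκ] at hflt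
  choose S hS hSmin using exSep i N
  choose idx hidx hidxlt using fun x y => exIdx (S x y)
  choose step hstep using exStep i N f hf S hS idx hidx
  let Φ : Ordinal.{v} → Set E := Ordinal.lt_wf.fix
    (fun β ih => step β {e | ∃ γ, ∃ h : γ < β, e ∈ ih γ h})
  let M : Ordinal.{v} → Set E := fun β => {e | ∃ γ, ∃ _ : γ < β, e ∈ Φ γ}
  have hΦ : ∀ β, Φ β = step β (M β) := fun β => Ordinal.lt_wf.fix_eq _ β
  have hind : ∀ β, Φ β ⊆ N ∧ #(Φ β) ≤ max β.card ℵ₀ := by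
    intro β
    induction β using WellFoundedLT.induction with
    | ind β ih =>
      have h1 : M β ⊆ N := by
        rintro e ⟨γ, hγ, he⟩
        exact (ih γ hγ).1 he
      have h2 : #(M β) ≤ max β.card ℵ₀ := mk_stage fun γ hγ => (ih γ hγ).2
      obtain ⟨-, h3, h4, -⟩ := hstep β (M β) h1 h2
      rw [hΦ]; exact ⟨h3, h4⟩
  have hMN : ∀ β, M β ⊆ N := by
    rintro β e ⟨γ, hγ, he⟩
    exact (hind γ).1 he
  have hMc : ∀ β, #(M β) ≤ max β.card ℵ₀ := fun β => mk_stage fun γ hγ => (hind γ).2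
  have hprop := fun β => hstep β (M β) (hMN β) (hMc β)
  simp only [← hΦ] at hprop
  have hmono : ∀ γ δ, γ ≤ δ → Φ γ ⊆ Φ δ := by
    intro γ δ h
    rcases h.eq_or_lt with rfl | h
    · exact subset_rfl
    · intro e he
      exact (hprop δ).1 ⟨γ, h, he⟩
  have hVmono : ∀ γ δ, γ ≤ δ → VS i (Φ γ) ⊆ VS i (Φ δ) := by
    rintro γ δ h x ⟨e, he, hx⟩
    exact ⟨e, hmono γ δ h he, hx⟩
  have hVM : ∀ α x, x ∈ VS i (M α) → ∃ γ < α, x ∈ VS i (Φ γ) := by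
    rintro α x ⟨e, ⟨γ, hγ, he⟩, hx⟩
    exact ⟨γ, hγ, e, he, hx⟩
  have hNOM : ∀ α, NO i (N \ M α) := by
    intro α
    refine factI hNO (hMN α) ?_
    intro x hx y hy hxy F hF hFs
    by_contra hcon
    have h1 : ¬ Cn i (N \ (M α ∪ F)) x y := by rwa [← Set.sdiff_sdiff]
    obtain ⟨h2, h3⟩ := hSmin x y (M α ∪ F)
      (Set.union_subset (hMN α) (hFs.trans Set.sdiff_subset)) h1
    have h4 : #(S x y) ≤ max α.card ℵ₀ := by
      refine h3.trans ((mk_union_le _ _).trans (add_le_of_le (le_max_right _ _) (hMc α) ?_))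
      exact hF.countable.le_aleph0.trans (le_max_right _ _)
    have h5 : (#(S x y)).ord ≤ max α Ordinal.omega0 := by
      rw [ord_le]
      rcases le_total α Ordinal.omega0 with h | h
      · rw [max_eq_right h, Ordinal.card_omega0]
        refine h4.trans (max_le ?_ le_rfl)
        have := Ordinal.card_le_card h
        rwa [Ordinal.card_omega0] at this
      · rw [max_eq_left h]
        refine h4.trans (max_le le_rfl ?_)
        have := Ordinal.card_le_card h
        rwa [Ordinal.card_omega0] at this
    obtain ⟨γ1, hγ1, hx1⟩ := hVM α x hx
    obtain ⟨γ2, hγ2, hy2⟩ := hVM α y hy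
    apply h2
    refine hxy.mono (Set.sdiff_subset_sdiff_right ?_)
    intro g hg
    have h6 := (hidxlt x y g hg).trans_le h5
    have hγ : max γ1 γ2 < α := max_lt hγ1 hγ2
    rcases lt_max_iff.1 h6 with h7 | h7
    · refine ⟨max (max γ1 γ2) (idx x y g), max_lt hγ h7, ?_⟩
      refine (hprop _).2.2.2.2.1 x (hVmono _ _ ?_ hx1) y (hVmono _ _ ?_ hy2) g hg ?_
      · exact (le_max_left _ _).trans (le_max_left _ _)
      · exact (le_max_right _ _).trans (le_max_left _ _)
      · exact lt_max_of_lt_left (Order.lt_succ_of_le (le_max_right _ _))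
    · refine ⟨max γ1 γ2, hγ, ?_⟩
      refine (hprop _).2.2.2.2.1 x (hVmono _ _ (le_max_left _ _) hx1) y
        (hVmono _ _ (le_max_right _ _) hy2) g hg (lt_max_of_lt_right h7)
  have hpiece : ∀ α, NO i (Φ α \ M α) := by
    intro α
    refine factII (hNOM α) (Set.sdiff_subset_sdiff_left (hind α).1) ?_
    rintro x ⟨e, he, hx⟩ y ⟨e', he', hy⟩ hxy F hF
    obtain ⟨A, hA, hA'⟩ := (hprop α).2.2.2.2.2 x ⟨e, he.1, hx⟩ y ⟨e', he'.1, hy⟩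
    rcases hA' with h | h
    · exact absurd (hxy.mono (Set.sdiff_subset_sdiff_right hA)) h
    · exact (h F hF).mono (Set.sdiff_subset_sdiff_left hA)
  have hpart : ∀ α : Ordinal.{v}, α < κ.ord → Part i (Φ α \ M α) := by
    intro α hα
    refine IH _ ?_ _ rfl (hpiece α)
    refine (mk_le_mk_of_subset Set.sdiff_subset).trans_lt ((hind α).2.trans_lt ?_)
    exact max_lt (lt_ord.1 hα) hκ
  have hpart2 : ∀ α : Ordinal.{v}, ∃ P : Set (Set E), α < κ.ord →
      (∀ C ∈ P, C.Countable ∧ NO i C ∧ C ⊆ Φ α \ M α) ∧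
      (∀ C ∈ P, ∀ D ∈ P, ∀ e, e ∈ C → e ∈ D → C = D) ∧ ∀ e ∈ Φ α \ M α, ∃ C ∈ P, e ∈ C := by
    intro α
    by_cases h : α < κ.ord
    · obtain ⟨P, hP⟩ := hpart α h
      exact ⟨P, fun _ => hP⟩
    · exact ⟨∅, fun h' => absurd h' h⟩
  choose P hP using hpart2
  have huniq : ∀ α β e, e ∈ Φ α \ M α → e ∈ Φ β \ M β → α = β := by
    intro α β e h1 h2
    rcases lt_trichotomy α β with h | h | h
    · exact absurd ⟨α, h, h1.1⟩ h2.2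
    · exact h
    · exact absurd ⟨β, h, h2.1⟩ h1.2
  refine ⟨{C | ∃ α < κ.ord, C ∈ P α}, ?_, ?_, ?_⟩
  · rintro C ⟨α, hα, hC⟩
    obtain ⟨h1, h2, h3⟩ := (hP α hα).1 C hC
    exact ⟨h1, h2, h3.trans (Set.sdiff_subset.trans (hind α).1)⟩
  · rintro C ⟨α, hα, hC⟩ D ⟨β, hβ, hD⟩ e heC heD
    obtain rfl := huniq α β e (((hP α hα).1 C hC).2.2 heC) (((hP β hβ).1 D hD).2.2 heD)
    exact (hP α hα).2.1 C hC D hD e heC heD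
  · intro e he
    have h1 : e ∈ Φ (f e) := (hprop (f e)).2.2.2.1 e he rfl
    obtain ⟨α, hα, hmin⟩ := Ordinal.lt_wf.has_min {β | e ∈ Φ β} ⟨f e, h1⟩
    have hακ : α < κ.ord := (not_lt.1 (hmin _ h1)).trans_lt (hflt e he)
    have h2 : e ∈ Φ α \ M α := by
      refine ⟨hα, ?_⟩
      rintro ⟨γ, hγ, hg⟩
      exact hmin γ hg hγ
    obtain ⟨C, hC, heC⟩ := (hP α hακ).2.2 e h2
    exact ⟨C, ⟨α, hακ, hC⟩, heC⟩

end LC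

namespace LC

variable {V : Type u} {E : Type v}

theorem small_linked {j : E → Sym2 V} {T : Set V} {t : V} (ht : t ∈ T) (ho : noodd j T)
    (hs : (cut j {t}).Subsingleton) : Linked j T t := by
  by_cases hne : (cut j {t}).Nonempty
  swap
  · rw [Set.not_nonempty_iff_eq_empty] at hne
    exact ⟨fun _ => [], ⟨by simp [hne], by simp, by simp [hne]⟩, by simp [hne]⟩
  obtain ⟨a, ha⟩ := hne
  have hcut : cut j {t} = {a} := hs.eq_singleton_of_mem ha
  by_cases hb : ∃ b l, W j t l b ∧ b ∈ T ∧ b ≠ t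
  · obtain ⟨b, l, hW, hbT, hbt⟩ := hb
    obtain ⟨l', hW', -, hn⟩ := exists_path hW
    have hn' := eds_nodup hW' hn
    refine ⟨fun _ => l', ⟨?_, fun _ _ => hn', fun x hx y hy _ _ _ => hs hx hy⟩,
      fun x hx => ⟨b, ⟨hbT, hbt⟩, hW'⟩⟩
    intro x hx
    cases l' with
    | nil => exact absurd hW'.symm hbt
    | cons q l' =>
      obtain ⟨g, z⟩ := q
      have hg : g ∈ cut j {t} := mem_cut_of hW'.1 rfl (fun h => hW'.2.1 h.symm)
      exact ⟨z, l', by rw [hs hg hx]⟩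
  · push Not at hb
    exfalso
    let X : Set V := {z | (∃ l, W j t l z) ∧ z ≠ t}
    refine ho X ?_ ?_
    · rintro b hbT ⟨⟨l, hW⟩, hbt⟩
      exact hbt (hb b l hW hbT)
    · have : cut j X = {a} := by
        rw [← hcut]
        ext e
        constructor
        · rintro ⟨x, y, he, ⟨⟨l, hW⟩, hxt⟩, hy⟩
          have hxy : x ≠ y := by
            rintro rfl
            exact hy ⟨⟨l, hW⟩, hxt⟩
          have hyt : y = t := by
            by_contra h
            exact hy ⟨⟨l ++ [(e, y)], W_append.2 ⟨x, hW, he, hxy, rfl⟩⟩, h⟩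
          subst hyt
          exact mem_cut_of (he.trans Sym2.eq_swap) rfl hxt
        · intro he
          obtain ⟨y, hy, hyt⟩ := mem_cut_single.1 he
          exact mem_cut_of (hy.trans Sym2.eq_swap) ⟨⟨[(e, y)], hy, hyt.symm, rfl⟩, hyt⟩
            (fun h => h.2 rfl)
      rw [this]
      simp

theorem cut_map {i : E → Sym2 V} (φ : V → V) (X : Set V) :
    cut (fun e => (i e).map φ) X = cut i (φ ⁻¹' X) := by
  ext e
  induction he : i e with
  | h a b =>
    have h2 : (fun e => (i e).map φ) e = s(φ a, φ b) := by
      simp [he]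
    rw [mem_cut_iff he, mem_cut_iff (i := fun e => (i e).map φ) (g := e) h2]
    rfl

theorem cut_compl {i : E → Sym2 V} (X : Set V) : cut i Xᶜ = cut i X := by
  ext e
  induction he : i e with
  | h a b =>
    rw [mem_cut_iff he, mem_cut_iff he]
    simp only [Set.mem_compl_iff]
    tauto

theorem countable_reach {R : E → E → Prop} (h : ∀ e, {e' | R e e'}.Countable) (e : E) :
    {e' | Relation.ReflTransGen R e e'}.Countable := by
  let U : ℕ → Set E := fun n => Nat.rec {e} (fun _ L => ⋃ x ∈ L, {y | R x y}) n
  have hU : ∀ n, U (n + 1) = ⋃ x ∈ U n, {y | R x y} := fun n => rfl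
  have hc : ∀ n, (U n).Countable := by
    intro n
    induction n with
    | zero => exact Set.countable_singleton e
    | succ n ih =>
      rw [hU]
      exact ih.biUnion fun x _ => h x
  refine (Set.countable_iUnion hc).mono ?_
  intro e' he'
  change Relation.ReflTransGen R e e' at he'
  induction he' with
  | refl => exact Set.mem_iUnion.2 ⟨0, rfl⟩
  | tail _ hr ih =>
    obtain ⟨n, hn⟩ := Set.mem_iUnion.1 ih
    refine Set.mem_iUnion.2 ⟨n + 1, ?_⟩
    rw [hU]
    exact Set.mem_biUnion hn hr

open Classical in
theorem NO_union {i : E → Sym2 V} {P : Set (Set E)} (hP : ∀ C ∈ P, NO i C)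
    (hd : ∀ C ∈ P, ∀ D ∈ P, ∀ e, e ∈ C → e ∈ D → C = D) {K : Set E}
    (hK : ∀ e ∈ K, ∃ C ∈ P, e ∈ C ∧ C ⊆ K) : NO i K := by
  rintro X ⟨hfin, hodd⟩
  have hK' : ∀ e, ∃ C, e ∈ K → C ∈ P ∧ e ∈ C ∧ C ⊆ K := by
    intro e
    by_cases h : e ∈ K
    · obtain ⟨C, hC⟩ := hK e h; exact ⟨C, fun _ => hC⟩
    · exact ⟨∅, fun h' => absurd h' h⟩
  choose c hc using hK'
  rw [Set.ncard_eq_toFinset_card _ hfin] at hodd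
  rw [Finset.card_eq_sum_card_fiberwise (f := c) (t := hfin.toFinset.image c)
    (fun e he => Finset.mem_coe.2 (Finset.mem_image_of_mem c he))] at hodd
  refine (Nat.not_even_iff_odd.2 hodd) (Finset.even_sum _ ?_)
  intro C hC
  obtain ⟨e, he, rfl⟩ := Finset.mem_image.1 hC
  rw [Set.Finite.mem_toFinset] at he
  obtain ⟨h1, h2, h3⟩ := hc e he.2
  have heq : ((hfin.toFinset.filter (fun x => c x = c e) : Finset E) : Set E) =
      cut i X ∩ c e := by
    ext g
    simp only [Finset.coe_filter, Set.Finite.mem_toFinset, Set.mem_ofPred_eq]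
    constructor
    · rintro ⟨hg, hge⟩
      exact ⟨hg.1, hge ▸ (hc g hg.2).2.1⟩
    · rintro ⟨hg, hge⟩
      obtain ⟨k1, k2, k3⟩ := hc g (h3 hge)
      exact ⟨⟨hg, h3 hge⟩, hd _ k1 _ h1 g k2 hge⟩
  have := hP _ h1 X
  rw [← heq] at this
  rw [Set.ncard_coe_finset] at this
  by_contra hcon
  exact this ⟨Finset.finite_toSet _, Nat.not_even_iff_odd.1 hcon⟩

open Classical in
theorem solve {i : E → Sym2 V} {T : Set V} (ho : noodd i T) (hl : ∀ s ∈ T, Linked i T s)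
    (hB : {t | t ∈ T ∧ ¬ (cut i {t}).Subsingleton}.Countable) : Solved i T := by
  by_cases hT : T.Nonempty
  swap
  · exact ⟨∅, ⟨by simp, by simp⟩, fun t ht => absurd ⟨t, ht⟩ hT⟩
  obtain ⟨t0, ht0⟩ := hT
  let φ : V → V := fun v => if v ∈ T then t0 else v
  have hφT : ∀ v ∈ T, φ v = t0 := fun v hv => by simp [φ, hv]
  have hφN : ∀ v, v ∉ T → φ v = v := fun v hv => by simp [φ, hv]
  have hpre : ∀ X : Set V, (∀ t ∈ T, t ∉ X) → φ ⁻¹' X = X := by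
    intro X hX
    ext v
    rw [Set.mem_preimage]
    by_cases hv : v ∈ T
    · rw [hφT v hv]
      exact ⟨fun h => absurd h (hX _ ht0), fun h => absurd h (hX _ hv)⟩
    · rw [hφN v hv]
  have hNO : NO (fun e => (i e).map φ) Set.univ := by
    have key : ∀ X : Set V, t0 ∉ X → ¬ ((cut (fun e => (i e).map φ) X).Finite ∧
        Odd (cut (fun e => (i e).map φ) X).ncard) := by
      intro X hX
      rw [cut_map]
      refine ho _ ?_
      intro t ht h
      rw [Set.mem_preimage, hφT t ht] at h
      exact hX h
    intro X
    rw [Set.inter_univ]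
    by_cases h : t0 ∈ X
    · rw [← cut_compl]
      exact key Xᶜ (fun h' => h' h)
    · exact key X h
  obtain ⟨P, hP1, hP2, hP3⟩ := part (fun e => (i e).map φ) _ Set.univ rfl hNO
  have hl' : ∀ t, ∃ p, t ∈ T → Sys i t (T \ {t}) p := by
    intro t
    by_cases h : t ∈ T
    · obtain ⟨p, hp⟩ := hl t h; exact ⟨p, fun _ => hp⟩
    · exact ⟨fun _ => [], fun h' => absurd h' h⟩
  choose p hp using hl'
  let B : Set V := {t | t ∈ T ∧ ¬ (cut i {t}).Subsingleton}
  let R : E → E → Prop := fun e e' => (∃ C ∈ P, e ∈ C ∧ e' ∈ C) ∨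
    ∃ t ∈ B, ∃ a ∈ cut i {t}, e ∈ eds (p t a) ∧ e' ∈ eds (p t a)
  have hRs : ∀ e e', R e e' → R e' e := by
    rintro e e' (⟨C, hC, h1, h2⟩ | ⟨t, ht, a, ha, h1, h2⟩)
    · exact Or.inl ⟨C, hC, h2, h1⟩
    · exact Or.inr ⟨t, ht, a, ha, h2, h1⟩
  have hRc : ∀ e, {e' | R e e'}.Countable := by
    intro e
    have h1 : (⋃ C ∈ {C | C ∈ P ∧ e ∈ C}, C).Countable := by
      refine Set.Countable.biUnion (Set.Subsingleton.countable ?_) ?_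
      · intro C hC D hD
        exact hP2 C hC.1 D hD.1 e hC.2 hD.2
      · intro C hC; exact (hP1 C hC.1).1
    have h2 : (⋃ t ∈ B, ⋃ a ∈ {a | a ∈ cut i {t} ∧ e ∈ eds (p t a)},
        {e' | e' ∈ eds (p t a)}).Countable := by
      refine Set.Countable.biUnion hB ?_
      intro t ht
      refine Set.Countable.biUnion (Set.Subsingleton.countable ?_) ?_
      · intro a ha a' ha'
        exact (hp t ht.1).disj a ha.1 a' ha'.1 e ha.2 ha'.2
      · intro a _
        exact (List.finite_toSet _).countable
    refine (h1.union h2).mono ?_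
    rintro e' (⟨C, hC, h1, h2⟩ | ⟨t, ht, a, ha, h1, h2⟩)
    · left
      exact Set.mem_biUnion (show C ∈ {C | C ∈ P ∧ e ∈ C} from ⟨hC, h1⟩) h2
    · right
      refine Set.mem_biUnion ht ?_
      exact Set.mem_biUnion
        (show a ∈ {a | a ∈ cut i {t} ∧ e ∈ eds (p t a)} from ⟨ha, h1⟩) h2
  let K : E → Set E := fun e => {e' | Relation.ReflTransGen R e e'}
  have hKself : ∀ e, e ∈ K e := fun e => Relation.ReflTransGen.refl
  have hKc : ∀ e, (K e).Countable := countable_reach hRc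
  have hKR : ∀ e g g', g ∈ K e → R g g' → g' ∈ K e := fun e g g' h1 h2 =>
    Relation.ReflTransGen.tail h1 h2
  have hsymm : ∀ e g, Relation.ReflTransGen R e g → Relation.ReflTransGen R g e := by
    intro e g h
    induction h with
    | refl => exact Relation.ReflTransGen.refl
    | tail _ h ih => exact Relation.ReflTransGen.head (hRs _ _ h) ih
  have hKeq : ∀ e e' g, g ∈ K e → g ∈ K e' → K e = K e' := by
    have : ∀ e e' g, g ∈ K e → g ∈ K e' → K e ⊆ K e' := by
      intro e e' g h1 h2 h h3
      exact Relation.ReflTransGen.trans h2 (Relation.ReflTransGen.trans (hsymm _ _ h1) h3)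
    intro e e' g h1 h2
    exact Set.Subset.antisymm (this e e' g h1 h2) (this e' e g h2 h1)
  have hKNO : ∀ e, NO (fun e => (i e).map φ) (K e) := by
    intro e
    refine NO_union (fun C hC => (hP1 C hC).2.1) hP2 ?_
    intro g hg
    obtain ⟨C, hC, hgC⟩ := hP3 g trivial
    exact ⟨C, hC, hgC, fun g' hg' => hKR e g g' hg (Or.inl ⟨C, hC, hgC, hg'⟩)⟩
  have hcutd : ∀ (C : Set E) (X : Set V), cut (del t0 i Cᶜ) X = cut i X ∩ C := by
    intro C X
    ext g
    rw [mem_cut_del]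
    simp
  have hKno : ∀ e, noodd (del t0 i (K e)ᶜ) T := by
    intro e X hX
    have := hKNO e X
    rwa [cut_map, hpre X hX, ← hcutd] at this
  have hKli : ∀ e, ∀ t ∈ T, Linked (del t0 i (K e)ᶜ) T t := by
    intro e t ht
    by_cases htB : t ∈ B
    · refine linked_restrict (hp t ht).toPre ?_
      intro a ha haK
      refine ⟨(hp t ht).walk a ha, ?_⟩
      intro g hg hgK
      apply hgK
      have haK' : a ∈ K e := by
        by_contra h; exact haK h
      exact hKR e a g haK' (Or.inr ⟨t, htB, a, ha, (hp t ht).toPre.self_mem ha, hg⟩)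
    · refine small_linked ht (hKno e) ?_
      rw [hcutd]
      have : (cut i {t}).Subsingleton := by
        by_contra h; exact htB ⟨ht, h⟩
      exact this.anti Set.inter_subset_left
  have hsol : ∀ e, Solved (del t0 i (K e)ᶜ) T := by
    intro e
    refine countable_case (hKno e) (hKli e) (hKc e) ?_
    intro t _ g hg
    rw [hcutd] at hg
    exact hg.2
  have hsol' : ∀ C : Set E, ∃ Q, (∃ e, C = K e) → Fam (del t0 i Cᶜ) T Q ∧
      ∀ t ∈ T, ∀ e ∈ cut (del t0 i Cᶜ) {t}, ∃ q ∈ Q, e ∈ eds q.2 := by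
    intro C
    by_cases h : ∃ e, C = K e
    · obtain ⟨e, rfl⟩ := h
      obtain ⟨Q, hQ⟩ := hsol e
      exact ⟨Q, fun _ => hQ⟩
    · exact ⟨∅, fun h' => absurd h' h⟩
  choose Q hQ using hsol'
  have hin : ∀ C, (∃ e, C = K e) → ∀ q ∈ Q C, ∀ g ∈ eds q.2, g ∈ C := by
    intro C hC q hq g hg
    obtain ⟨-, e, b, z, l, hTr⟩ := (hQ C hC).1.tt q hq
    have := (W_not_del hTr.walk).1 g hg
    simpa using this
  refine ⟨{q | ∃ C, (∃ e, C = K e) ∧ q ∈ Q C}, ⟨?_, ?_⟩, ?_⟩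
  · rintro q ⟨C, hC, hq⟩
    obtain ⟨h1, e, b, z, l, hTr⟩ := (hQ C hC).1.tt q hq
    exact ⟨h1, e, b, z, l, hTr.of_del⟩
  · rintro q ⟨C, hC, hq⟩ q' ⟨C', hC', hq'⟩ g hg hg'
    have h1 := hin C hC q hq g hg
    have h2 := hin C' hC' q' hq' g hg'
    obtain ⟨e, rfl⟩ := hC
    obtain ⟨e', rfl⟩ := hC'
    have h3 := hKeq e e' g h1 h2
    rw [← h3] at hq'
    exact (hQ (K e) ⟨e, rfl⟩).1.disj q hq q' hq' g hg hg'
  · intro t ht e he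
    have he' : e ∈ cut (del t0 i (K e)ᶜ) {t} := by
      rw [hcutd]; exact ⟨he, hKself e⟩
    obtain ⟨q, hq, hg⟩ := (hQ (K e) ⟨e, rfl⟩).2 t ht e he'
    exact ⟨q, ⟨K e, ⟨e, rfl⟩, hq⟩, hg⟩

end LC

namespace LC

variable {V : Type u} {E : Type v}

theorem vts_rev_eq {i : E → Sym2 V} {x y : V} {l : List (E × V)} (h : W i x l y) :
    y :: vts (rev x l) = (x :: vts l).reverse := by
  induction l generalizing x with
  | nil => have h0 : x = y := h; subst h0; rfl
  | cons a l ih =>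
    have := ih h.2.2
    rw [rev_cons, vts_append, ← List.cons_append, this]
    simp

theorem path_head {i : E → Sym2 V} {t b : V} {l : List (E × V)} (h : W i t l b)
    (hn : (t :: vts l).Nodup) {e : E} (he : e ∈ eds l) (hc : e ∈ cut i {t}) :
    ∃ z l', l = (e, z) :: l' := by
  cases l with
  | nil => simp at he
  | cons a l =>
    rw [eds_cons, List.mem_cons] at he
    rcases he with rfl | he
    · exact ⟨a.2, l, rfl⟩
    · exfalso
      obtain ⟨c, d, hd⟩ := (mem_eds_iff (x := a.2)).1 he
      have h1 := (dts_inc h.2.2 hd).1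
      have hc' : c ∈ a.2 :: vts l := by
        rcases src_mem_of_dts hd with h | h <;> simp [h]
      have hd' : d ∈ a.2 :: vts l := List.mem_cons_of_mem _ (mem_vts_of_dts hd)
      rw [vts_cons, List.nodup_cons] at hn
      refine not_mem_cut_single h1 ?_ ?_ hc
      · rintro rfl; exact hn.1 hc'
      · rintro rfl; exact hn.1 hd'

theorem Trail.last_dart {i : E → Sym2 V} {T : Set V} {t b z : V} {e : E}
    {P l : List (E × V)} (h : Trail i T t e P b z l) {c d : V} {g : E}
    (hd : (c, g, d) ∈ dts t P) (hT : d ∈ T) : ∃ l1, P = l1 ++ [(g, d)] := by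
  obtain ⟨l1, l2, hP, h1, h2⟩ := (mem_dts h.walk).1 hd
  cases l2 with
  | nil => exact ⟨l1, hP⟩
  | cons a l2 =>
    exfalso
    have hW := h.walk
    have heq := h.eq
    rw [heq] at hW
    refine h.src d a.1 a.2 ?_ hT
    rw [heq] at hP
    cases l1 with
    | nil =>
      simp only [List.nil_append, List.cons.injEq, Prod.mk.injEq] at hP
      obtain ⟨⟨rfl, rfl⟩, rfl⟩ := hP
      simp
    | cons a' l1 =>
      simp only [List.cons_append, List.cons.injEq] at hP
      obtain ⟨rfl, rfl⟩ := hP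
      have := (W_append.1 hW.2.2)
      obtain ⟨y, hy1, hy2⟩ := this
      rw [dts_append hy1]
      simp

theorem Trail.path {i : E → Sym2 V} {T : Set V} {t b z : V} {e : E}
    {P l : List (E × V)} (h : Trail i T t e P b z l) (ht : t ∈ T) :
    ∃ l', W i t l' b ∧ (t :: vts l').Nodup ∧ (∀ g ∈ eds l', g ∈ eds P) ∧
      (∀ x ∈ t :: vts l', x ∈ T → x = t ∨ x = b) ∧
      ∀ s ∈ T, ∀ g ∈ cut i {s}, g ∈ eds P → g ∈ eds l' := by
  obtain ⟨l', h1, h2, h3⟩ := exists_path h.walk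
  refine ⟨l', h1, h3, ?_, ?_, ?_⟩
  · intro g hg
    obtain ⟨c, d, hd⟩ := (mem_eds_iff (x := t)).1 hg
    exact mem_eds_of_dts (h2 _ hd)
  · intro x hx hxT
    rw [List.mem_cons] at hx
    rcases hx with hx | hx
    · exact Or.inl hx
    · right
      obtain ⟨c, g, hd⟩ := vts_dts (x := t) hx
      obtain ⟨l1, hl1⟩ := h.last_dart (h2 _ hd) hxT
      have hW := h.walk
      rw [hl1] at hW
      obtain ⟨y, -, -, -, hy⟩ := W_append.1 hW
      exact hy
  · intro s hs g hg hgP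
    obtain ⟨c, d, hd⟩ := (mem_eds_iff (x := t)).1 hgP
    have hinc := (dts_inc h.walk hd).1
    by_cases hcT : c ∈ T
    · have hsrc : ∀ c g d, (c, g, d) ∈ dts t P → c ∈ T → g = e := by
        intro c g d hd hc
        rw [h.eq, dts_cons, List.mem_cons] at hd
        rcases hd with hd | hd
        · simp only [Prod.mk.injEq] at hd
          exact hd.2.1
        · exact absurd hc (h.src c g d hd)
      cases l' with
      | nil => exact absurd h1.symm h.bne
      | cons a l' =>
        have ha := hsrc t a.1 a.2 (h2 _ (by simp)) ht
        have hg := hsrc c g d hd hcT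
        rw [eds_cons, hg, ha]
        simp
    · have hds : d = s := by
        by_contra hne
        refine not_mem_cut_single hinc ?_ hne hg
        rintro rfl
        exact hcT hs
      obtain ⟨l1, hl1⟩ := h.last_dart hd (hds ▸ hs)
      have hb : b ∈ vts l' := by
        rcases end_mem h1 with hb | hb
        · exact absurd hb h.bne
        · exact hb
      obtain ⟨c', g', hd'⟩ := vts_dts (x := t) hb
      obtain ⟨l2, hl2⟩ := h.last_dart (h2 _ hd') h.bmem
      rw [hl2] at hl1
      have := (List.append_inj' hl1 rfl).2
      simp only [List.cons.injEq, Prod.mk.injEq] at this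
      rw [← this.1.1]
      exact mem_eds_of_dts hd'

section conv

variable {G : Multigraph V E}

theorem inc_ne {e : E} {x y : V} (h : G.inc e = s(x, y)) : x ≠ y := by
  rintro rfl
  apply G.not_isDiag e
  rw [h]
  simp

theorem walk_to_W {x y : V} (p : G.Walk x y) :
    ∃ l, W G.inc x l y ∧ p.support = x :: vts l ∧ p.edges = eds l := by
  induction p with
  | nil v => exact ⟨[], rfl, rfl, rfl⟩
  | @cons u v w e he p ih =>
    obtain ⟨l, h1, h2, h3⟩ := ih
    refine ⟨(e, v) :: l, ⟨he, inc_ne he, h1⟩, ?_, ?_⟩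
    · rw [Multigraph.Walk.support, h2]; rfl
    · rw [Multigraph.Walk.edges, h3]; rfl

theorem W_to_walk {x y : V} {l : List (E × V)} (h : W G.inc x l y) :
    ∃ p : G.Walk x y, p.support = x :: vts l ∧ p.edges = eds l := by
  induction l generalizing x with
  | nil =>
    have h0 : x = y := h
    subst h0
    exact ⟨.nil x, rfl, rfl⟩
  | cons a l ih =>
    obtain ⟨p, h1, h2⟩ := ih h.2.2
    refine ⟨.cons a.1 h.1 p, ?_, ?_⟩
    · rw [Multigraph.Walk.support, h1]; rfl
    · rw [Multigraph.Walk.edges, h2]; rfl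

theorem inci_eq (t : V) : G.inci t = cut G.inc {t} := by
  ext e
  rw [mem_cut_single]
  constructor
  · intro h
    obtain ⟨y, hy⟩ : ∃ y, G.inc e = s(t, y) := Sym2.mem_iff_exists.1 h
    exact ⟨y, hy, (inc_ne hy).symm⟩
  · rintro ⟨y, hy, -⟩
    change t ∈ G.inc e
    rw [hy]
    simp

theorem tpath_to_W {T : Set V} (p : G.TPath T) {t : V} (ht : t ∈ T) {e : E}
    (he : e ∈ cut G.inc {t}) (hep : e ∈ p.walk.edges) :
    ∃ l, (∃ b ∈ T \ {t}, W G.inc t l b) ∧ (t :: vts l).Nodup ∧ (∃ z l', l = (e, z) :: l') ∧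
      ∀ g ∈ eds l, g ∈ p.walk.edges := by
  obtain ⟨l, h1, h2, h3⟩ := walk_to_W p.walk
  have hn := p.support_nodup
  rw [h2] at hn
  rw [h3] at hep
  have htm : t ∈ p.first :: vts l := by
    obtain ⟨c, d, hd⟩ := (mem_eds_iff (x := p.first)).1 hep
    have hinc := (dts_inc h1 hd).1
    by_contra hcon
    refine not_mem_cut_single hinc ?_ ?_ he
    · rintro rfl
      apply hcon
      rcases src_mem_of_dts hd with h | h <;> simp [h]
    · rintro rfl
      exact hcon (List.mem_cons_of_mem _ (mem_vts_of_dts hd))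
  have hfl := p.internal t (h2 ▸ htm) ht
  rw [h3]
  rcases hfl with hfl | hfl
  · rw [← hfl] at h1 hn
    refine ⟨l, ⟨p.last, ⟨p.last_mem, ?_⟩, h1⟩, hn, path_head h1 hn hep he, fun _ h => h⟩
    intro h
    exact p.ne (hfl.symm.trans h.symm)
  · rw [← hfl] at h1
    have hn' : (t :: vts (rev p.first l)).Nodup := by
      rw [vts_rev_eq h1]
      exact List.nodup_reverse.2 hn
    have hep' : e ∈ eds (rev p.first l) := by
      rw [eds_rev]; exact List.mem_reverse.2 hep
    refine ⟨rev p.first l, ⟨p.first, ⟨p.first_mem, ?_⟩, W_rev h1⟩, hn',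
      path_head (W_rev h1) hn' hep' he, ?_⟩
    · intro h
      have h : p.first = t := h
      exact p.ne (h.trans hfl)
    · intro g hg
      rw [eds_rev] at hg
      exact List.mem_reverse.1 hg

theorem linked_of {T : Set V} {t : V} (ht : t ∈ T) {Pt : Set (G.TPath T)}
    (hd : G.TPathDisjoint Pt) (hc : ∀ e ∈ G.inci t, ∃ p ∈ Pt, e ∈ p.walk.edges) :
    Linked G.inc T t := by
  have key : ∀ e, ∃ l, e ∈ cut G.inc {t} → ∃ p ∈ Pt, e ∈ p.walk.edges ∧
      (∃ b ∈ T \ {t}, W G.inc t l b) ∧ (t :: vts l).Nodup ∧ (∃ z l', l = (e, z) :: l') ∧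
      ∀ g ∈ eds l, g ∈ p.walk.edges := by
    intro e
    by_cases he : e ∈ cut G.inc {t}
    · obtain ⟨p, hp, hep⟩ := hc e (by rw [inci_eq]; exact he)
      obtain ⟨l, hl⟩ := tpath_to_W p ht he hep
      exact ⟨l, fun _ => ⟨p, hp, hep, hl⟩⟩
    · exact ⟨[], fun h => absurd h he⟩
  choose f hf using key
  refine ⟨f, ⟨?_, ?_, ?_⟩, ?_⟩
  · intro a ha
    obtain ⟨p, hp, hep, hw, hn, hh, hs⟩ := hf a ha
    exact hh
  · intro a ha
    obtain ⟨p, hp, hep, ⟨b, hb, hw⟩, hn, hh, hs⟩ := hf a ha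
    exact eds_nodup hw hn
  · intro a ha a' ha' g hg hg'
    obtain ⟨p, hp, hep, ⟨b, hb, hw⟩, hn, hh, hs⟩ := hf a ha
    obtain ⟨p', hp', hep', ⟨b', hb', hw'⟩, hn', hh', hs'⟩ := hf a' ha'
    have hpp : p = p' := by
      by_contra hne
      exact hd p hp p' hp' hne g (hs g hg) (hs' g hg')
    subst hpp
    -- both edges lie at `t` on the same path
    obtain ⟨l, ⟨b1, -, hl1⟩, hl2, ⟨z, l', hl3⟩, hl4⟩ := tpath_to_W p ht ha hep
    obtain ⟨k, hk1, hk2, hk3⟩ := walk_to_W p.walk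
    have hnk := p.support_nodup
    rw [hk2] at hnk
    rw [hk3] at hep hep'
    by_cases hft : p.first = t
    · rw [hft] at hk1 hnk
      obtain ⟨z1, m1, h1⟩ := path_head hk1 hnk hep ha
      obtain ⟨z2, m2, h2⟩ := path_head hk1 hnk hep' ha'
      rw [h1] at h2
      simp only [List.cons.injEq, Prod.mk.injEq] at h2
      exact h2.1.1
    · have hlt : p.last = t := by
        have htm : t ∈ p.first :: vts k := by
          obtain ⟨c, d, hd⟩ := (mem_eds_iff (x := p.first)).1 hep
          have hinc := (dts_inc hk1 hd).1
          by_contra hcon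
          refine not_mem_cut_single hinc ?_ ?_ ha
          · rintro rfl
            apply hcon
            rcases src_mem_of_dts hd with h | h <;> simp [h]
          · rintro rfl
            exact hcon (List.mem_cons_of_mem _ (mem_vts_of_dts hd))
        rcases p.internal t (hk2 ▸ htm) ht with h | h
        · exact absurd h.symm hft
        · exact h.symm
      rw [hlt] at hk1
      have hnr : (t :: vts (rev p.first k)).Nodup := by
        rw [vts_rev_eq hk1]
        exact List.nodup_reverse.2 hnk
      have e1 : a ∈ eds (rev p.first k) := by
        rw [eds_rev]; exact List.mem_reverse.2 hep
      have e2 : a' ∈ eds (rev p.first k) := by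
        rw [eds_rev]; exact List.mem_reverse.2 hep'
      obtain ⟨z1, m1, h1⟩ := path_head (W_rev hk1) hnr e1 ha
      obtain ⟨z2, m2, h2⟩ := path_head (W_rev hk1) hnr e2 ha'
      rw [h1] at h2
      simp only [List.cons.injEq, Prod.mk.injEq] at h2
      exact h2.1.1
  · intro a ha
    obtain ⟨p, hp, hep, hw, hn, hh, hs⟩ := hf a ha
    exact hw

theorem TT_to_tpath {T : Set V} {q : V × List (E × V)} (h : IsTT G.inc T q) :
    ∃ p : G.TPath T, (∀ g ∈ p.walk.edges, g ∈ eds q.2) ∧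
      ∀ s ∈ T, ∀ g ∈ cut G.inc {s}, g ∈ eds q.2 → g ∈ p.walk.edges := by
  obtain ⟨ht, e, b, z, l, hTr⟩ := h
  obtain ⟨l', h1, h2, h3, h4, h5⟩ := hTr.path ht
  obtain ⟨w, hw1, hw2⟩ := W_to_walk h1
  refine ⟨⟨q.1, b, w, ht, hTr.bmem, hTr.bne.symm, by rw [hw1]; exact h2,
    by rw [hw1]; exact h4⟩, ?_, ?_⟩
  · intro g hg
    exact h3 g (hw2 ▸ hg)
  · intro s hs g hg hgq
    have := h5 s hs g hg hgq
    rw [← hw2] at this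
    exact this

end conv

end LC

/-- If `d(t) ≤ 1` for all but countably many `t ∈ T`, no `X ⊆ V ∖ T` has odd
finite cut, and for each `t ∈ T` some system of pairwise edge-disjoint
`T`-paths covers `δ(t)`, then a single system of pairwise edge-disjoint
`T`-paths covers `⋃_{t ∈ T} δ(t)`. -/
theorem lovasz_cherkassky_linked' {V : Type u} {E : Type v}
    (G : Multigraph V E) (T : Set V)
    (hcount : {t ∈ T | ¬ (G.inci t).Subsingleton}.Countable)
    (hEul : ∀ X : Set V, X ⊆ Tᶜ → ¬ ((G.cut X).Finite ∧ Odd (G.cut X).ncard))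
    (hlink : ∀ t ∈ T, ∃ Pt : Set (G.TPath T), G.TPathDisjoint Pt ∧
      ∀ e ∈ G.inci t, ∃ p ∈ Pt, e ∈ p.walk.edges) :
    ∃ P : Set (G.TPath T), G.TPathDisjoint P ∧
      ∀ t ∈ T, ∀ e ∈ G.inci t, ∃ p ∈ P, e ∈ p.walk.edges := by
  have ho : LC.noodd G.inc T := by
    intro X hX
    exact hEul X (fun x hx ht => hX x ht hx)
  have hl : ∀ s ∈ T, LC.Linked G.inc T s := by
    intro s hs
    obtain ⟨Pt, h1, h2⟩ := hlink s hs
    exact LC.linked_of hs h1 h2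
  have hB : {t | t ∈ T ∧ ¬ (LC.cut G.inc {t}).Subsingleton}.Countable := by
    refine hcount.mono ?_
    rintro t ⟨h1, h2⟩
    refine ⟨h1, ?_⟩
    rw [LC.inci_eq]
    exact h2
  obtain ⟨Q, hQ, hcov⟩ := LC.solve ho hl hB
  have key : ∀ q : Q, ∃ p : G.TPath T, (∀ g ∈ p.walk.edges, g ∈ LC.eds q.1.2) ∧
      ∀ s ∈ T, ∀ g ∈ LC.cut G.inc {s}, g ∈ LC.eds q.1.2 → g ∈ p.walk.edges :=
    fun q => LC.TT_to_tpath (hQ.tt q.1 q.2)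
  choose f hf1 hf2 using key
  refine ⟨Set.range f, ?_, ?_⟩
  · rintro _ ⟨q, rfl⟩ _ ⟨q', rfl⟩ hne e he he'
    apply hne
    have := hQ.disj q.1 q.2 q'.1 q'.2 e (hf1 q e he) (hf1 q' e he')
    rw [Subtype.ext this]
  · intro t ht e he
    rw [LC.inci_eq] at he
    obtain ⟨q, hq, heq⟩ := hcov t ht e he
    exact ⟨f ⟨q, hq⟩, ⟨⟨q, hq⟩, rfl⟩, hf2 ⟨q, hq⟩ t ht e he heq⟩
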